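/- Let G be a one-relator group with torsion and suppose x, y ∈ G and i, j are integers such that x⁻¹ yⁱ x = yʲ with yⁱ ≠ 1 and yʲ ≠ 1. Then the subgroup H = ⟨x, y⟩ of G is either cyclic or a free product of cyclic groups. -/

import Mathlib

/-- A group is *virtually-ℤ* if it has a finite-index subgroup isomorphic to `ℤ`. -/
def VirtuallyZ (G : Type*) [Group G] : Prop :=
  ∃ H : Subgroup G, H.FiniteIndex ∧ Nonempty (H ≃* Multiplicative ℤ)

/-- A subgroup `M` of `G` is *malnormal* if `g M g⁻¹ ∩ M ≠ 1` implies `g ∈ M`. -/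
def Subgroup.IsMalnormal {G : Type*} [Group G] (M : Subgroup G) : Prop :=
  ∀ g : G, (∃ x : G, x ≠ 1 ∧ x ∈ M ∧ g * x * g⁻¹ ∈ M) → g ∈ M

/-- A group is a *free product of cyclic groups* if it is isomorphic to the free product
(`Monoid.CoprodI`) of a family of cyclic groups; every cyclic group is isomorphic to
`Multiplicative (ZMod m)` for some `m : ℕ` (with `m = 0` giving the infinite cyclic group). -/
def IsFreeProductOfCyclics (G : Type*) [Group G] : Prop :=
  ∃ (ι : Type) (m : ι → ℕ),
    Nonempty (G ≃* Monoid.CoprodI fun i => Multiplicative (ZMod (m i)))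

/-- A group is *freely decomposable* if it is isomorphic to a free product of two
nontrivial groups. -/
def FreelyDecomposable (G : Type*) [Group G] : Prop :=
  ∃ (H K : Type) (gH : Group H) (gK : Group K),
    Nontrivial H ∧ Nontrivial K ∧
      Nonempty (G ≃* (letI := gH; letI := gK; Monoid.Coprod H K))

/-- A group is *freely indecomposable* if it is not isomorphic to a free product of two
nontrivial groups. -/
def FreelyIndecomposable (G : Type*) [Group G] : Prop := ¬ FreelyDecomposable G

/-!
Let `G = ⟨X; Rⁿ⟩`, let `p : G → ⟨X; R⟩` be the natural map and let `H = ⟨x, y⟩`. Every element of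
`H` conjugates `yᵏ` to `yˡ` for some non-zero exponents `k`, `l`.

Magnus' induction on the length of `R` shows simultaneously that `R` satisfies the Freiheitssatz,
that `⟨X; R⟩` is torsion-free, and that `ker p` embeds into a free product of copies of `ℤ/n`. An
element outside `ker p` permutes the factors of the latter, up to conjugacy, without finite orbits.

* If `x, y ∈ ker p`, then `H` lies in a free product of copies of `ℤ/n`. The factors are malnormal,
  so `H` is cyclic when `y` has finite order. Otherwise a free subgroup of finite index meets `H` in
  a cyclic group, so `H` is virtually cyclic, hence infinite cyclic or infinite dihedral.
* If `y ∈ ker p` and `x ∉ ker p`, then powers of `x` move `y` away from the factors it involves, so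
  a suitable power of the relation forces `yⁱ = 1`.
* If `y ∉ ker p`, the Fox derivatives modulo `n` map `G` to a restricted wreath product over
  `⟨X; R⟩`. Summing the derivatives of `y` along the cosets of `⟨p y⟩` gives a non-zero function of
  finite support which `p H` preserves up to commensurability, so `⟨p y⟩` has finite index in the
  torsion-free group `p H`, which is therefore cyclic. Then `i = j`, so `yⁱ` is central in `H`, and
  `p` is injective on `H` because no non-trivial element of `ker p` commutes with `yⁱ`.
-/

namespace OneRelator

universe u v w

open FreeGroup (of mk)
open Multiplicative (ofAdd toAdd)

/-! ### Words in free groups -/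

section Group

variable {G : Type*} [Group G]

/-- The normal closure `⟪r⟫` of a single relator `r`. -/
abbrev nclosure (r : G) : Subgroup G := Subgroup.normalClosure {r}

/-- The relator `r` is not a proper power; the exponent `k ≥ 1` forces `r ≠ 1`. -/
def NotProperPow (r : G) : Prop := ∀ (s : G) (k : ℕ), 1 ≤ k → r = s ^ k → k = 1

theorem mem_nclosure (r : G) : r ∈ nclosure r :=
  Subgroup.subset_normalClosure (Set.mem_singleton r)

theorem conj_mem_nclosure {r w : G} (h : w ∈ nclosure r) (g : G) : g * w * g⁻¹ ∈ nclosure r :=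
  Subgroup.normalClosure_normal.conj_mem _ h _

theorem nclosure_le {r : G} {N : Subgroup G} [N.Normal] (h : r ∈ N) : nclosure r ≤ N :=
  Subgroup.normalClosure_le_normal (by simpa using h)

theorem nclosure_conj (r g : G) : nclosure (g * r * g⁻¹) = nclosure r := by
  refine le_antisymm (nclosure_le (conj_mem_nclosure (mem_nclosure r) g)) (nclosure_le ?_)
  simpa [mul_assoc] using conj_mem_nclosure (mem_nclosure (g * r * g⁻¹)) g⁻¹

theorem nclosure_inv (r : G) : nclosure r⁻¹ = nclosure r :=
  le_antisymm (nclosure_le (inv_mem (mem_nclosure r)))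
    (nclosure_le (by simpa using inv_mem (mem_nclosure r⁻¹)))

theorem NotProperPow.conj {r : G} (h : NotProperPow r) (g : G) : NotProperPow (g * r * g⁻¹) := by
  intro s k hk e
  refine h (g⁻¹ * s * g) k hk ?_
  have hpow : (g⁻¹ * s * g) ^ k = g⁻¹ * s ^ k * g := by simpa using conj_pow (a := g⁻¹) (b := s)
  rw [hpow, ← e]
  group

theorem NotProperPow.ne_one {r : G} (h : NotProperPow r) : r ≠ 1 := by
  rintro rfl
  exact absurd (h 1 2 one_le_two (one_pow 2).symm) (by decide)

end Group

section Words

variable {A : Type*}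

/-- The reduced word of an element of a free group, with equality of letters decided classically. -/
noncomputable def redWord (w : FreeGroup A) : List (A × Bool) :=
  @FreeGroup.toWord A (Classical.decEq A) w

/-- The length of the reduced word, that is `FreeGroup.norm` with classical decidability. -/
noncomputable def wordLength (w : FreeGroup A) : ℕ := (redWord w).length

theorem mk_redWord (w : FreeGroup A) : mk (redWord w) = w :=
  @FreeGroup.mk_toWord A (Classical.decEq A) w

theorem redWord_eq_nil {w : FreeGroup A} : redWord w = [] ↔ w = 1 :=
  @FreeGroup.toWord_eq_nil_iff A (Classical.decEq A) w

theorem wordLength_mk_le {L : List (A × Bool)} : wordLength (mk L) ≤ L.length :=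
  @FreeGroup.norm_mk_le A L (Classical.decEq A)

theorem wordLength_mul_le (v w : FreeGroup A) :
    wordLength (v * w) ≤ wordLength v + wordLength w :=
  @FreeGroup.norm_mul_le A (Classical.decEq A) v w

@[simp] theorem wordLength_inv (w : FreeGroup A) : wordLength w⁻¹ = wordLength w :=
  @FreeGroup.norm_inv_eq A (Classical.decEq A) w

@[simp] theorem wordLength_of (a : A) : wordLength (of a) = 1 :=
  @FreeGroup.norm_of A (Classical.decEq A) a

@[simp] theorem wordLength_one : wordLength (1 : FreeGroup A) = 0 :=
  @FreeGroup.norm_one A (Classical.decEq A)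

open Classical in
/-- The endomorphism of a free group that sends the generator `y` to `1` and fixes the others. -/
noncomputable def kill (y : A) : FreeGroup A →* FreeGroup A :=
  FreeGroup.lift fun z => if z = y then 1 else of z

/-- The letter `y` does not occur in the reduced word of `w` (see `omits_iff`). -/
def Omits (w : FreeGroup A) (y : A) : Prop := kill y w = w

/-- The letter `y` occurs in every conjugate of `R`; for cyclically reduced `R` this means that it
occurs in `R`. -/
def Essential (R : FreeGroup A) (y : A) : Prop := ∀ g, ¬ Omits (g * R * g⁻¹) y

/-- `R` has minimal length in its conjugacy class, i.e. it is cyclically reduced. -/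
def IsConjMinimal (R : FreeGroup A) : Prop := ∀ g, wordLength R ≤ wordLength (g * R * g⁻¹)

@[simp] theorem kill_of_self (y : A) : kill y (of y) = 1 := by simp [kill]

theorem kill_of_ne {y z : A} (h : z ≠ y) : kill y (of z) = of z := by simp [kill, h]

open Classical in
theorem kill_mk (y : A) (L : List (A × Bool)) :
    kill y (mk L) = mk (L.filter fun l => l.1 ≠ y) := by
  induction L with
  | nil => exact map_one (kill y)
  | cons l L ih =>
    have hcons : (mk (l :: L) : FreeGroup A) = mk [l] * mk L := by simp [FreeGroup.mul_mk]
    rw [hcons, map_mul, ih, List.filter_cons]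
    rcases l with ⟨a, b⟩
    by_cases hb : a = y <;> cases b <;>
      simp [kill, hb, FreeGroup.of, FreeGroup.inv_mk, FreeGroup.invRev, FreeGroup.mul_mk]

open Classical in
theorem kill_eq_mk_filter (w : FreeGroup A) (y : A) :
    kill y w = mk ((redWord w).filter fun l => l.1 ≠ y) := by
  rw [← kill_mk, mk_redWord]

theorem omits_iff (w : FreeGroup A) (y : A) : Omits w y ↔ ∀ l ∈ redWord w, l.1 ≠ y := by
  classical
  constructor
  · intro h
    have hlen : (redWord w).length ≤ ((redWord w).filter fun l => l.1 ≠ y).length := by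
      calc (redWord w).length = wordLength (kill y w) := congrArg wordLength (Eq.symm h)
        _ ≤ _ := by rw [kill_eq_mk_filter]; exact wordLength_mk_le
    simpa using List.filter_eq_self.1 (List.filter_sublist.eq_of_length_le hlen)
  · intro h
    rw [Omits, kill_eq_mk_filter, List.filter_eq_self.2 (by simpa using h), mk_redWord]

theorem wordLength_kill_lt {w : FreeGroup A} {y : A} (h : ¬ Omits w y) :
    wordLength (kill y w) < wordLength w := by
  classical
  rw [kill_eq_mk_filter]
  refine wordLength_mk_le.trans_lt (lt_of_le_of_ne (List.length_filter_le _ _) fun hlen => h ?_)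
  rw [wordLength, List.length_filter_eq_length_iff] at hlen
  simpa [omits_iff] using hlen

theorem eq_one_of_omits {w : FreeGroup A} (h : ∀ y, Omits w y) : w = 1 := by
  by_contra hw
  obtain ⟨l, hl⟩ := List.exists_mem_of_ne_nil _ (mt redWord_eq_nil.1 hw)
  exact (omits_iff _ _).1 (h l.1) l hl rfl

theorem kill_inv_mul_mem (t : A) (w : FreeGroup A) : (kill t w)⁻¹ * w ∈ nclosure (of t) := by
  rw [← QuotientGroup.eq]
  have hcomp : (QuotientGroup.mk' (nclosure (of t))).comp (kill t) = QuotientGroup.mk' _ := by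
    ext a
    by_cases h : a = t
    · subst h
      simpa using ((QuotientGroup.eq_one_iff (of a)).2 (mem_nclosure (of a))).symm
    · simp [kill_of_ne h]
  exact DFunLike.congr_fun hcomp w

theorem kill_eq_one_iff (t : A) (w : FreeGroup A) : kill t w = 1 ↔ w ∈ nclosure (of t) := by
  refine ⟨fun h => by simpa [h] using kill_inv_mul_mem t w, fun h => ?_⟩
  exact nclosure_le (N := (kill t).ker) (by simp [MonoidHom.mem_ker]) h

theorem IsConjMinimal.essential {R : FreeGroup A} (h : IsConjMinimal R) {y : A}
    (hy : ¬ Omits R y) : Essential R y := by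
  intro g hg
  -- If `g R g⁻¹` omits `y`, killing `y` turns `R` into one of its conjugates, but shortens it.
  have hkill : kill y g * kill y R * (kill y g)⁻¹ = g * R * g⁻¹ := by
    simpa only [Omits, map_mul, map_inv] using hg
  have hconj : kill y R = ((kill y g)⁻¹ * g) * R * ((kill y g)⁻¹ * g)⁻¹ := by
    calc kill y R = (kill y g)⁻¹ * (kill y g * kill y R * (kill y g)⁻¹) * kill y g := by group
      _ = _ := by rw [hkill]; group
  exact absurd (wordLength_kill_lt hy) (not_lt.2 (hconj ▸ h ((kill y g)⁻¹ * g)))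

theorem exists_isConjMinimal (R : FreeGroup A) : ∃ g, IsConjMinimal (g * R * g⁻¹) := by
  let len (g : FreeGroup A) := wordLength (g * R * g⁻¹)
  refine ⟨Function.argmin len, fun k => ?_⟩
  have hk : k * (Function.argmin len * R * (Function.argmin len)⁻¹) * k⁻¹ =
      (k * Function.argmin len) * R * (k * Function.argmin len)⁻¹ := by group
  exact (Function.argmin_le len (k * Function.argmin len)).trans_eq (congrArg wordLength hk.symm)

theorem Essential.conj {R : FreeGroup A} {y : A} (h : Essential R y) (g : FreeGroup A) :
    Essential (g * R * g⁻¹) y :=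
  fun k hk => h (k * g) (by simpa [mul_assoc] using hk)

theorem Essential.inv {R : FreeGroup A} {y : A} (h : Essential R y) : Essential R⁻¹ y := by
  intro g hg
  have hinv : g * R⁻¹ * g⁻¹ = (g * R * g⁻¹)⁻¹ := by group
  rw [Omits, hinv, map_inv, inv_inj] at hg
  exact h g hg

end Words

/-! ### Wreath products and the properties proved by Magnus' induction -/

/-- The permutational wreath product of `P` with the symmetric group of `Ω`, encoded as the group of
permutations of `Ω × P` of the form `(q, π) ↦ (perm q, cocycle q * π)`. -/
@[ext] structure WreathProduct (Ω : Type u) (P : Type v) where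
  perm : Equiv.Perm Ω
  cocycle : Ω → P

namespace WreathProduct

variable {Ω : Type u} {P : Type v} [Group P]

instance : Mul (WreathProduct Ω P) :=
  ⟨fun a b => ⟨a.perm * b.perm, fun q => a.cocycle (b.perm q) * b.cocycle q⟩⟩

instance : One (WreathProduct Ω P) := ⟨⟨1, 1⟩⟩

instance : Inv (WreathProduct Ω P) := ⟨fun a => ⟨a.perm⁻¹, fun q => (a.cocycle (a.perm⁻¹ q))⁻¹⟩⟩

@[simp] theorem mul_perm (a b : WreathProduct Ω P) : (a * b).perm = a.perm * b.perm := rfl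

@[simp] theorem mul_cocycle (a b : WreathProduct Ω P) (q : Ω) :
    (a * b).cocycle q = a.cocycle (b.perm q) * b.cocycle q := rfl

@[simp] theorem one_perm : (1 : WreathProduct Ω P).perm = 1 := rfl

@[simp] theorem one_cocycle (q : Ω) : (1 : WreathProduct Ω P).cocycle q = 1 := rfl

@[simp] theorem inv_perm (a : WreathProduct Ω P) : a⁻¹.perm = a.perm⁻¹ := rfl

@[simp] theorem inv_cocycle (a : WreathProduct Ω P) (q : Ω) :
    a⁻¹.cocycle q = (a.cocycle (a.perm⁻¹ q))⁻¹ := rfl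

instance : Group (WreathProduct Ω P) := Group.ofLeftAxioms
  (by intro a b c; ext q <;> simp [mul_assoc])
  (by intro a; ext q <;> simp)
  (by intro a; ext q <;> simp)

/-- The projection of a wreath product onto its permutations. -/
def permHom : WreathProduct Ω P →* Equiv.Perm Ω where
  toFun := perm
  map_one' := rfl
  map_mul' _ _ := rfl

/-- The inclusion of the base group of a wreath product. -/
def base : (Ω → P) →* WreathProduct Ω P where
  toFun c := ⟨1, c⟩
  map_one' := rfl
  map_mul' _ _ := rfl

@[simp] theorem permHom_apply (a : WreathProduct Ω P) : permHom a = a.perm := rfl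

@[simp] theorem base_perm (c : Ω → P) : (base c).perm = 1 := rfl

@[simp] theorem base_cocycle (c : Ω → P) : (base c).cocycle = c := rfl

theorem equivariant {X Z : Type*} [Group Z] (f : FreeGroup X →* WreathProduct Ω P)
    (ρ : FreeGroup X →* Z) (ev : Ω → P → Z)
    (h : ∀ a q π, ev ((f (of a)).perm q) ((f (of a)).cocycle q * π) = ρ (of a) * ev q π)
    (w : FreeGroup X) : ∀ q π, ev ((f w).perm q) ((f w).cocycle q * π) = ρ w * ev q π := by
  induction w using FreeGroup.induction_on with
  | C1 => simp
  | of a => exact h a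
  | inv_of a _ =>
    intro q π
    have ha := h a ((f (of a))⁻¹.perm q) ((f (of a))⁻¹.cocycle q * π)
    rw [map_inv, map_inv, eq_inv_mul_iff_mul_eq, ← ha]
    simp
  | mul x y hx hy =>
    intro q π
    simp only [map_mul, mul_perm, mul_cocycle, Equiv.Perm.mul_apply, mul_assoc]
    rw [hx, hy]

section StabilizerHom

variable {G : Type*} [Group G] (f : G →* WreathProduct Ω P) (q₀ : Ω) (K : Subgroup G)
  (hK : ∀ k ∈ K, (f k).perm q₀ = q₀)

/-- On a subgroup fixing the point `q₀` the cocycle at `q₀` is a homomorphism. -/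
def stabilizerHom : K →* P where
  toFun k := (f k).cocycle q₀
  map_one' := by simp
  map_mul' a b := by simp [hK b b.2]

theorem stabilizerHom_conj (r h : G) (hc : h * r * h⁻¹ ∈ K) :
    stabilizerHom f q₀ K hK ⟨h * r * h⁻¹, hc⟩ =
      ((f h⁻¹).cocycle q₀)⁻¹ * (f r).cocycle ((f h⁻¹).perm q₀) * (f h⁻¹).cocycle q₀ := by
  have hfix : (f r).perm ((f h).perm.symm q₀) = (f h).perm.symm q₀ :=
    (f h).perm.injective (by simpa using hK _ hc)
  change (f (h * r * h⁻¹)).cocycle q₀ = _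
  simp [hfix]

end StabilizerHom

theorem stabilizerHom_eq_one_iff {X : Type*} {N K : Subgroup (FreeGroup X)} [N.Normal]
    (f : FreeGroup X →* WreathProduct Ω P) (q₀ : Ω) (hK : ∀ k ∈ K, (f k).perm q₀ = q₀)
    (hN : N ≤ f.ker) (ev : Ω → P → FreeGroup X ⧸ N)
    (hev : ∀ a q π, ev ((f (of a)).perm q) ((f (of a)).cocycle q * π) =
      QuotientGroup.mk' N (of a) * ev q π) (k : K) :
    stabilizerHom f q₀ K hK k = 1 ↔ (k : FreeGroup X) ∈ N := by
  constructor
  · intro hk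
    have hcoc : (f k).cocycle q₀ = 1 := hk
    have hk' := equivariant f (QuotientGroup.mk' N) ev hev k q₀ 1
    rw [hcoc, hK k k.2, one_mul, right_eq_mul] at hk'
    simpa using hk'
  · intro hk
    have hfk : f k = 1 := hN hk
    change (f k).cocycle q₀ = 1
    simp [hfk]

end WreathProduct

section ZModHom

variable {G : Type*} [Group G]

/-- The homomorphism from `ℤ/n` with value `g` at `1`, for an element `g` with `g ^ n = 1`. -/
noncomputable def zmodHom (n : ℕ) (g : G) (h : g ^ n = 1) : Multiplicative (ZMod n) →* G :=
  AddMonoidHom.toMultiplicativeLeft (ZMod.lift n ⟨zmultiplesHom (Additive G) (Additive.ofMul g), by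
    simp [← ofMul_pow, h]⟩)

@[simp] theorem zmodHom_ofAdd_one (n : ℕ) (g : G) (h : g ^ n = 1) :
    zmodHom n g h (ofAdd 1) = g := by
  have hlift := ZMod.lift_coe n ⟨zmultiplesHom (Additive G) (Additive.ofMul g), by
    simp [← ofMul_pow, h]⟩ 1
  simp only [Int.cast_one, zmultiplesHom_apply, one_smul] at hlift
  simp [zmodHom, hlift]

end ZModHom

/-- The free product of copies of the cyclic group `ℤ/n` indexed by `ι`. -/
abbrev CyclicCoprod (n : ℕ) (ι : Type*) := Monoid.CoprodI fun _ : ι => Multiplicative (ZMod n)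

/-- The inclusion of the factor with index `i` into a free product of copies of `ℤ/n`. -/
abbrev CyclicCoprod.of {n : ℕ} {ι : Type*} (i : ι) : Multiplicative (ZMod n) →* CyclicCoprod n ι :=
  Monoid.CoprodI.of (M := fun _ : ι => Multiplicative (ZMod n)) (i := i)

/-- The Freiheitssatz for the relator `R` at the letter `y`: the words without `y` embed into
`⟨X; R⟩`. -/
def FreiheitssatzAt {X : Type*} (R : FreeGroup X) (y : X) : Prop :=
  ∀ w, Omits w y → w ∈ nclosure R → w = 1

/-- The one-relator group `⟨X; R⟩` is torsion-free, stated in terms of words. -/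
def TorsionFreeQuotient {X : Type*} (R : FreeGroup X) : Prop :=
  ∀ (w : FreeGroup X) (k : ℕ), k ≠ 0 → w ^ k ∈ nclosure R → w ∈ nclosure R

/-- An embedding of the kernel `⟪R⟫ / ⟪Rⁿ⟫` of `⟨X; Rⁿ⟩ → ⟨X; R⟩` into a free product of copies of
`ℤ/n`, under which `h R h⁻¹` goes into a conjugate of the factor `idx h`, and conjugators from
different cosets of `⟪R⟫` have different factors. -/
structure TorsionSplitting {X : Type u} (n : ℕ) (R : FreeGroup X) where
  ι : Type u
  idx : FreeGroup X → ι
  toCoprod : nclosure R →* CyclicCoprod n ι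
  inv_mul_mem : ∀ h h', idx h = idx h' → h⁻¹ * h' ∈ nclosure R
  toCoprod_eq_one_iff : ∀ k, toCoprod k = 1 ↔ (k : FreeGroup X) ∈ nclosure (R ^ n)
  exists_conj : ∀ h, ∃ c a, toCoprod ⟨h * R * h⁻¹, conj_mem_nclosure (mem_nclosure R) h⟩ =
    c * CyclicCoprod.of (idx h) a * c⁻¹

/-- The properties of a relator that the Magnus induction carries along. -/
structure MagnusProperties {X : Type u} (n : ℕ) (R : FreeGroup X) : Prop where
  freiheitssatz : ∀ y, Essential R y → FreiheitssatzAt R y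
  torsionFree : TorsionFreeQuotient R
  splitting : Nonempty (TorsionSplitting n R)

section Conjugation

variable {X : Type u} {n : ℕ} {R : FreeGroup X}

theorem FreiheitssatzAt.of_conj {y : X} (g : FreeGroup X) (h : FreiheitssatzAt (g * R * g⁻¹) y) :
    FreiheitssatzAt R y :=
  fun w hw hmem => h w hw (by rwa [nclosure_conj])

theorem TorsionFreeQuotient.of_conj (g : FreeGroup X) (h : TorsionFreeQuotient (g * R * g⁻¹)) :
    TorsionFreeQuotient R := by
  rwa [TorsionFreeQuotient, nclosure_conj] at h

/-- A splitting for a conjugate of `R` is a splitting for `R`. -/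
noncomputable def TorsionSplitting.ofConj (g : FreeGroup X)
    (T : TorsionSplitting n (g * R * g⁻¹)) : TorsionSplitting n R where
  ι := T.ι
  idx h := T.idx (h * g⁻¹)
  toCoprod := T.toCoprod.comp (MulEquiv.subgroupCongr (nclosure_conj R g).symm).toMonoidHom
  inv_mul_mem h h' e := by
    have hmem := T.inv_mul_mem _ _ e
    rw [nclosure_conj] at hmem
    simpa [mul_assoc] using conj_mem_nclosure hmem g⁻¹
  toCoprod_eq_one_iff k := by
    rw [← nclosure_conj (R ^ n) g, ← conj_pow]
    exact T.toCoprod_eq_one_iff _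
  exists_conj h := by
    obtain ⟨c, a, hc⟩ := T.exists_conj (h * g⁻¹)
    refine ⟨c, a, ?_⟩
    rw [← hc, MonoidHom.comp_apply]
    congr 1
    ext
    simp [mul_assoc]

/-- A splitting for `R⁻¹` is a splitting for `R`. -/
noncomputable def TorsionSplitting.ofInv (T : TorsionSplitting n R⁻¹) : TorsionSplitting n R where
  ι := T.ι
  idx := T.idx
  toCoprod := T.toCoprod.comp (MulEquiv.subgroupCongr (nclosure_inv R).symm).toMonoidHom
  inv_mul_mem h h' e := nclosure_inv R ▸ T.inv_mul_mem h h' e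
  toCoprod_eq_one_iff k := by
    rw [← nclosure_inv (R ^ n), ← inv_pow]
    exact T.toCoprod_eq_one_iff _
  exists_conj h := by
    obtain ⟨c, a, hc⟩ := T.exists_conj h
    refine ⟨c, a⁻¹, ?_⟩
    rw [map_inv, ← inv_inj, conj_inv, inv_inv, ← hc, ← map_inv, MonoidHom.comp_apply]
    congr 1
    ext
    simp [mul_assoc]

theorem MagnusProperties.of_conj (g : FreeGroup X) (h : MagnusProperties n (g * R * g⁻¹)) :
    MagnusProperties n R where
  freiheitssatz y hy := (h.freiheitssatz y (hy.conj g)).of_conj g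
  torsionFree := h.torsionFree.of_conj g
  splitting := h.splitting.map (.ofConj g)

theorem MagnusProperties.of_inv (h : MagnusProperties n R⁻¹) : MagnusProperties n R where
  freiheitssatz y hy w hw hmem := h.freiheitssatz y hy.inv w hw (by rwa [nclosure_inv])
  torsionFree := by simpa only [TorsionFreeQuotient, nclosure_inv] using h.torsionFree
  splitting := h.splitting.map .ofInv

end Conjugation

section Generator

variable {X : Type u} (n : ℕ) (t : X)

open Classical in
/-- The retraction of a free group onto the free group on the generators other than `t`. -/
noncomputable def retraction : FreeGroup X →* FreeGroup {x : X // x ≠ t} :=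
  FreeGroup.lift fun x => if h : x = t then 1 else of ⟨x, h⟩

@[simp] theorem retraction_of_self : retraction t (of t) = 1 := by simp [retraction]

theorem retraction_of_ne {x : X} (h : x ≠ t) : retraction t (of x) = of ⟨x, h⟩ := by
  simp [retraction, h]

theorem map_retraction (w : FreeGroup X) :
    FreeGroup.map Subtype.val (retraction t w) = kill t w := by
  have hcomp : (FreeGroup.map Subtype.val).comp (retraction t) = kill t := by
    ext a
    by_cases h : a = t <;> simp [retraction, kill, h]
  exact DFunLike.congr_fun hcomp w

theorem retraction_eq_one_iff (w : FreeGroup X) : retraction t w = 1 ↔ w ∈ nclosure (of t) := by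
  rw [← kill_eq_one_iff, ← map_retraction,
    map_eq_one_iff _ (FreeGroup.map_injective Subtype.val_injective)]

open Classical in
/-- The action of `⟨X; tⁿ⟩` by which `tⁿ` is split: the generators other than `t` translate their
free group, and `t` acts over the point `q` as the generator of the factor with index `q`. -/
noncomputable def generatorAction :
    FreeGroup X →* WreathProduct (FreeGroup {x : X // x ≠ t})
      (CyclicCoprod n (FreeGroup {x : X // x ≠ t})) :=
  FreeGroup.lift fun x => if h : x = t then .base fun q => CyclicCoprod.of q (ofAdd 1)
    else ⟨Equiv.mulLeft (of ⟨x, h⟩), 1⟩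

theorem generatorAction_of_self :
    generatorAction n t (of t) = .base fun q => CyclicCoprod.of q (ofAdd 1) := by
  simp [generatorAction]

theorem generatorAction_of_ne {x : X} (h : x ≠ t) :
    generatorAction n t (of x) = ⟨Equiv.mulLeft (of ⟨x, h⟩), 1⟩ := by
  simp [generatorAction, h]

theorem generatorAction_perm (w : FreeGroup X) (q : FreeGroup {x : X // x ≠ t}) :
    (generatorAction n t w).perm q = retraction t w * q := by
  have hcomp : WreathProduct.permHom.comp (generatorAction n t) =
      (MulAction.toPermHom _ _).comp (retraction t) := by
    ext a q
    by_cases h : a = t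
    · subst h
      simp [generatorAction_of_self]
    · simp [generatorAction_of_ne, retraction_of_ne, h]
  exact congrArg (fun e => e q) (DFunLike.congr_fun hcomp w)

theorem generatorAction_pow : generatorAction n t (of t ^ n) = 1 := by
  rw [map_pow, generatorAction_of_self, ← map_pow, ← map_one WreathProduct.base]
  congr 1
  funext q
  have hn : (ofAdd 1 : Multiplicative (ZMod n)) ^ n = 1 := by simp [← ofAdd_nsmul]
  simp [← map_pow, hn]

variable {n} in
theorem mk_conj_pow_eq_one {R : FreeGroup X} (h : FreeGroup X ⧸ nclosure (R ^ n)) :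
    (h * QuotientGroup.mk' (nclosure (R ^ n)) R * h⁻¹) ^ n = 1 := by
  have hR : QuotientGroup.mk' (nclosure (R ^ n)) R ^ n = 1 := by
    rw [← map_pow, QuotientGroup.mk'_apply, QuotientGroup.eq_one_iff]
    exact mem_nclosure _
  rw [conj_pow, hR, mul_one, mul_inv_cancel]

theorem nonempty_torsionSplitting_of : Nonempty (TorsionSplitting n (of t)) := by
  let π := QuotientGroup.mk' (nclosure ((of t : FreeGroup X) ^ n))
  let s (q : FreeGroup {x : X // x ≠ t}) := π (FreeGroup.map Subtype.val q)
  let β : CyclicCoprod n (FreeGroup {x : X // x ≠ t}) →* FreeGroup X ⧸ nclosure (of t ^ n) :=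
    Monoid.CoprodI.lift fun q =>
      zmodHom n ((s q)⁻¹ * π (of t) * s q) <| by
        simpa only [inv_inv] using mk_conj_pow_eq_one (s q)⁻¹
  have hβ q : β (CyclicCoprod.of q (ofAdd 1)) = (s q)⁻¹ * π (of t) * s q :=
    (Monoid.CoprodI.lift_of _ _).trans (zmodHom_ofAdd_one ..)
  have hfix : ∀ k ∈ nclosure (of t), (generatorAction n t k).perm 1 = 1 := fun k hk => by
    rw [generatorAction_perm, (retraction_eq_one_iff t k).2 hk, one_mul]
  have hev (a : X) (q p) : s ((generatorAction n t (of a)).perm q) *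
      β ((generatorAction n t (of a)).cocycle q * p) = π (of a) * (s q * β p) := by
    by_cases h : a = t
    · subst h
      simp [generatorAction_of_self, hβ, mul_assoc]
    · simp [generatorAction_of_ne n t h, s, mul_assoc]
  exact ⟨{
    ι := FreeGroup {x : X // x ≠ t}
    idx h := (generatorAction n t h⁻¹).perm 1
    toCoprod := WreathProduct.stabilizerHom (generatorAction n t) 1 _ hfix
    inv_mul_mem h h' e := by
      rw [generatorAction_perm, generatorAction_perm, mul_one, mul_one, map_inv, map_inv,
        inv_inj] at e
      rw [← retraction_eq_one_iff, map_mul, map_inv, e, inv_mul_cancel]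
    toCoprod_eq_one_iff := WreathProduct.stabilizerHom_eq_one_iff _ _ _
      (nclosure_le (generatorAction_pow n t)) (fun q p => s q * β p) hev
    exists_conj h := by
      refine ⟨((generatorAction n t h⁻¹).cocycle 1)⁻¹, ofAdd 1, ?_⟩
      rw [WreathProduct.stabilizerHom_conj, generatorAction_of_self, inv_inv]
      rfl }⟩

theorem magnusProperties_of : MagnusProperties n (of t) where
  freiheitssatz y hy w hw hmem := by
    have hyt : y = t := by
      by_contra h
      exact hy 1 (by simp [Omits, kill, Ne.symm h])
    subst hyt
    rw [← kill_eq_one_iff] at hmem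
    exact hw.symm.trans hmem
  torsionFree w k hk hw := by
    rw [← kill_eq_one_iff] at hw ⊢
    exact (pow_eq_one_iff_left hk).1 (by rwa [map_pow] at hw)
  splitting := nonempty_torsionSplitting_of n t

end Generator

/-! ### Roots of a generator -/

section ExponentSum

variable {X : Type*}

open Classical in
/-- The exponent sum of the letter `t` in a word. -/
noncomputable def expSum (t : X) : FreeGroup X →* Multiplicative ℤ :=
  FreeGroup.lift fun z => if z = t then ofAdd 1 else 1

@[simp] theorem expSum_of_self (t : X) : expSum t (of t) = ofAdd 1 := by simp [expSum]

theorem expSum_of_ne {t z : X} (h : z ≠ t) : expSum t (of z) = 1 := by simp [expSum, h]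

theorem expSum_of_omits {t : X} {w : FreeGroup X} (h : Omits w t) : expSum t w = 1 := by
  have hcomp : (expSum t).comp (kill t) = 1 := by
    ext a
    by_cases h : a = t <;> simp [expSum, kill, h]
  exact (congrArg (expSum t) h).symm.trans (DFunLike.congr_fun hcomp w)

theorem essential_of_expSum_ne_one {t : X} {w : FreeGroup X} (h : expSum t w ≠ 1) :
    Essential w t := by
  intro g hg
  have hconj := expSum_of_omits hg
  rw [map_mul, map_mul, map_inv, mul_inv_cancel_comm] at hconj
  exact h hconj

theorem perm_eq_add_expSum {P : Type*} [Group P] {t : X} {f : FreeGroup X →* WreathProduct ℤ P}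
    (h : ∀ z k, (f (of z)).perm k = k + toAdd (expSum t (of z))) (w : FreeGroup X) :
    ∀ k, (f w).perm k = k + toAdd (expSum t w) := by
  induction w using FreeGroup.induction_on with
  | C1 => simp
  | of z => exact h z
  | inv_of z ih =>
    intro k
    rw [map_inv, WreathProduct.inv_perm, Equiv.Perm.inv_eq_iff_eq, ih, map_inv, toAdd_inv]
    ring
  | mul x y hx hy =>
    intro k
    rw [map_mul, WreathProduct.mul_perm, Equiv.Perm.mul_apply, hx, hy, map_mul, toAdd_mul]
    ring

end ExponentSum

section MagnusSubstitution

variable {X : Type u} (t b : X) (m : ℕ) (a : ℤ)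

open Classical in
/-- The substitution `t ↦ t ^ m`, `b ↦ b * t ^ (-a)`, with which Magnus makes the exponent sum of
`t` in a relator vanish. -/
noncomputable def magnusSubst : FreeGroup X →* FreeGroup X :=
  FreeGroup.lift fun z =>
    if z = t then of t ^ m else if z = b then of b * of t ^ (-a) else of z

theorem magnusSubst_of_self : magnusSubst t b m a (of t) = of t ^ m := by simp [magnusSubst]

theorem magnusSubst_of_ne {z : X} (h : z ≠ t) (h' : z ≠ b) : magnusSubst t b m a (of z) = of z := by
  simp [magnusSubst, h, h']

variable {t b}

theorem magnusSubst_of_right (htb : b ≠ t) : magnusSubst t b m a (of b) = of b * of t ^ (-a) := by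
  simp [magnusSubst, htb]

theorem expSum_right_magnusSubst (htb : b ≠ t) (w : FreeGroup X) :
    expSum b (magnusSubst t b m a w) = expSum b w := by
  have hcomp : (expSum b).comp (magnusSubst t b m a) = expSum b := by
    ext z
    by_cases h : z = t
    · simp [magnusSubst, expSum, h, htb.symm]
    · by_cases h2 : z = b <;> simp [magnusSubst, expSum, h, h2, htb, htb.symm]
  exact DFunLike.congr_fun hcomp w

theorem expSum_left_magnusSubst (htb : b ≠ t) (w : FreeGroup X) :
    expSum t (magnusSubst t b m a w) = expSum t w ^ m * expSum b w ^ (-a) := by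
  have hcomp : (expSum t).comp (magnusSubst t b m a) =
      (powMonoidHom m).comp (expSum t) * (zpowGroupHom (-a)).comp (expSum b) := by
    ext z
    by_cases h : z = t
    · simp [magnusSubst, expSum, h, htb.symm]
    · by_cases h2 : z = b <;> simp [magnusSubst, expSum, h, h2, htb]
  exact DFunLike.congr_fun hcomp w

section RootAction

variable {Q : Type*} [Group Q]

/-- The shift of `ℤ` with a telescoping cocycle, so that its `m`-th power has constant
cocycle `g`. -/
def rootShift (m : ℕ) (g : Q) : WreathProduct ℤ Q :=
  ⟨Equiv.addRight 1, fun k => g ^ ((k + 1) / (m : ℤ) - k / m)⟩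

theorem rootShift_zpow_perm (g : Q) (z : ℤ) : (rootShift m g ^ z).perm = Equiv.addRight z := by
  have hz : (rootShift m g ^ z).perm = (rootShift m g).perm ^ z :=
    map_zpow WreathProduct.permHom _ z
  rw [hz]
  ext k
  simp [rootShift]

theorem rootShift_pow_cocycle (g : Q) (j : ℕ) (k : ℤ) :
    (rootShift m g ^ j).cocycle k = g ^ ((k + j) / m - k / m) := by
  induction j with
  | zero => simp
  | succ j ih =>
    have hperm : (rootShift m g ^ j).perm k = k + j := by
      rw [← zpow_natCast, rootShift_zpow_perm, Equiv.coe_addRight]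
    rw [pow_succ', WreathProduct.mul_cocycle, ih, hperm, rootShift, ← zpow_add]
    push_cast
    ring_nf

variable (t b) in
open Classical in
/-- The action on `ℤ × Q` that shows `magnusSubst` to be injective, even relative to `ker ρ`: over
every point of `ℤ` the word `magnusSubst t b m a w` acts as `ρ w`. -/
noncomputable def rootAction (ρ : FreeGroup X →* Q) : FreeGroup X →* WreathProduct ℤ Q :=
  FreeGroup.lift fun z =>
    if z = t then rootShift m (ρ (of t))
    else if z = b then ⟨Equiv.addRight (-a), fun _ => ρ (of b)⟩ * rootShift m (ρ (of t)) ^ a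
    else .base fun _ => ρ (of z)

variable (ρ : FreeGroup X →* Q)

theorem rootAction_perm (w : FreeGroup X) (k : ℤ) :
    (rootAction t b m a ρ w).perm k = k + toAdd (expSum t w) := by
  refine perm_eq_add_expSum (fun z k => ?_) w k
  by_cases h : z = t
  · simp [rootAction, expSum, rootShift, h]
  · by_cases h2 : z = b
    · subst h2
      simp [rootAction, expSum, rootShift_zpow_perm, h]
    · simp [rootAction, expSum, h, h2]

variable {m}

theorem rootAction_magnusSubst_cocycle (htb : b ≠ t) (hm : m ≠ 0) (w : FreeGroup X) :
    ∀ k, (rootAction t b m a ρ (magnusSubst t b m a w)).cocycle k = ρ w := by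
  have hroot (k : ℤ) : (rootShift m (ρ (of t)) ^ m).cocycle k = ρ (of t) := by
    rw [rootShift_pow_cocycle, Int.add_ediv_of_dvd_right dvd_rfl, Int.ediv_self (mod_cast hm)]
    simp
  induction w using FreeGroup.induction_on with
  | C1 => simp
  | of z =>
    intro k
    by_cases h : z = t
    · subst h
      simp [magnusSubst, rootAction, hroot]
    · by_cases h2 : z = b
      · subst h2
        simp [magnusSubst, rootAction, h]
      · simp [magnusSubst, rootAction, h, h2]
  | inv_of z ih =>
    intro k
    rw [map_inv, map_inv, WreathProduct.inv_cocycle, ih, map_inv]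
  | mul x y hx hy =>
    intro k
    rw [map_mul, map_mul, WreathProduct.mul_cocycle, hx, hy, map_mul]

end RootAction

variable {m} (htb : b ≠ t) (hm : m ≠ 0)

include htb hm

theorem magnusSubst_injective : Function.Injective (magnusSubst t b m a) := by
  refine (injective_iff_map_eq_one _).2 fun w h => ?_
  have hw := rootAction_magnusSubst_cocycle a (MonoidHom.id (FreeGroup X)) htb hm w 0
  rw [h] at hw
  simpa using hw.symm

variable {S : FreeGroup X} (hS : expSum t (magnusSubst t b m a S) = 1)

include hS

theorem magnusSubst_mem_nclosure_iff (w : FreeGroup X) :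
    magnusSubst t b m a w ∈ nclosure (magnusSubst t b m a S) ↔ w ∈ nclosure S := by
  constructor
  · intro h
    let ρ := QuotientGroup.mk' (nclosure S)
    have hker : nclosure (magnusSubst t b m a S) ≤ (rootAction t b m a ρ).ker := by
      refine nclosure_le ?_
      ext k
      · simp [rootAction_perm, hS]
      · rw [rootAction_magnusSubst_cocycle a ρ htb hm]
        exact (QuotientGroup.eq_one_iff _).2 (mem_nclosure S)
    have hw := rootAction_magnusSubst_cocycle a ρ htb hm w 0
    rw [hker h] at hw
    exact (QuotientGroup.eq_one_iff _).1 hw.symm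
  · intro h
    exact nclosure_le (N := (nclosure (magnusSubst t b m a S)).comap (magnusSubst t b m a))
      (mem_nclosure _) h

theorem NotProperPow.map_magnusSubst (h : NotProperPow S) :
    NotProperPow (magnusSubst t b m a S) := by
  intro U k hk e
  have hU : expSum t U = 1 := by
    rw [e, map_pow] at hS
    exact (pow_eq_one_iff_left (by omega)).1 hS
  let χ := WreathProduct.stabilizerHom (rootAction t b m a (MonoidHom.id (FreeGroup X))) 0
    (expSum t).ker fun w hw => by rw [rootAction_perm, hw]; simp
  have hχ : S = χ (⟨U, hU⟩ ^ k) := by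
    have hcoc := rootAction_magnusSubst_cocycle a (MonoidHom.id (FreeGroup X)) htb hm S 0
    rw [e] at hcoc
    exact hcoc.symm
  exact h (χ ⟨U, hU⟩) k hk (hχ.trans (map_pow χ _ k))

theorem FreiheitssatzAt.of_magnusSubst (h : FreiheitssatzAt (magnusSubst t b m a S) b) :
    FreiheitssatzAt S b := by
  intro w hw hmem
  have hcomp : ((kill b).comp (magnusSubst t b m a)).comp (kill b) =
      (magnusSubst t b m a).comp (kill b) := by
    ext z
    by_cases hz : z = b
    · simp [kill, hz]
    · by_cases hz2 : z = t
      · simp [kill, magnusSubst, hz2, htb.symm]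
      · simp [kill, magnusSubst, hz2, hz]
  have homits : Omits (magnusSubst t b m a w) b := by
    have hkill := DFunLike.congr_fun hcomp w
    simp only [MonoidHom.comp_apply] at hkill
    rwa [show kill b w = w from hw] at hkill
  refine magnusSubst_injective a htb hm ?_
  rw [h _ homits ((magnusSubst_mem_nclosure_iff a htb hm hS w).2 hmem), map_one]

theorem TorsionFreeQuotient.of_magnusSubst (h : TorsionFreeQuotient (magnusSubst t b m a S)) :
    TorsionFreeQuotient S := by
  intro w k hk hw
  rw [← magnusSubst_mem_nclosure_iff a htb hm hS] at hw ⊢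
  rw [map_pow] at hw
  exact h _ _ hk hw

theorem nonempty_torsionSplitting_of_magnusSubst {n : ℕ}
    (T : TorsionSplitting n (magnusSubst t b m a S)) : Nonempty (TorsionSplitting n S) := by
  have hSn : expSum t (magnusSubst t b m a (S ^ n)) = 1 := by rw [map_pow, map_pow, hS, one_pow]
  let r : nclosure S →* nclosure (magnusSubst t b m a S) :=
    ((magnusSubst t b m a).comp (nclosure S).subtype).codRestrict _ fun x =>
      (magnusSubst_mem_nclosure_iff a htb hm hS x).2 x.2
  exact ⟨{
    ι := T.ι
    idx h := T.idx (magnusSubst t b m a h)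
    toCoprod := T.toCoprod.comp r
    inv_mul_mem h h' e := by
      rw [← magnusSubst_mem_nclosure_iff a htb hm hS, map_mul, map_inv]
      exact T.inv_mul_mem _ _ e
    toCoprod_eq_one_iff k := by
      rw [MonoidHom.comp_apply, T.toCoprod_eq_one_iff,
        ← magnusSubst_mem_nclosure_iff a htb hm hSn, map_pow]
      rfl
    exists_conj h := by
      obtain ⟨c, d, hc⟩ := T.exists_conj (magnusSubst t b m a h)
      refine ⟨c, d, ?_⟩
      rw [← hc, MonoidHom.comp_apply]
      congr 1
      ext
      change magnusSubst t b m a (h * S * h⁻¹) = _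
      rw [map_mul, map_mul, map_inv] }⟩

end MagnusSubstitution

/-! ### Rewriting by levels -/

section Letters

variable {A B : Type*}

theorem finite_not_omits (w : FreeGroup A) : {a | ¬ Omits w a}.Finite := by
  refine ((redWord w).map Prod.fst).finite_toSet.subset fun a ha => ?_
  rw [Set.mem_ofPred_eq, omits_iff] at ha
  push Not at ha
  obtain ⟨l, hl, rfl⟩ := ha
  exact List.mem_map_of_mem hl

theorem not_omits_of_mem {w : FreeGroup A} {l : A × Bool} (h : l ∈ redWord w) : ¬ Omits w l.1 :=
  fun hw => (omits_iff w _).1 hw l h rfl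

theorem map_eq_of_not_omits {G : Type*} [Group G] {f g : FreeGroup A →* G} {w : FreeGroup A}
    (h : ∀ a, ¬ Omits w a → f (of a) = g (of a)) : f w = g w := by
  have hmk (φ : FreeGroup A →* G) :
      φ w = ((redWord w).map fun l => cond l.2 (φ (of l.1)) (φ (of l.1))⁻¹).prod := by
    have hlift : FreeGroup.lift (fun a => φ (of a)) = φ := by ext; simp
    rw [← FreeGroup.lift_mk (f := fun a => φ (of a)), mk_redWord, hlift]
  rw [hmk f, hmk g]
  congr 1
  exact List.map_congr_left fun l hl => by rw [h l.1 (not_omits_of_mem hl)]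

theorem wordLength_map_le (e : A → B) (w : FreeGroup A) :
    wordLength (FreeGroup.map e w) ≤ wordLength w := by
  nth_rw 1 [← mk_redWord w]
  rw [FreeGroup.map.mk]
  exact wordLength_mk_le.trans_eq (List.length_map _)

theorem exists_map_eq {e : A → B} {w : FreeGroup B} (h : ∀ b, ¬ Omits w b → b ∈ Set.range e) :
    ∃ v, FreeGroup.map e v = w ∧ wordLength v ≤ wordLength w := by
  have hrange : redWord w ∈ Set.range (List.map (Prod.map e (id : Bool → Bool))) := by
    rw [Set.range_list_map]
    intro l hl
    obtain ⟨a, ha⟩ := h _ (not_omits_of_mem hl)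
    exact ⟨(a, l.2), by simp [ha]⟩
  obtain ⟨L, hL⟩ := hrange
  refine ⟨mk L, ?_, wordLength_mk_le.trans_eq ?_⟩
  · rw [FreeGroup.map.mk, ← mk_redWord w, ← hL]
    rfl
  · rw [wordLength, ← hL, List.length_map]

theorem omits_map_iff {e : A → B} (he : Function.Injective e) (a : A) (w : FreeGroup A) :
    Omits (FreeGroup.map e w) (e a) ↔ Omits w a := by
  have hcomp : (kill (e a)).comp (FreeGroup.map e) = (FreeGroup.map e).comp (kill a) := by
    ext z
    by_cases h : z = a <;> simp [kill, h, he.eq_iff]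
  have hkill : kill (e a) (FreeGroup.map e w) = FreeGroup.map e (kill a w) :=
    DFunLike.congr_fun hcomp w
  rw [Omits, Omits, hkill, (FreeGroup.map_injective he).eq_iff]

theorem omits_map_of_notMem_range {e : A → B} {b : B} (hb : b ∉ Set.range e) (w : FreeGroup A) :
    Omits (FreeGroup.map e w) b := by
  have hcomp : (kill b).comp (FreeGroup.map e) = FreeGroup.map e := by
    ext a
    simp [kill_of_ne fun h => hb ⟨a, h⟩]
  exact DFunLike.congr_fun hcomp w

theorem IsConjMinimal.of_map {e : A → B} {w : FreeGroup A}
    (h : IsConjMinimal (FreeGroup.map e w)) (hw : wordLength w ≤ wordLength (FreeGroup.map e w)) :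
    IsConjMinimal w := fun g => by
  calc wordLength w ≤ wordLength (FreeGroup.map e w) := hw
    _ ≤ wordLength (FreeGroup.map e (g * w * g⁻¹)) := by
      simpa only [map_mul, map_inv] using h (FreeGroup.map e g)
    _ ≤ wordLength (g * w * g⁻¹) := wordLength_map_le e _

theorem NotProperPow.of_map {G H : Type*} [Group G] [Group H] (f : G →* H) {r : G}
    (h : NotProperPow (f r)) : NotProperPow r :=
  fun s k hk e => h (f s) k hk (by rw [e, map_pow])

/-- The number of letters other than `t` in the reduced word of `w`. -/
noncomputable def letterCount (t : A) (w : FreeGroup A) : ℕ :=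
  open Classical in (redWord w).countP fun l => l.1 ≠ t

theorem letterCount_lt {t : A} {w : FreeGroup A} (h : ¬ Omits w t) :
    letterCount t w < wordLength w := by
  classical
  refine lt_of_le_of_ne List.countP_le_length fun hcount => h ((omits_iff w t).2 ?_)
  simpa using List.countP_eq_length.1 hcount

open Classical in
theorem wordLength_cocycle_le {Ω : Type*} {t : A} (f : FreeGroup A →* WreathProduct Ω (FreeGroup B))
    (hf : ∀ a q, wordLength ((f (of a)).cocycle q) ≤ if a ≠ t then 1 else 0)
    (w : FreeGroup A) (q : Ω) : wordLength ((f w).cocycle q) ≤ letterCount t w := by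
  have hletter (l : A × Bool) (q) :
      wordLength ((f (mk [l])).cocycle q) ≤ if l.1 ≠ t then 1 else 0 := by
    rcases l with ⟨a, _ | _⟩
    · have hinv : (mk [(a, false)] : FreeGroup A) = (of a)⁻¹ := rfl
      rw [hinv, map_inv, WreathProduct.inv_cocycle, wordLength_inv]
      exact hf a _
    · exact hf a q
  have hmk (L : List (A × Bool)) : ∀ q, wordLength ((f (mk L)).cocycle q) ≤
      L.countP fun l => l.1 ≠ t := by
    induction L with
    | nil => intro q; simp [← FreeGroup.one_eq_mk]
    | cons l L ih =>
      intro q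
      have hcons : (mk (l :: L) : FreeGroup A) = mk [l] * mk L := by simp [FreeGroup.mul_mk]
      rw [hcons, map_mul, WreathProduct.mul_cocycle, List.countP_cons, add_comm]
      exact (wordLength_mul_le _ _).trans
        (add_le_add (by simpa using hletter l _) (ih q))
  exact (congrArg (fun v => wordLength ((f v).cocycle q)) (mk_redWord w)).symm.trans_le
    (hmk (redWord w) q)

end Letters

section Rewriting

variable {X : Type u}

/-- The Reidemeister–Schreier generators of the kernel of `expSum t`: the pair `(c, k)` stands for
`t ^ k * c * t ^ (-k)`. -/
abbrev LevelLetter (t : X) : Type u := {c : X // c ≠ t} × ℤ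

open Classical in
/-- The rewriting process of Reidemeister and Schreier for the kernel of `expSum t`: the cocycle of
`w` at `0` is the rewritten word. -/
noncomputable def rewriting (t : X) : FreeGroup X →* WreathProduct ℤ (FreeGroup (LevelLetter t)) :=
  FreeGroup.lift fun z => if h : z = t then ⟨Equiv.addRight 1, 1⟩
    else .base fun k => of (⟨z, h⟩, -k)

/-- The homomorphism that reads a word in the letters `(c, k)` as a word in `X`. -/
def levelHom (t : X) : FreeGroup (LevelLetter t) →* FreeGroup X :=
  FreeGroup.lift fun p => of t ^ p.2 * of p.1.1 * (of t ^ p.2)⁻¹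

@[simp] theorem rewriting_of_self (t : X) : rewriting t (of t) = ⟨Equiv.addRight 1, 1⟩ := by
  simp [rewriting]

theorem rewriting_of_ne {t z : X} (h : z ≠ t) :
    rewriting t (of z) = .base fun k => of (⟨z, h⟩, -k) := by
  simp [rewriting, h]

theorem levelHom_rewriting {t : X} {w : FreeGroup X} (hw : expSum t w = 1) :
    levelHom t ((rewriting t w).cocycle 0) = w := by
  have hperm := perm_eq_add_expSum (f := rewriting t) (t := t) (fun z k => by
    by_cases h : z = t
    · simp [h]
    · simp [rewriting_of_ne h, expSum_of_ne h]) w 0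
  have hequiv := WreathProduct.equivariant (rewriting t) (MonoidHom.id _)
    (fun k u => of t ^ k * levelHom t u) (fun a q u => by
      by_cases h : a = t
      · subst h
        simp [zpow_add_one, (Commute.self_zpow (of a) q).eq, ← mul_assoc]
      · simp [rewriting_of_ne h, levelHom, mul_assoc]) w 0 1
  simpa [hperm, hw] using hequiv

/-- The letters `(c, k)` with `0 ≤ k ≤ M` if `c = x`; the levels of the other letters are not
bounded. -/
abbrev Window (t x : X) (M : ℕ) : Type u :=
  {p : LevelLetter t // p.1.1 = x → 0 ≤ p.2 ∧ p.2 ≤ M}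

/-- The homomorphism that reads a word in the letters of a window as a word in `X`. -/
def windowHom (t x : X) (M : ℕ) : FreeGroup (Window t x M) →* FreeGroup X :=
  (levelHom t).comp (FreeGroup.map Subtype.val)

variable {t x : X}

theorem windowHom_of {M : ℕ} (p : Window t x M) :
    windowHom t x M (of p) = of t ^ p.1.2 * of p.1.1.1 * (of t ^ p.1.2)⁻¹ := by
  simp [windowHom, levelHom]

/-- The lowest letter over `x` in a window. -/
def Window.bot (htx : x ≠ t) (M : ℕ) : Window t x M := ⟨(⟨x, htx⟩, 0), fun _ => by simp⟩

/-- The highest letter over `x` in a window. -/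
def Window.top (htx : x ≠ t) (M : ℕ) : Window t x M := ⟨(⟨x, htx⟩, M), fun _ => by simp⟩

theorem exists_level_bounds {W : FreeGroup (LevelLetter t)} {c : {c : X // c ≠ t}} {k : ℤ}
    (hk : ¬ Omits W (c, k)) : ∃ (k₀ : ℤ) (M : ℕ), ¬ Omits W (c, k₀) ∧ ¬ Omits W (c, k₀ + M) ∧
      ∀ k, ¬ Omits W (c, k) → 0 ≤ k - k₀ ∧ k - k₀ ≤ M := by
  have hfin : {k : ℤ | ¬ Omits W (c, k)}.Finite :=
    (finite_not_omits W).preimage (Prod.mk_right_injective c).injOn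
  obtain ⟨k₀, hk₀, hmin⟩ := Set.exists_min_image _ id hfin ⟨k, hk⟩
  obtain ⟨k₁, hk₁, hmax⟩ := Set.exists_max_image _ id hfin ⟨k, hk⟩
  have hle : k₀ ≤ k₁ := hmin k₁ hk₁
  refine ⟨k₀, (k₁ - k₀).toNat, hk₀, ?_, fun k hk => ?_⟩
  · rwa [Int.toNat_of_nonneg (sub_nonneg.2 hle), add_sub_cancel]
  · rw [Int.toNat_of_nonneg (sub_nonneg.2 hle)]
    exact ⟨sub_nonneg.2 (hmin k hk), sub_le_sub_right (hmax k hk) k₀⟩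

theorem exists_not_omits_level (htx : x ≠ t) {W : FreeGroup (LevelLetter t)}
    (h : ¬ Omits (levelHom t W) x) : ∃ k, ¬ Omits W (⟨x, htx⟩, k) := by
  by_contra! hW
  refine h (map_eq_of_not_omits (f := (kill x).comp (levelHom t)) fun p hp => ?_)
  have hpx : p.1.1 ≠ x := by
    rintro rfl
    exact hp (hW p.2)
  simp [levelHom, kill, hpx, htx.symm]

theorem exists_level_ne_zero {M : ℕ} {S : FreeGroup (Window t x M)}
    (h : ¬ Omits (windowHom t x M S) t) : ∃ p : Window t x M, p.1.2 ≠ 0 ∧ ¬ Omits S p := by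
  by_contra! hS
  refine h (map_eq_of_not_omits (f := (kill t).comp (windowHom t x M)) fun p hp => ?_)
  have hp0 : p.1.2 = 0 := by_contra fun hne => hp (hS p hne)
  simp [windowHom_of, hp0, kill_of_ne p.1.1.2]

theorem levelHom_map_shift {M : ℕ} (k₀ : ℤ) (S : FreeGroup (Window t x M)) :
    levelHom t (FreeGroup.map (fun p : Window t x M => (p.1.1, p.1.2 + k₀)) S) =
      of t ^ k₀ * windowHom t x M S * (of t ^ k₀)⁻¹ := by
  have hcomp : (levelHom t).comp (FreeGroup.map fun p : Window t x M => (p.1.1, p.1.2 + k₀)) =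
      (MulAut.conj (of t ^ k₀)).toMonoidHom.comp (windowHom t x M) := by
    ext p
    rw [MulEquiv.toMonoidHom_eq_coe, MonoidHom.comp_apply, MonoidHom.comp_apply, windowHom_of,
      MonoidHom.coe_coe, MulAut.conj_apply]
    simp [levelHom, add_comm, zpow_add, mul_assoc]
  exact DFunLike.congr_fun hcomp S

theorem exists_window_relator (htx : x ≠ t) {R : FreeGroup X} (hexp : expSum t R = 1)
    (hx : Essential R x) : ∃ (M : ℕ) (S : FreeGroup (Window t x M)),
      wordLength S ≤ wordLength ((rewriting t R).cocycle 0) ∧ IsConjMinimal S ∧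
      ¬ Omits S (Window.bot htx M) ∧ ¬ Omits S (Window.top htx M) ∧
      ∃ g, windowHom t x M S = g * R * g⁻¹ := by
  obtain ⟨g, hg⟩ := exists_isConjMinimal ((rewriting t R).cocycle 0)
  set W := g * (rewriting t R).cocycle 0 * g⁻¹ with hW
  have hWlen : wordLength W ≤ wordLength ((rewriting t R).cocycle 0) := by
    simpa [hW, mul_assoc] using hg g⁻¹
  have hWR : levelHom t W = levelHom t g * R * (levelHom t g)⁻¹ := by
    rw [hW, map_mul, map_mul, map_inv, levelHom_rewriting hexp]
  obtain ⟨k, hk⟩ := exists_not_omits_level htx (W := W) (by rw [hWR]; exact hx _)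
  obtain ⟨k₀, M, hbot, htop, hbounds⟩ := exists_level_bounds hk
  let shift (p : Window t x M) : LevelLetter t := (p.1.1, p.1.2 + k₀)
  have hshift : Function.Injective shift := fun p q h => by
    simpa [shift, Subtype.ext_iff, Prod.ext_iff] using h
  obtain ⟨S, hS, hSlen⟩ := exists_map_eq (e := shift) (w := W) fun p hp => by
    have hlevel : p.1.1 = x → 0 ≤ p.2 - k₀ ∧ p.2 - k₀ ≤ M := by
      intro h
      have hpx : p.1 = ⟨x, htx⟩ := Subtype.ext h
      exact hbounds p.2 (hpx ▸ hp)
    exact ⟨⟨(p.1, p.2 - k₀), hlevel⟩, by simp [shift]⟩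
  refine ⟨M, S, hSlen.trans hWlen, .of_map (e := shift) (hS ▸ hg) (hS ▸ hSlen), ?_, ?_,
    (of t ^ k₀)⁻¹ * levelHom t g, ?_⟩
  · rw [← omits_map_iff hshift, hS]
    simpa [shift, Window.bot] using hbot
  · rw [← omits_map_iff hshift, hS]
    simpa [shift, Window.top, add_comm] using htop
  · have hconj := levelHom_map_shift k₀ S
    rw [hS, hWR] at hconj
    rw [mul_inv_rev, inv_inv, ← mul_assoc, mul_assoc _ _ R, mul_assoc _ _ (levelHom t g)⁻¹, hconj]
    group

end Rewriting

end OneRelator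

namespace OneRelator

universe u v w

open Monoid HNNExtension HNNExtension.NormalWord

/-! ### Normal forms in HNN extensions -/

section HNN

variable {G : Type*} [Group G] {A B : Subgroup G} (φ : A ≃* B)

/-- The element `t ^ u₁ * g₁ * ⋯ * t ^ uₖ * gₖ` of an HNN extension given by its list of syllables
`(uᵢ, gᵢ)`. -/
def syllableProd (l : List (ℤˣ × G)) : HNNExtension G A B φ :=
  (l.map fun x => t ^ (x.1 : ℤ) * of x.2).prod

/-- A list of syllables is reduced if it contains no pinch, as in
`HNNExtension.NormalWord.ReducedWord`. -/
def IsReduced (A B : Subgroup G) (l : List (ℤˣ × G)) : Prop :=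
  l.IsChain fun a b => a.2 ∈ toSubgroup A B a.1 → a.1 = b.1

theorem syllableProd_cons (a : ℤˣ × G) (l : List (ℤˣ × G)) :
    syllableProd φ (a :: l) = t ^ (a.1 : ℤ) * of a.2 * syllableProd φ l := by
  simp [syllableProd]

theorem syllableProd_append (l m : List (ℤˣ × G)) :
    syllableProd φ (l ++ m) = syllableProd φ l * syllableProd φ m := by
  simp [syllableProd]

theorem exists_conj_of_eq_of {u : ℤˣ} {r : G} (hr : r ∈ toSubgroup A B u) :
    ∃ r' : G, (t ^ (u : ℤ) * of r * (t ^ (u : ℤ))⁻¹ : HNNExtension G A B φ) = of r' := by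
  rcases Int.units_eq_one_or u with rfl | rfl
  · exact ⟨φ ⟨r, hr⟩, by rw [equiv_eq_conj]; simp⟩
  · exact ⟨φ.symm ⟨r, hr⟩, by rw [equiv_symm_eq_conj]; simp⟩

theorem isConj_syllableProd_concat (g r : G) (u : ℤˣ) (l : List (ℤˣ × G)) :
    IsConj (of g * syllableProd φ (l ++ [(u, r)])) (syllableProd φ (l ++ [(u, r * g)])) :=
  isConj_iff.2 ⟨(of g)⁻¹, by simp [syllableProd, mul_assoc]⟩

theorem exists_isConj_syllableProd_pinch {u v : ℤˣ} {r s : G} (huv : u ≠ v)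
    (hs : s ∈ toSubgroup A B v) (l : List (ℤˣ × G)) :
    ∃ g, IsConj (syllableProd φ ((u, r) :: (l ++ [(v, s)]))) (of g * syllableProd φ l) := by
  obtain ⟨s', hs'⟩ := exists_conj_of_eq_of φ hs
  refine ⟨s' * r, isConj_iff.2 ⟨t ^ (v : ℤ) * of s, ?_⟩⟩
  rw [Int.units_ne_iff_eq_neg.1 huv, syllableProd_cons, syllableProd_append, map_mul _ s' r, ← hs']
  simp [syllableProd, mul_assoc]

theorem isReduced_concat {l : List (ℤˣ × G)} {u : ℤˣ} {r : G} (h : IsReduced A B (l ++ [(u, r)]))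
    (r' : G) : IsReduced A B (l ++ [(u, r')]) := by
  rw [IsReduced, List.isChain_append] at h ⊢
  refine ⟨h.1, List.isChain_singleton _, fun a ha b hb => ?_⟩
  obtain rfl : (u, r') = b := by simpa using hb
  exact h.2.2 a ha (u, r) rfl

theorem exists_isConj_of_or_cyclicallyReduced (l : List (ℤˣ × G)) (hl : IsReduced A B l) (g : G) :
    (∃ h, IsConj (of g * syllableProd φ l) (of h)) ∨
      ∃ l', l' ≠ [] ∧ IsReduced A B (l' ++ l') ∧
        IsConj (of g * syllableProd φ l) (syllableProd φ l') := by
  induction l using List.bidirectionalRec generalizing g with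
  | nil => exact .inl ⟨g, by simpa [syllableProd] using IsConj.refl (of g : HNNExtension G A B φ)⟩
  | singleton a =>
    refine .inr ⟨[(a.1, a.2 * g)], by simp, ?_, isConj_syllableProd_concat φ g a.2 a.1 []⟩
    simp [IsReduced]
  | cons_append a mid b ih =>
    have hred := isReduced_concat (l := a :: mid) (u := b.1) hl (b.2 * g)
    have hconj := isConj_syllableProd_concat φ g b.2 b.1 (a :: mid)
    by_cases hpinch : b.2 * g ∈ toSubgroup A B b.1 → b.1 = a.1
    · refine .inr ⟨_, by simp, List.isChain_append.2 ⟨hred, hred, fun y hy z hz => ?_⟩, hconj⟩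
      obtain rfl : (b.1, b.2 * g) = y := by
        rwa [List.getLast?_concat, Option.mem_some_iff] at hy
      obtain rfl : a = z := by simpa using hz
      exact hpinch
    · push Not at hpinch
      obtain ⟨g', hg'⟩ :=
        exists_isConj_syllableProd_pinch φ (r := a.2) hpinch.2.symm hpinch.1 mid
      have hmid : IsReduced A B mid := (List.isChain_append.1 (List.isChain_cons.1 hl).2).1
      rcases ih hmid g' with ⟨h, hh⟩ | ⟨l', hne, hl', hh⟩
      · exact .inl ⟨h, (hconj.trans hg').trans hh⟩
      · exact .inr ⟨l', hne, hl', (hconj.trans hg').trans hh⟩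

variable {φ}

theorem isReduced_flatten_replicate {l : List (ℤˣ × G)} (hne : l ≠ []) (hl : IsReduced A B (l ++ l))
    (k : ℕ) : IsReduced A B (List.replicate k l).flatten := by
  induction k with
  | zero => simp [IsReduced]
  | succ k ih =>
    rw [List.replicate_succ, List.flatten_cons]
    rw [IsReduced, List.isChain_append] at hl
    refine List.isChain_append.2 ⟨hl.1, ih, fun a ha b hb => hl.2.2 a ha b ?_⟩
    cases k with
    | zero => simp at hb
    | succ k =>
      rwa [List.replicate_succ, List.flatten_cons, List.head?_append_of_ne_nil _ hne] at hb

theorem syllableProd_pow_ne_one {l : List (ℤˣ × G)} (hne : l ≠ []) (hl : IsReduced A B (l ++ l))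
    {k : ℕ} (hk : k ≠ 0) : syllableProd φ l ^ k ≠ 1 := by
  intro he
  have hprod : syllableProd φ (List.replicate k l).flatten = syllableProd φ l ^ k := by
    simp [syllableProd, List.map_flatten, List.prod_flatten]
  have hnil := ReducedWord.toList_eq_nil_of_mem_of_range φ
    ⟨1, _, isReduced_flatten_replicate hne hl k⟩ ⟨1, by
      rw [ReducedWord.prod, map_one, one_mul]
      exact (hprod.trans he).symm⟩
  simp [hne, hk] at hnil

theorem hnnExtension_torsionFree (hG : ∀ (g : G) (k : ℕ), k ≠ 0 → g ^ k = 1 → g = 1)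
    (e : HNNExtension G A B φ) (k : ℕ) (hk : k ≠ 0) (he : e ^ k = 1) : e = 1 := by
  obtain ⟨d⟩ := TransversalPair.nonempty G A B
  let w : NormalWord d := e • empty
  have hw : of w.head * syllableProd φ w.toList = e := by
    have h := prod_smul φ e (empty : NormalWord d)
    rwa [prod_empty, mul_one] at h
  rcases exists_isConj_of_or_cyclicallyReduced φ w.toList w.chain w.head with
    ⟨h, hh⟩ | ⟨l, hne, hl, hh⟩
  all_goals
    rw [hw] at hh
    have hpow := hh.pow k
    rw [he, isConj_one_right] at hpow
  · rw [← map_pow, ← map_one (of : G →* HNNExtension G A B φ)] at hpow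
    rwa [hG h k hk (of_injective φ hpow), map_one, isConj_one_left] at hh
  · exact absurd hpow (syllableProd_pow_ne_one hne hl hk)

end HNN

section Coprod

variable {ι : Type*} {M N : ι → Type*} [∀ i, Group (M i)] [∀ i, Group (N i)]

theorem neWord_prod_ne_one {i j : ι} (w : CoprodI.NeWord M i j) : w.prod ≠ 1 := by
  classical
  intro h
  have hempty : w.toWord = .empty := CoprodI.Word.equiv.symm.injective (h : w.toWord.prod = _)
  exact w.toList_ne_nil (congrArg CoprodI.Word.toList hempty)

theorem exists_neWord {g : CoprodI M} (hg : g ≠ 1) :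
    ∃ (i j : ι) (w : CoprodI.NeWord M i j), w.prod = g := by
  classical
  have hne : CoprodI.Word.equiv g ≠ .empty := fun h =>
    hg (by rw [← CoprodI.Word.equiv.symm_apply_apply g, h]; rfl)
  obtain ⟨i, j, w, hw⟩ := CoprodI.NeWord.of_word _ hne
  exact ⟨i, j, w, by rw [CoprodI.NeWord.prod, hw]; exact CoprodI.Word.equiv.symm_apply_apply g⟩

/-- The homomorphism of free products induced by homomorphisms of the factors. -/
def coprodMap (f : ∀ i, M i →* N i) : CoprodI M →* CoprodI N :=
  CoprodI.lift fun i => CoprodI.of.comp (f i)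

@[simp] theorem coprodMap_of (f : ∀ i, M i →* N i) {i : ι} (m : M i) :
    coprodMap f (CoprodI.of m) = CoprodI.of (f i m) :=
  CoprodI.lift_of _ _

theorem exists_neWord_coprodMap {f : ∀ i, M i →* N i} (hf : ∀ i, Function.Injective (f i)) {i j : ι}
    (w : CoprodI.NeWord M i j) : ∃ w' : CoprodI.NeWord N i j, w'.prod = coprodMap f w.prod := by
  induction w with
  | singleton x hx =>
    exact ⟨.singleton (f _ x) fun h => hx ((map_eq_one_iff _ (hf _)).1 h), by simp⟩
  | append w₁ hne w₂ h₁ h₂ =>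
    obtain ⟨a, ha⟩ := h₁
    obtain ⟨b, hb⟩ := h₂
    exact ⟨a.append hne b, by simp [ha, hb]⟩

theorem coprodMap_injective {f : ∀ i, M i →* N i} (hf : ∀ i, Function.Injective (f i)) :
    Function.Injective (coprodMap f) := by
  refine (injective_iff_map_eq_one _).2 fun g hg => by_contra fun hne => ?_
  obtain ⟨i, j, w, rfl⟩ := exists_neWord hne
  obtain ⟨w', hw'⟩ := exists_neWord_coprodMap hf w
  exact neWord_prod_ne_one w' (hw'.trans hg)

/-- The canonical map from a free product of free products of copies of `ℤ/n`. -/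
def coprodFlatten (n : ℕ) (W : Type u) (κ : Type v) :
    CoprodI (fun _ : W => CyclicCoprod n κ) →* CyclicCoprod n (W × κ) :=
  CoprodI.lift fun w => CoprodI.lift fun i => CyclicCoprod.of (w, i)

theorem coprodFlatten_of_of (n : ℕ) {W : Type u} {κ : Type v} (w : W) (i : κ)
    (c : Multiplicative (ZMod n)) :
    coprodFlatten n W κ (CoprodI.of (M := fun _ : W => CyclicCoprod n κ) (i := w)
      (CyclicCoprod.of i c)) = CyclicCoprod.of (w, i) c :=
  (CoprodI.lift_of _ _).trans (CoprodI.lift_of _ _)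

theorem coprodFlatten_injective (n : ℕ) (W : Type u) (κ : Type v) :
    Function.Injective (coprodFlatten n W κ) := by
  let g : CyclicCoprod n (W × κ) →* CoprodI (fun _ : W => CyclicCoprod n κ) :=
    CoprodI.lift fun p => (CoprodI.of (M := fun _ : W => CyclicCoprod n κ) (i := p.1)).comp
      (CyclicCoprod.of p.2)
  have hg : g.comp (coprodFlatten n W κ) = .id _ := by
    refine CoprodI.ext_hom _ _ fun w => CoprodI.ext_hom _ _ fun i => MonoidHom.ext fun c => ?_
    simp only [MonoidHom.comp_apply, MonoidHom.id_apply]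
    rw [coprodFlatten_of_of]
    exact CoprodI.lift_of _ _
  exact Function.LeftInverse.injective (g := g) (DFunLike.congr_fun hg)

end Coprod

section NormalWords

variable {G : Type*} [Group G] {A B : Subgroup G}

variable (A B) in
theorem exists_transversalPair_one_mem : ∃ d : TransversalPair G A B, ∀ u, (1 : G) ∈ d.set u := by
  choose s hs using fun u : ℤˣ => (toSubgroup A B u).exists_isComplement_right 1
  exact ⟨⟨s, fun u => (hs u).1⟩, fun u => (hs u).2⟩

theorem t_smul_cases (φ : A ≃* B) {d : TransversalPair G A B} (q : NormalWord d) :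
    (∃ (a : A) (r : G), r ∈ d.set 1 ∧ q.head = a * r ∧
      ((t : HNNExtension G A B φ) • q).head = φ a ∧
      ((t : HNNExtension G A B φ) • q).toList = (1, r) :: q.toList) ∨
    ∃ (a : A) (r : G), r ∈ d.set (-1) ∧ q.head = a ∧
      ((t : HNNExtension G A B φ) • q).head = φ a * r ∧
      q.toList = (-1, r) :: ((t : HNNExtension G A B φ) • q).toList := by
  rw [t_smul_eq_unitsSMul]
  by_cases hc : Cancels 1 q
  · right
    cases q using consRecOn with
    | ofGroup g => simp [Cancels, ofGroup] at hc
    | cons g u w hr hw =>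
      obtain rfl : u = -1 := by simpa using hc.2
      refine ⟨⟨g, hc.1⟩, w.head, hr, rfl, ?_⟩
      rw [unitsSMul, dif_pos hc]
      simp only [unitsSMulWithCancel, cons]
      exact ⟨rfl, rfl⟩
  · left
    refine ⟨((d.compl 1).equiv q.head).1, ((d.compl 1).equiv q.head).2,
      ((d.compl 1).equiv q.head).2.2, ((d.compl 1).equiv_fst_mul_equiv_snd _).symm, ?_⟩
    rw [unitsSMul, dif_neg hc]
    simp only [cons, group_smul_head, group_smul_toList, inv_mul_cancel_right]
    exact ⟨rfl, rfl⟩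

end NormalWords

section AdaptedSection

theorem exists_eq_mul_of_isComplement {K L Y : Type*} [Group K] [Group L] [Group Y] (p : K →* L)
    {i : Y →* K} {T : Set L} (hT : Subgroup.IsComplement ((p.comp i).range : Set L) T) (l : L) :
    ∃ y, ∃ r ∈ T, l = p (i y) * r := by
  obtain ⟨y, hy⟩ := (hT.equiv l).1.2
  refine ⟨y, _, (hT.equiv l).2.2, ?_⟩
  rw [← MonoidHom.comp_apply, hy]
  exact (hT.equiv_fst_mul_equiv_snd l).symm

variable {K L Y : Type*} [Group K] [Group L] [Group Y] (p : K →* L) {i : Y →* K}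
  (hi : Function.Injective (p.comp i)) {T : Set L}
  (hT : Subgroup.IsComplement ((p.comp i).range : Set L) T) (s : L → K)

/-- The section of `p` obtained from the section `s` that is compatible with multiplication by the
image of `i`, given a transversal `T` of this image. -/
noncomputable def adaptedSection (l : L) : K :=
  i ((MonoidHom.ofInjective hi).symm (hT.equiv l).1) * s (hT.equiv l).2

theorem adaptedSection_mul_of_mem (y : Y) {r : L} (hr : r ∈ T) :
    adaptedSection p hi hT s (p (i y) * r) = i y * s r := by
  have hequiv : hT.equiv (p (i y) * r) = (MonoidHom.ofInjective hi y, ⟨r, hr⟩) :=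
    (Equiv.eq_symm_apply _).1 (hT.equiv_symm_apply (MonoidHom.ofInjective hi y, ⟨r, hr⟩)).symm
  rw [adaptedSection, hequiv]
  simp

theorem adaptedSection_mul (y : Y) (l : L) :
    adaptedSection p hi hT s (p (i y) * l) = i y * adaptedSection p hi hT s l := by
  obtain ⟨y', r, hr, rfl⟩ := exists_eq_mul_of_isComplement p hT l
  rw [← mul_assoc, ← map_mul, ← map_mul, adaptedSection_mul_of_mem p hi hT s _ hr,
    adaptedSection_mul_of_mem p hi hT s _ hr, map_mul, mul_assoc]

theorem map_adaptedSection (hs : ∀ l, p (s l) = l) (l : L) :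
    p (adaptedSection p hi hT s l) = l := by
  obtain ⟨y, r, hr, rfl⟩ := exists_eq_mul_of_isComplement p hT l
  rw [adaptedSection_mul_of_mem p hi hT s _ hr, map_mul, hs]

end AdaptedSection

/-! ### Splittings along HNN extensions -/

/-- The data of an HNN extension of `K ⧸ N` whose associated subgroups are the images of two
homomorphisms `lo` and `hi`; the stable letter conjugates `lo y` to `hi y`. -/
structure HNNData {K : Type u} [Group K] (N : Subgroup K) [N.Normal] (Y : Type v) [Group Y] where
  lo : Y →* K
  hi : Y →* K
  injective_lo : Function.Injective ((QuotientGroup.mk' N).comp lo)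
  injective_hi : Function.Injective ((QuotientGroup.mk' N).comp hi)

namespace HNNData

section Factor

variable {K : Type u} [Group K] {N : Subgroup K} {Q : Type w} [Group Q] (ψ : N →* Q)

open Classical in
/-- The homomorphism `ψ` into the factor with index `l`, extended by `1` to all of `K`. -/
noncomputable def factor (l : List (ℤˣ × K ⧸ N)) (k : K) :
    CoprodI fun _ : List (ℤˣ × K ⧸ N) => Q :=
  if h : k ∈ N then CoprodI.of (M := fun _ : List (ℤˣ × K ⧸ N) => Q) (i := l) (ψ ⟨k, h⟩) else 1

theorem factor_of_mem (l : List (ℤˣ × K ⧸ N)) {k : K} (h : k ∈ N) :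
    factor ψ l k = CoprodI.of (M := fun _ : List (ℤˣ × K ⧸ N) => Q) (i := l) (ψ ⟨k, h⟩) :=
  dif_pos h

end Factor

variable {K : Type u} [Group K] {N : Subgroup K} [N.Normal] {Y : Type v} [Group Y]
  (D : HNNData N Y)

/-- The isomorphism between the associated subgroups. -/
noncomputable def equiv :
    ((QuotientGroup.mk' N).comp D.lo).range ≃* ((QuotientGroup.mk' N).comp D.hi).range :=
  (MonoidHom.ofInjective D.injective_lo).symm.trans (MonoidHom.ofInjective D.injective_hi)

theorem equiv_lo (y : Y) : D.equiv ⟨QuotientGroup.mk' N (D.lo y), y, rfl⟩ =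
    ⟨QuotientGroup.mk' N (D.hi y), y, rfl⟩ := by
  have hy : (⟨QuotientGroup.mk' N (D.lo y), y, rfl⟩ : ((QuotientGroup.mk' N).comp D.lo).range) =
    MonoidHom.ofInjective D.injective_lo y := rfl
  rw [equiv, MulEquiv.trans_apply, hy, MulEquiv.symm_apply_apply]
  rfl

/-- The HNN extension given by the data. -/
abbrev Extension : Type u := HNNExtension (K ⧸ N) _ _ D.equiv

/-- The map from `K` to the HNN extension of `K ⧸ N`. -/
noncomputable def toExtension : K →* D.Extension := HNNExtension.of.comp (QuotientGroup.mk' N)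

theorem t_mul_lo (y : Y) : t * D.toExtension (D.lo y) = D.toExtension (D.hi y) * t := by
  have h := t_mul_of (φ := D.equiv) ⟨QuotientGroup.mk' N (D.lo y), y, rfl⟩
  rwa [equiv_lo] at h

theorem toExtension_eq_one_iff (k : K) : D.toExtension k = 1 ↔ k ∈ N := by
  rw [toExtension, MonoidHom.comp_apply, map_eq_one_iff _ (of_injective D.equiv),
    QuotientGroup.mk'_apply, QuotientGroup.eq_one_iff]

/-- A transversal of the associated subgroups with representative `1` of the trivial coset. -/
noncomputable def transversal : TransversalPair (K ⧸ N)
    ((QuotientGroup.mk' N).comp D.lo).range ((QuotientGroup.mk' N).comp D.hi).range :=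
  (exists_transversalPair_one_mem _ _).choose

theorem one_mem_transversal (u : ℤˣ) : 1 ∈ D.transversal.set u :=
  (exists_transversalPair_one_mem _ _).choose_spec u

open Classical in
variable (N) in
/-- A section of `K → K ⧸ N` with value `1` at `1`. -/
noncomputable def rep : K ⧸ N → K := Function.update Quotient.out 1 1

variable (N) in
theorem rep_one : rep N 1 = 1 := by simp [rep]

theorem mk_rep (l : K ⧸ N) : QuotientGroup.mk' N (rep N l) = l := by
  by_cases h : l = 1
  · simp [h, rep]
  · simp [rep, h]

theorem compl_hi : Subgroup.IsComplement
    (((QuotientGroup.mk' N).comp D.hi).range : Set (K ⧸ N)) (D.transversal.set (-1)) := by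
  have h := D.transversal.compl (-1)
  rwa [toSubgroup_neg_one] at h

/-- A section of `K → K ⧸ N` compatible with left multiplication by `lo`. -/
noncomputable def loSection : K ⧸ N → K :=
  adaptedSection _ D.injective_lo (D.transversal.compl 1) (rep N)

/-- A section of `K → K ⧸ N` compatible with left multiplication by `hi`. -/
noncomputable def hiSection : K ⧸ N → K :=
  adaptedSection _ D.injective_hi D.compl_hi (rep N)

@[simp] theorem mk_loSection (l : K ⧸ N) : (D.loSection l : K ⧸ N) = l :=
  map_adaptedSection _ _ _ _ mk_rep l

@[simp] theorem mk_hiSection (l : K ⧸ N) : (D.hiSection l : K ⧸ N) = l :=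
  map_adaptedSection _ _ _ _ mk_rep l

theorem loSection_mul (y : Y) (l : K ⧸ N) : D.loSection (D.lo y * l) = D.lo y * D.loSection l :=
  adaptedSection_mul _ _ _ _ y l

theorem hiSection_mul (y : Y) (l : K ⧸ N) : D.hiSection (D.hi y * l) = D.hi y * D.hiSection l :=
  adaptedSection_mul _ _ _ _ y l

theorem loSection_mul_of_mem (y : Y) {r : K ⧸ N} (hr : r ∈ D.transversal.set 1) :
    D.loSection (D.lo y * r) = D.lo y * rep N r :=
  adaptedSection_mul_of_mem _ _ _ _ y hr

theorem hiSection_mul_of_mem (y : Y) {r : K ⧸ N} (hr : r ∈ D.transversal.set (-1)) :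
    D.hiSection (D.hi y * r) = D.hi y * rep N r :=
  adaptedSection_mul_of_mem _ _ _ _ y hr

theorem loSection_lo (y : Y) : D.loSection (D.lo y) = D.lo y := by
  simpa [rep_one] using D.loSection_mul_of_mem y (D.one_mem_transversal 1)

theorem hiSection_hi (y : Y) : D.hiSection (D.hi y) = D.hi y := by
  simpa [rep_one] using D.hiSection_mul_of_mem y (D.one_mem_transversal (-1))

theorem t_smul_cases (q : NormalWord D.transversal) :
    (∃ y, ∃ r ∈ D.transversal.set 1, q.head = D.lo y * r ∧
      ((t : D.Extension) • q).head = D.hi y ∧ ((t : D.Extension) • q).toList = (1, r) :: q.toList) ∨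
    ∃ y, ∃ r ∈ D.transversal.set (-1), q.head = D.lo y ∧
      ((t : D.Extension) • q).head = D.hi y * r ∧
      q.toList = (-1, r) :: ((t : D.Extension) • q).toList := by
  rcases OneRelator.t_smul_cases D.equiv q with
    ⟨⟨_, y, rfl⟩, r, hr, hq, hh, hl⟩ | ⟨⟨_, y, rfl⟩, r, hr, hq, hh, hl⟩
  · exact .inl ⟨y, r, hr, hq, hh.trans (congrArg Subtype.val (D.equiv_lo y)), hl⟩
  · exact .inr ⟨y, r, hr, hq,
      hh.trans (congrArg (fun b => b.1 * r) (D.equiv_lo y)), hl⟩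

section Action

variable {Q : Type w} [Group Q] (ψ : N →* Q)

/-- The wreath product in which `K` and the stable letter act, by permutations of the normal words,
and with cocycles in the free product of copies of `Q` indexed by the tails of normal words. -/
abbrev Wreath (Q : Type w) [Group Q] : Type (max u w) :=
  WreathProduct (NormalWord D.transversal) (CoprodI fun _ : List (ℤˣ × K ⧸ N) => Q)

theorem factor_mul (l : List (ℤˣ × K ⧸ N)) {k k' : K} (h : (k : K ⧸ N) = 1)
    (h' : (k' : K ⧸ N) = 1) : factor ψ l (k * k') = factor ψ l k * factor ψ l k' := by
  rw [QuotientGroup.eq_one_iff] at h h'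
  rw [factor_of_mem ψ l h, factor_of_mem ψ l h', factor_of_mem ψ l (mul_mem h h'), ← map_mul,
    ← map_mul, MulMemClass.mk_mul_mk]

@[simp] theorem factor_one (l : List (ℤˣ × K ⧸ N)) : factor ψ l 1 = 1 := by
  simpa using factor_mul ψ l (k := 1) (k' := 1) rfl rfl

/-- The action of `K`, obtained from its action on the cosets of `N` by means of `loSection`. -/
noncomputable def action : K →* D.Wreath Q where
  toFun k := ⟨MulAction.toPerm (D.toExtension k),
    fun q => factor ψ q.toList ((D.loSection (k * q.head))⁻¹ * k * D.loSection q.head)⟩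
  map_one' := WreathProduct.ext (Equiv.ext fun q => by simp) (funext fun q => by simp)
  map_mul' k k' := by
    refine WreathProduct.ext (Equiv.ext fun q => ?_) (funext fun q => ?_)
    · simp [mul_smul]
    · simp only [WreathProduct.mul_cocycle, MulAction.toPerm_apply, toExtension,
        MonoidHom.comp_apply, QuotientGroup.mk'_apply, of_smul_eq_smul, group_smul_toList,
        group_smul_head]
      rw [← factor_mul] <;> simp [mul_assoc]

@[simp] theorem action_perm (k : K) : (D.action ψ k).perm = MulAction.toPerm (D.toExtension k) :=
  rfl

theorem action_cocycle (k : K) (q : NormalWord D.transversal) : (D.action ψ k).cocycle q =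
    factor ψ q.toList ((D.loSection (k * q.head))⁻¹ * k * D.loSection q.head) := rfl

theorem action_cocycle_of_mem {k : K} (h : k ∈ N) (q : NormalWord D.transversal) :
    (D.action ψ k).cocycle q =
      factor ψ q.toList ((D.loSection q.head)⁻¹ * k * D.loSection q.head) := by
  rw [action_cocycle, (QuotientGroup.eq_one_iff k).2 h, one_mul]

/-- The action of the stable letter; its cocycle passes from `hiSection` to `loSection`. -/
noncomputable def letter : D.Wreath Q where
  perm := MulAction.toPerm (t : D.Extension)
  cocycle q := factor ψ ((t : D.Extension) • q).toList
    ((D.loSection ((t : D.Extension) • q).head)⁻¹ * D.hiSection ((t : D.Extension) • q).head)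

theorem letter_mul_action (y : Y) :
    D.letter ψ * D.action ψ (D.lo y) = D.action ψ (D.hi y) * D.letter ψ := by
  refine WreathProduct.ext (Equiv.ext fun q => ?_) (funext fun q => ?_)
  · simp [letter, ← mul_smul, t_mul_lo]
  · have hsmul : (t : D.Extension) • D.toExtension (D.lo y) • q =
        (D.hi y : K ⧸ N) • (t : D.Extension) • q := by
      rw [← mul_smul, t_mul_lo, mul_smul]
      rfl
    simp only [WreathProduct.mul_cocycle, letter, action_cocycle, action_perm,
      MulAction.toPerm_apply, hsmul, loSection_mul, hiSection_mul, group_smul_head,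
      group_smul_toList]
    rw [← factor_mul] <;> simp [mul_assoc]

end Action

section Evaluation

variable {Q : Type w} [Group Q] {ψ : N →* Q} {G : Type*} [Group G] (ρ : K →* G) (τ : G)

/-- The value in `G` of a list of syllables when `t` goes to `τ`. -/
noncomputable def syllableEval (l : List (ℤˣ × K ⧸ N)) : G :=
  (l.map fun x => τ ^ (x.1 : ℤ) * ρ (rep N x.2)).prod

/-- The homomorphism into `G` under which the factor with index `l` is conjugated by the value of
`l`. -/
noncomputable def coprodEval (β : Q →* G) : CoprodI (fun _ : List (ℤˣ × K ⧸ N) => Q) →* G :=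
  CoprodI.lift fun l => (MulAut.conj (syllableEval ρ τ l)⁻¹).toMonoidHom.comp β

/-- The equivariant map by which `G` sees the actions of `K` and of the stable letter. -/
noncomputable def eval (β : Q →* G) (q : NormalWord D.transversal)
    (π : CoprodI fun _ : List (ℤˣ × K ⧸ N) => Q) : G :=
  ρ (D.loSection q.head) * syllableEval ρ τ q.toList * coprodEval ρ τ β π

variable {ρ τ} {β : Q →* G} (hβ : ∀ k : N, β (ψ k) = ρ k)

include hβ in
theorem coprodEval_factor (l : List (ℤˣ × K ⧸ N)) {k : K} (h : (k : K ⧸ N) = 1) :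
    coprodEval ρ τ β (factor ψ l k) = (syllableEval ρ τ l)⁻¹ * ρ k * syllableEval ρ τ l := by
  rw [factor_of_mem ψ l ((QuotientGroup.eq_one_iff k).1 h)]
  refine (CoprodI.lift_of _ _).trans ?_
  simp [hβ]

include hβ in
theorem eval_action (k : K) (q : NormalWord D.transversal)
    (π : CoprodI fun _ : List (ℤˣ × K ⧸ N) => Q) :
    D.eval ρ τ β ((D.action ψ k).perm q) ((D.action ψ k).cocycle q * π) =
      ρ k * D.eval ρ τ β q π := by
  simp only [eval, action_perm, action_cocycle, MulAction.toPerm_apply, toExtension,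
    MonoidHom.comp_apply, QuotientGroup.mk'_apply, of_smul_eq_smul, group_smul_toList,
    group_smul_head, map_mul]
  rw [coprodEval_factor hβ]
  · simp [mul_assoc]
  · simp

theorem eval_t_smul (hτ : ∀ y, τ * ρ (D.lo y) = ρ (D.hi y) * τ) (q : NormalWord D.transversal) :
    ρ (D.hiSection ((t : D.Extension) • q).head) *
      syllableEval ρ τ ((t : D.Extension) • q).toList =
        τ * (ρ (D.loSection q.head) * syllableEval ρ τ q.toList) := by
  rcases D.t_smul_cases q with ⟨y, r, hr, hq, hh, hl⟩ | ⟨y, r, hr, hq, hh, hl⟩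
  · rw [hh, hl, hq, D.loSection_mul_of_mem y hr, hiSection_hi, ← mul_assoc τ, map_mul,
      ← mul_assoc τ, hτ]
    simp [syllableEval, mul_assoc]
  · rw [hh, hl, hq, D.hiSection_mul_of_mem y hr, loSection_lo, ← mul_assoc τ, hτ]
    simp [syllableEval, mul_assoc]

include hβ in
theorem eval_letter (hτ : ∀ y, τ * ρ (D.lo y) = ρ (D.hi y) * τ) (q : NormalWord D.transversal)
    (π : CoprodI fun _ : List (ℤˣ × K ⧸ N) => Q) :
    D.eval ρ τ β ((D.letter ψ).perm q) ((D.letter ψ).cocycle q * π) = τ * D.eval ρ τ β q π := by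
  simp only [eval, letter, MulAction.toPerm_apply, map_mul]
  rw [coprodEval_factor hβ _ (by simp), ← mul_assoc τ, ← D.eval_t_smul hτ]
  simp [mul_assoc]

end Evaluation

end HNNData

end OneRelator

namespace OneRelator

universe u v w

open FreeGroup (of mk)
open Multiplicative (ofAdd toAdd)
open Monoid

/-! ### Windows of letters -/

section Window

theorem FreiheitssatzAt.injective_mk_comp_map {A B : Type*} {e : A → B} {R : FreeGroup B} {b : B}
    (h : FreiheitssatzAt R b) (he : Function.Injective e) (hb : b ∉ Set.range e) :
    Function.Injective ((QuotientGroup.mk' (nclosure R)).comp (FreeGroup.map e)) := by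
  refine (injective_iff_map_eq_one _).2 fun y hy => ?_
  rw [MonoidHom.comp_apply, QuotientGroup.mk'_apply, QuotientGroup.eq_one_iff] at hy
  exact (map_eq_one_iff _ (FreeGroup.map_injective he)).1
    (h _ (omits_map_of_notMem_range hb y) hy)

variable {X : Type u} {t x : X} {M : ℕ}

variable (t x M) in
/-- The letters of a window that remain in the window when their level is raised by one. -/
abbrev Shiftable : Type u := {p : LevelLetter t // p.1.1 = x → 0 ≤ p.2 ∧ p.2 < M}

/-- A shiftable letter as a letter of the window. -/
def Shiftable.incl (p : Shiftable t x M) : Window t x M :=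
  ⟨p.1, fun h => ⟨(p.2 h).1, (p.2 h).2.le⟩⟩

/-- The letter one level above a shiftable letter. -/
def Shiftable.succ (p : Shiftable t x M) : Window t x M :=
  ⟨(p.1.1, p.1.2 + 1), fun h => ⟨by have := p.2 h; simp only; omega, (p.2 h).2⟩⟩

theorem Shiftable.incl_injective : Function.Injective (incl : Shiftable t x M → _) :=
  fun p q h => by simpa [incl, Subtype.ext_iff] using h

theorem Shiftable.succ_injective : Function.Injective (succ : Shiftable t x M → _) :=
  fun p q h => by
    simp only [succ, Subtype.mk.injEq, Prod.mk.injEq, add_left_inj] at h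
    exact Subtype.ext (Prod.ext h.1 h.2)

theorem Window.top_notMem_range_incl (htx : x ≠ t) :
    Window.top htx M ∉ Set.range Shiftable.incl := by
  rintro ⟨p, hp⟩
  obtain ⟨hc, hk⟩ := Prod.ext_iff.1 (congrArg Subtype.val hp)
  exact (p.2 (congrArg Subtype.val hc)).2.ne hk

theorem Window.bot_notMem_range_succ (htx : x ≠ t) :
    Window.bot htx M ∉ Set.range Shiftable.succ := by
  rintro ⟨p, hp⟩
  obtain ⟨hc, hk⟩ := Prod.ext_iff.1 (congrArg Subtype.val hp)
  exact (Int.lt_add_one_of_le (p.2 (congrArg Subtype.val hc)).1).ne' hk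

/-- The letter over `c` at level zero. -/
def Window.zero (x : X) (M : ℕ) (c : X) (hc : c ≠ t) : Window t x M :=
  ⟨(⟨c, hc⟩, 0), fun _ => by simp⟩

theorem windowHom_zero {c : X} (hc : c ≠ t) :
    windowHom t x M (of (Window.zero x M c hc)) = of c := by
  simp [windowHom_of, Window.zero]

theorem of_mul_windowHom_incl (y : FreeGroup (Shiftable t x M)) :
    of t * windowHom t x M (FreeGroup.map Shiftable.incl y) =
      windowHom t x M (FreeGroup.map Shiftable.succ y) * of t := by
  have hcomp : (MulAut.conj (of t)).toMonoidHom.comp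
      ((windowHom t x M).comp (FreeGroup.map Shiftable.incl)) =
        (windowHom t x M).comp (FreeGroup.map Shiftable.succ) := by
    ext p
    simp only [MonoidHom.comp_apply, FreeGroup.map.of, windowHom_of, Shiftable.incl,
      Shiftable.succ, MulEquiv.coe_toMonoidHom, MulAut.conj_apply]
    group
  rw [← mul_inv_eq_iff_eq_mul]
  exact DFunLike.congr_fun hcomp y

section Lift

variable {Z : Type*} [Group Z] (a : FreeGroup (Window t x M) →* Z) (τ : Z)

open Classical in
/-- The homomorphism with value `τ` at `t` that agrees with `a` on the letters of level zero. -/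
noncomputable def windowLift : FreeGroup X →* Z :=
  FreeGroup.lift fun z => if h : z = t then τ else a (of (Window.zero x M z h))

@[simp] theorem windowLift_of_self : windowLift a τ (of t) = τ := by simp [windowLift]

@[simp] theorem windowLift_of_ne {c : X} (hc : c ≠ t) :
    windowLift a τ (of c) = a (of (Window.zero x M c hc)) := by simp [windowLift, hc]

theorem zpow_mul_zero (h : ∀ p : Shiftable t x M, τ * a (of p.incl) = a (of p.succ) * τ)
    (p : Window t x M) :
    τ ^ p.1.2 * a (of (Window.zero x M p.1.1 p.1.1.2)) = a (of p) * τ ^ p.1.2 := by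
  obtain ⟨⟨c, k⟩, hk⟩ := p
  induction k with
  | zero => simp [Window.zero]
  | succ i ih =>
    have ih' := ih fun hc => by have := hk hc; simp only at this ⊢; omega
    have hstep := h ⟨(c, i), fun hc => by have := hk hc; simp only at this ⊢; omega⟩
    simp only [Shiftable.incl, Shiftable.succ] at hstep ih' ⊢
    rw [zpow_add_one, ← (Commute.self_zpow τ i).eq, mul_assoc, ih', ← mul_assoc, hstep, mul_assoc]
  | pred i ih =>
    have hc : c.1 ≠ x := fun hc => by have := hk hc; simp only at this; omega
    have ih' := ih fun hc' => absurd hc' hc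
    have hstep := h ⟨(c, -i - 1), fun hc' => absurd hc' hc⟩
    simp only [Shiftable.incl, Shiftable.succ, sub_add_cancel] at hstep ih' ⊢
    rw [← mul_right_inj τ, ← mul_assoc, ← zpow_one_add, add_sub_cancel, ih', ← mul_assoc, hstep,
      mul_assoc, ← zpow_one_add, add_sub_cancel]

theorem windowLift_windowHom (h : ∀ p : Shiftable t x M, τ * a (of p.incl) = a (of p.succ) * τ)
    (k : FreeGroup (Window t x M)) : windowLift a τ (windowHom t x M k) = a k := by
  have hcomp : (windowLift a τ).comp (windowHom t x M) = a := by
    ext p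
    rw [MonoidHom.comp_apply, windowHom_of, map_mul, map_mul, map_inv, map_zpow,
      windowLift_of_self, windowLift_of_ne a τ p.1.1.2, zpow_mul_zero a τ h,
      mul_inv_cancel_right]
  exact DFunLike.congr_fun hcomp k

end Lift

variable {htx : x ≠ t} {S : FreeGroup (Window t x M)}
  (hbot : FreiheitssatzAt S (Window.bot htx M)) (htop : FreiheitssatzAt S (Window.top htx M))

/-- The HNN extension of `⟨Window; S⟩` whose stable letter raises the level by one. -/
def windowData : HNNData (nclosure S) (FreeGroup (Shiftable t x M)) where
  lo := FreeGroup.map Shiftable.incl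
  hi := FreeGroup.map Shiftable.succ
  injective_lo :=
    htop.injective_mk_comp_map Shiftable.incl_injective (Window.top_notMem_range_incl htx)
  injective_hi :=
    hbot.injective_mk_comp_map Shiftable.succ_injective (Window.bot_notMem_range_succ htx)

/-- The homomorphism of Moldavanskii from `FreeGroup X` to the HNN extension. -/
noncomputable def toHNN : FreeGroup X →* (windowData hbot htop).Extension :=
  windowLift (windowData hbot htop).toExtension HNNExtension.t

theorem toHNN_windowHom (k : FreeGroup (Window t x M)) :
    toHNN hbot htop (windowHom t x M k) = (windowData hbot htop).toExtension k :=
  windowLift_windowHom _ _ (fun p => (windowData hbot htop).t_mul_lo (of p)) k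

theorem toHNN_eq_one_iff (w : FreeGroup X) :
    toHNN hbot htop w = 1 ↔ w ∈ nclosure (windowHom t x M S) := by
  set R := windowHom t x M S
  constructor
  · intro hw
    let g : FreeGroup (Window t x M) ⧸ nclosure S →* FreeGroup X ⧸ nclosure R :=
      QuotientGroup.map _ _ (windowHom t x M) (nclosure_le (mem_nclosure R))
    let μ : (windowData hbot htop).Extension →* FreeGroup X ⧸ nclosure R :=
      HNNExtension.lift g (QuotientGroup.mk' _ (of t)) <| by
        rintro ⟨_, y, rfl⟩
        refine Eq.trans ?_ (congrArg (fun l => g l.1 * QuotientGroup.mk' _ (of t))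
          ((windowData hbot htop).equiv_lo y)).symm
        exact congrArg (QuotientGroup.mk' _) (of_mul_windowHom_incl y)
    have hcomp : μ.comp (toHNN hbot htop) = QuotientGroup.mk' _ := by
      ext c
      by_cases hc : c = t
      · subst hc
        simp [μ, toHNN]
      · rw [MonoidHom.comp_apply, ← windowHom_zero (M := M) (x := x) hc, toHNN_windowHom]
        exact HNNExtension.lift_of ..
    rw [← QuotientGroup.eq_one_iff]
    exact (DFunLike.congr_fun hcomp w).symm.trans ((congrArg μ hw).trans (map_one μ))
  · refine fun hw => nclosure_le (N := (toHNN hbot htop).ker) ?_ hw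
    rw [MonoidHom.mem_ker, toHNN_windowHom, HNNData.toExtension_eq_one_iff]
    exact mem_nclosure S

include hbot htop in
theorem windowHom_mem_nclosure_iff (k : FreeGroup (Window t x M)) :
    windowHom t x M k ∈ nclosure (windowHom t x M S) ↔ k ∈ nclosure S := by
  rw [← toHNN_eq_one_iff hbot htop, toHNN_windowHom, HNNData.toExtension_eq_one_iff]

include hbot htop in
theorem torsionFreeQuotient_windowHom (hS : TorsionFreeQuotient S) :
    TorsionFreeQuotient (windowHom t x M S) := by
  intro w k hk hw
  rw [← toHNN_eq_one_iff hbot htop] at hw ⊢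
  refine hnnExtension_torsionFree (fun g m hm hg => ?_) _ k hk ((map_pow _ _ _).symm.trans hw)
  obtain ⟨v, rfl⟩ := QuotientGroup.mk'_surjective _ g
  rw [← map_pow, QuotientGroup.mk'_apply, QuotientGroup.eq_one_iff] at hg
  rw [QuotientGroup.mk'_apply, QuotientGroup.eq_one_iff]
  exact hS v m hm hg

theorem expSum_windowHom (k : FreeGroup (Window t x M)) : expSum t (windowHom t x M k) = 1 := by
  have hcomp : (expSum t).comp (windowHom t x M) = 1 := by
    ext p
    simp [windowHom_of, expSum_of_ne p.1.1.2]
  exact DFunLike.congr_fun hcomp k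

variable (t x M) in
open Classical in
/-- The homomorphism that deletes the letters over `x`. -/
noncomputable def windowKill : FreeGroup (LevelLetter t) →* FreeGroup (Window t x M) :=
  FreeGroup.lift fun p => if h : p.1.1 = x then 1 else of ⟨p, fun h' => absurd h' h⟩

include hbot htop in
theorem freiheitssatzAt_windowHom : FreiheitssatzAt (windowHom t x M S) x := by
  intro w hw hwR
  have hexp : expSum t w = 1 :=
    nclosure_le (N := (expSum t).ker) (expSum_windowHom S) hwR
  have hkill : (kill x).comp (levelHom t) = (windowHom t x M).comp (windowKill t x M) := by
    ext p
    by_cases h : p.1.1 = x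
    · simp [windowKill, h, levelHom]
    · simp [windowKill, h, levelHom, windowHom_of, kill_of_ne htx.symm, kill_of_ne h]
  have homits : (kill (Window.bot htx M)).comp (windowKill t x M) = windowKill t x M := by
    ext p
    by_cases h : p.1.1 = x
    · simp [windowKill, h]
    · have hp : p ≠ (⟨x, htx⟩, 0) := by rintro rfl; exact h rfl
      simp [windowKill, h, kill, Window.bot, hp]
  set W := windowKill t x M ((rewriting t w).cocycle 0)
  have hW : windowHom t x M W = w := by
    rw [← hw, ← levelHom_rewriting hexp]
    exact (DFunLike.congr_fun hkill _).symm
  have hW1 : W = 1 := hbot W (DFunLike.congr_fun homits _)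
    ((windowHom_mem_nclosure_iff hbot htop W).1 (by rwa [hW]))
  rw [← hW, hW1, map_one]

include hbot htop in
theorem freiheitssatzAt_windowHom_letter {p : Window t x M} (hp : p.1.2 ≠ 0)
    (hS : FreiheitssatzAt S p) : FreiheitssatzAt (windowHom t x M S) t := by
  intro w hw hwR
  have hkill : (windowHom t x M).comp (windowLift (.id _) 1) = kill t := by
    ext c
    by_cases hc : c = t
    · subst hc
      simp
    · simp [hc, windowHom_zero, kill_of_ne hc]
  have homits : (kill p).comp (windowLift (.id _) 1) = windowLift (.id _) 1 := by
    ext c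
    by_cases hc : c = t
    · subst hc
      simp
    · have hne : Window.zero x M c hc ≠ p := by rintro rfl; exact hp rfl
      simp [hc, kill_of_ne hne]
  set W := windowLift (.id (FreeGroup (Window t x M))) 1 w
  have hW : windowHom t x M W = w := (DFunLike.congr_fun hkill w).trans hw
  have hW1 : W = 1 := hS W (DFunLike.congr_fun homits w)
    ((windowHom_mem_nclosure_iff hbot htop W).1 (by rwa [hW]))
  rw [← hW, hW1, map_one]

section Splitting

open HNNExtension.NormalWord (empty)

variable {Q : Type w} [Group Q] (ψ : nclosure S →* Q)

/-- The action of `FreeGroup X` obtained from those of the window and of the stable letter. -/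
noncomputable def windowAction : FreeGroup X →* (windowData hbot htop).Wreath Q :=
  windowLift ((windowData hbot htop).action ψ) ((windowData hbot htop).letter ψ)

theorem windowAction_windowHom (k : FreeGroup (Window t x M)) :
    windowAction hbot htop ψ (windowHom t x M k) = (windowData hbot htop).action ψ k :=
  windowLift_windowHom _ _ (fun p => (windowData hbot htop).letter_mul_action ψ (of p)) k

theorem windowAction_perm (w : FreeGroup X)
    (q : HNNExtension.NormalWord (windowData hbot htop).transversal) :
    (windowAction hbot htop ψ w).perm q = toHNN hbot htop w • q := by
  have hcomp : WreathProduct.permHom.comp (windowAction hbot htop ψ) =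
      (MulAction.toPermHom _ _).comp (toHNN hbot htop) := by
    refine FreeGroup.ext_hom _ _ fun c => ?_
    simp only [MonoidHom.comp_apply, WreathProduct.permHom_apply]
    by_cases hc : c = t
    · subst hc
      simp [windowAction, toHNN, HNNData.letter]
    · rw [← windowHom_zero (M := M) (x := x) hc, windowAction_windowHom, toHNN_windowHom]
      simp
  exact DFunLike.congr_fun (DFunLike.congr_fun hcomp w) q

theorem windowAction_pow {n : ℕ} (hψ : ∀ k : nclosure S, (k : FreeGroup _) ∈ nclosure (S ^ n) →
    ψ k = 1) : windowAction hbot htop ψ (windowHom t x M S ^ n) = 1 := by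
  have hSn : S ^ n ∈ nclosure S := pow_mem (mem_nclosure S) n
  rw [← map_pow, windowAction_windowHom]
  refine WreathProduct.ext (Equiv.ext fun q => ?_) (funext fun q => ?_)
  · rw [HNNData.action_perm, ((windowData hbot htop).toExtension_eq_one_iff _).2 hSn]
    simp
  · have hmem (g) : g⁻¹ * S ^ n * g ∈ nclosure (S ^ n) := by
      simpa using conj_mem_nclosure (mem_nclosure (S ^ n)) g⁻¹
    rw [HNNData.action_cocycle_of_mem _ _ hSn,
      HNNData.factor_of_mem _ _ (by simpa using conj_mem_nclosure hSn _⁻¹), hψ _ (hmem _), map_one]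
    rfl

/-- The normal form of the image of a word in the HNN extension. -/
noncomputable def normalForm (w : FreeGroup X) :
    HNNExtension.NormalWord (windowData hbot htop).transversal :=
  toHNN hbot htop w • empty

theorem inv_mul_mem_of_normalForm_eq {h h' : FreeGroup X}
    (e : normalForm hbot htop h⁻¹ = normalForm hbot htop h'⁻¹) :
    h⁻¹ * h' ∈ nclosure (windowHom t x M S) := by
  have hprod := congrArg (fun q => q.toReducedWord.prod (windowData hbot htop).equiv) e
  simp only [normalForm, HNNExtension.NormalWord.prod_smul, HNNExtension.NormalWord.prod_empty,
    mul_one] at hprod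
  rw [← toHNN_eq_one_iff hbot htop, map_mul, hprod, map_inv, inv_mul_cancel]

theorem exists_conj_stabilizerHom {n : ℕ} (T : TorsionSplitting n S)
    (hK : ∀ k ∈ nclosure (windowHom t x M S),
      (windowAction hbot htop (QuotientGroup.mk' T.toCoprod.ker) k).perm empty = empty)
    (h : FreeGroup X) :
    ∃ c a, (coprodFlatten n _ T.ι).comp (coprodMap fun _ => QuotientGroup.kerLift T.toCoprod)
      (WreathProduct.stabilizerHom _ _ _ hK ⟨h * windowHom t x M S * h⁻¹,
        conj_mem_nclosure (mem_nclosure _) h⟩) =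
      c * CyclicCoprod.of ((normalForm hbot htop h⁻¹).toList, T.idx
        ((windowData hbot htop).loSection (normalForm hbot htop h⁻¹).head)⁻¹) a * c⁻¹ := by
  rw [WreathProduct.stabilizerHom_conj, windowAction_perm, windowAction_windowHom,
    HNNData.action_cocycle_of_mem _ _ (mem_nclosure S), ← normalForm]
  generalize normalForm hbot htop h⁻¹ = q
  generalize (windowAction hbot htop (QuotientGroup.mk' T.toCoprod.ker) h⁻¹).cocycle empty = v
  set k := (windowData hbot htop).loSection q.head
  have hk : k⁻¹ * S * k ∈ nclosure S := by simpa using conj_mem_nclosure (mem_nclosure S) k⁻¹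
  obtain ⟨c, a, hc⟩ := T.exists_conj k⁻¹
  simp only [inv_inv] at hc
  refine ⟨((coprodFlatten n _ T.ι) (coprodMap (fun _ => QuotientGroup.kerLift T.toCoprod) v))⁻¹ *
    coprodFlatten n _ T.ι (CoprodI.of (M := fun _ => CyclicCoprod n T.ι) (i := q.toList) c), a, ?_⟩
  have hfactor : coprodMap (fun _ => QuotientGroup.kerLift T.toCoprod)
      (HNNData.factor (QuotientGroup.mk' T.toCoprod.ker) q.toList (k⁻¹ * S * k)) =
        CoprodI.of (M := fun _ => CyclicCoprod n T.ι) (i := q.toList)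
          (c * CyclicCoprod.of (T.idx k⁻¹) a * c⁻¹) := by
    rw [HNNData.factor_of_mem _ _ hk, coprodMap_of, ← hc]
    rfl
  simp only [MonoidHom.comp_apply, map_mul, map_inv, hfactor, coprodFlatten_of_of]
  group

variable {ψ} in
theorem eval_windowAction {G : Type*} [Group G] (π : FreeGroup X →* G) {β : Q →* G}
    (hβ : ∀ k, β (ψ k) = π (windowHom t x M k)) (c : X)
    (q : HNNExtension.NormalWord (windowData hbot htop).transversal) (p) :
    (windowData hbot htop).eval (π.comp (windowHom t x M)) (π (of t)) β
        ((windowAction hbot htop ψ (of c)).perm q)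
        ((windowAction hbot htop ψ (of c)).cocycle q * p) =
      π (of c) * (windowData hbot htop).eval (π.comp (windowHom t x M)) (π (of t)) β q p := by
  by_cases hc : c = t
  · subst hc
    rw [windowAction, windowLift_of_self]
    refine HNNData.eval_letter _ hβ (fun y => ?_) q p
    rw [MonoidHom.comp_apply, ← map_mul]
    exact (congrArg π (of_mul_windowHom_incl y)).trans (map_mul π _ _)
  · rw [← windowHom_zero (M := M) (x := x) hc, windowAction_windowHom]
    exact HNNData.eval_action _ hβ _ q p

theorem TorsionSplitting.exists_lift {n : ℕ} (T : TorsionSplitting n S) :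
    ∃ β : nclosure S ⧸ T.toCoprod.ker →* FreeGroup X ⧸ nclosure (windowHom t x M S ^ n),
      ∀ k, β (QuotientGroup.mk' _ k) = QuotientGroup.mk' _ (windowHom t x M k) := by
  let ρ := (QuotientGroup.mk' (nclosure (windowHom t x M S ^ n))).comp (windowHom t x M)
  have hρ : nclosure (S ^ n) ≤ ρ.ker := nclosure_le <| by
    rw [MonoidHom.mem_ker, MonoidHom.comp_apply, map_pow, QuotientGroup.mk'_apply,
      QuotientGroup.eq_one_iff]
    exact mem_nclosure _
  exact ⟨QuotientGroup.lift _ (ρ.comp (nclosure S).subtype) fun k hk =>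
    hρ ((T.toCoprod_eq_one_iff k).1 hk), fun k => QuotientGroup.lift_mk' ..⟩

include hbot htop in
theorem nonempty_torsionSplitting_windowHom {n : ℕ} (T : TorsionSplitting n S) :
    Nonempty (TorsionSplitting n (windowHom t x M S)) := by
  let ψ := QuotientGroup.mk' T.toCoprod.ker
  obtain ⟨β, hβ⟩ := T.exists_lift
  have hK : ∀ k ∈ nclosure (windowHom t x M S), (windowAction hbot htop ψ k).perm empty = empty :=
    fun k hk => by rw [windowAction_perm, (toHNN_eq_one_iff hbot htop k).2 hk, one_smul]
  have hN : nclosure (windowHom t x M S ^ n) ≤ (windowAction hbot htop ψ).ker :=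
    nclosure_le <| windowAction_pow hbot htop ψ fun k hk =>
      (QuotientGroup.eq_one_iff k).2 ((T.toCoprod_eq_one_iff k).2 hk)
  have hinj : Function.Injective ((coprodFlatten n (List (ℤˣ × _ ⧸ nclosure S)) T.ι).comp
      (coprodMap fun _ => QuotientGroup.kerLift T.toCoprod)) :=
    (coprodFlatten_injective _ _ _).comp
      (coprodMap_injective fun _ => QuotientGroup.kerLift_injective _)
  exact ⟨{
    ι := List (ℤˣ × _ ⧸ nclosure S) × T.ι
    idx h := ((normalForm hbot htop h⁻¹).toList,
      T.idx ((windowData hbot htop).loSection (normalForm hbot htop h⁻¹).head)⁻¹)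
    toCoprod := ((coprodFlatten n _ T.ι).comp
      (coprodMap fun _ => QuotientGroup.kerLift T.toCoprod)).comp
        (WreathProduct.stabilizerHom _ _ _ hK)
    inv_mul_mem h h' e := by
      have hhead := T.inv_mul_mem _ _ (Prod.ext_iff.1 e).2
      rw [inv_inv, ← QuotientGroup.eq_one_iff, QuotientGroup.mk_mul, QuotientGroup.mk_inv,
        HNNData.mk_loSection, HNNData.mk_loSection, mul_inv_eq_one] at hhead
      exact inv_mul_mem_of_normalForm_eq hbot htop
        (HNNExtension.NormalWord.ext hhead (Prod.ext_iff.1 e).1)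
    toCoprod_eq_one_iff k := (map_eq_one_iff _ hinj).trans
      (WreathProduct.stabilizerHom_eq_one_iff _ _ hK hN _
        (eval_windowAction hbot htop (QuotientGroup.mk' _) hβ) k)
    exists_conj := exists_conj_stabilizerHom hbot htop T hK }⟩

end Splitting

end Window

/-! ### The induction -/

section Induction

variable {X : Type u} {n : ℕ} {R : FreeGroup X}

theorem magnusProperties_of_expSum_eq_one {t x : X} (htx : x ≠ t) (hR : NotProperPow R)
    (hexp : expSum t R = 1) (hx : Essential R x)
    (ih : ∀ (Y : Type u) (S : FreeGroup Y),
      wordLength S ≤ wordLength ((rewriting t R).cocycle 0) → NotProperPow S →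
        MagnusProperties n S) :
    FreiheitssatzAt R x ∧ TorsionFreeQuotient R ∧ Nonempty (TorsionSplitting n R) ∧
      (Essential R t → FreiheitssatzAt R t) := by
  obtain ⟨M, S, hlen, hmin, hbot, htop, g, hg⟩ := exists_window_relator htx hexp hx
  have hS := ih _ S hlen (.of_map (f := windowHom t x M) (hg ▸ hR.conj g))
  have fbot := hS.freiheitssatz _ (hmin.essential hbot)
  have ftop := hS.freiheitssatz _ (hmin.essential htop)
  obtain ⟨T⟩ := hS.splitting
  have hx' := freiheitssatzAt_windowHom fbot ftop
  have htf := torsionFreeQuotient_windowHom fbot ftop hS.torsionFree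
  obtain ⟨T'⟩ := nonempty_torsionSplitting_windowHom fbot ftop T
  rw [hg] at hx' htf T'
  refine ⟨hx'.of_conj g, htf.of_conj g, ⟨T'.ofConj g⟩, fun ht => ?_⟩
  obtain ⟨p, hp, hpS⟩ := exists_level_ne_zero (hg ▸ ht g)
  have ht' := freiheitssatzAt_windowHom_letter fbot ftop hp
    (hS.freiheitssatz p (hmin.essential hpS))
  rw [hg] at ht'
  exact ht'.of_conj g

theorem rewriting_zpow_cocycle (t : X) (m k : ℤ) : (rewriting t (of t ^ m)).cocycle k = 1 := by
  have hnat (m : ℕ) : ∀ k, (rewriting t (of t ^ m)).cocycle k = 1 := by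
    induction m with
    | zero => simp
    | succ m ih =>
      intro k
      rw [pow_succ, map_mul, WreathProduct.mul_cocycle, ih]
      simp
  obtain ⟨m, rfl | rfl⟩ := m.eq_nat_or_neg
  · rw [zpow_natCast, hnat]
  · rw [zpow_neg, zpow_natCast, map_inv, WreathProduct.inv_cocycle, hnat, inv_one]

theorem wordLength_rewriting_le (t : X) (w : FreeGroup X) (k : ℤ) :
    wordLength ((rewriting t w).cocycle k) ≤ letterCount t w := by
  refine wordLength_cocycle_le (rewriting t) (fun a q => ?_) w k
  by_cases h : a = t
  · simp [h]
  · simp [rewriting_of_ne h, h]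

theorem wordLength_rewriting_magnusSubst_le {t b : X} (hbt : b ≠ t) (m : ℕ) (a : ℤ)
    (w : FreeGroup X) (k : ℤ) :
    wordLength ((rewriting t (magnusSubst t b m a w)).cocycle k) ≤ letterCount t w := by
  refine wordLength_cocycle_le ((rewriting t).comp (magnusSubst t b m a)) (fun z q => ?_) w k
  rw [MonoidHom.comp_apply]
  by_cases h : z = t
  · rw [h, magnusSubst_of_self, ← zpow_natCast, rewriting_zpow_cocycle, wordLength_one]
    exact Nat.zero_le _
  · by_cases hb : z = b
    · rw [hb, magnusSubst_of_right m a hbt, map_mul, WreathProduct.mul_cocycle,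
        rewriting_zpow_cocycle, rewriting_of_ne hbt]
      simp [hbt]
    · simp [magnusSubst_of_ne t b m a h hb, rewriting_of_ne h, h]

theorem magnusProperties_of_expSum_ne_one {t b : X} (hbt : b ≠ t) (hR : NotProperPow R)
    (hb : expSum b R ≠ 1)
    (ih : ∀ (Y : Type u) (S : FreeGroup Y), wordLength S ≤ letterCount t R → NotProperPow S →
      MagnusProperties n S) :
    FreiheitssatzAt R b ∧ TorsionFreeQuotient R ∧ Nonempty (TorsionSplitting n R) := by
  set β := toAdd (expSum b R)
  set m := β.natAbs
  set a := toAdd (expSum t R) * β.sign with ha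
  have hm : m ≠ 0 := Int.natAbs_ne_zero.2 hb
  have hexp : expSum t (magnusSubst t b m a R) = 1 := by
    rw [expSum_left_magnusSubst m a hbt]
    apply Multiplicative.toAdd.injective
    simp only [toAdd_mul, toAdd_pow, toAdd_zpow, toAdd_one, smul_eq_mul, nsmul_eq_mul]
    rw [ha, Int.natCast_natAbs]
    linear_combination -toAdd (expSum t R) * Int.sign_mul_self_eq_abs β
  have hess : Essential (magnusSubst t b m a R) b :=
    essential_of_expSum_ne_one (by rwa [expSum_right_magnusSubst m a hbt])
  obtain ⟨hF, hT, ⟨T⟩, -⟩ := magnusProperties_of_expSum_eq_one hbt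
    (hR.map_magnusSubst a hbt hm hexp) hexp hess fun Y S hS =>
      ih Y S (hS.trans (wordLength_rewriting_magnusSubst_le hbt m a R 0))
  exact ⟨hF.of_magnusSubst a hbt hm hexp, hT.of_magnusSubst a hbt hm hexp,
    nonempty_torsionSplitting_of_magnusSubst a hbt hm hexp T⟩

theorem magnusProperties_of_forall_omits {t : X} (hR : NotProperPow R)
    (h : ∀ y ≠ t, Omits R y) : MagnusProperties n R := by
  have hpow : R = of t ^ toAdd (expSum t R) := by
    refine map_eq_of_not_omits (f := MonoidHom.id _)
      (g := (zpowersHom (FreeGroup X) (of t)).comp (expSum t)) fun y hy => ?_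
    obtain rfl : y = t := by_contra fun hyt => hy (h y hyt)
    simp
  have hone {g : FreeGroup X} {k : ℕ} (e : R = g ^ k) : R = g := by
    have hk : k ≠ 0 := by rintro rfl; exact hR.ne_one e
    rwa [hR g k (Nat.one_le_iff_ne_zero.2 hk) e, pow_one] at e
  obtain ⟨k, hk | hk⟩ := (toAdd (expSum t R)).eq_nat_or_neg
  · rw [hk, zpow_natCast] at hpow
    rw [hone hpow]
    exact magnusProperties_of n t
  · rw [hk, zpow_neg, zpow_natCast, ← inv_pow] at hpow
    rw [hone hpow]
    exact MagnusProperties.of_inv (by rw [inv_inv]; exact magnusProperties_of n t)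

theorem IsConjMinimal.magnusProperties (hmin : IsConjMinimal R) (hR : NotProperPow R)
    (ih : ∀ (Y : Type u) (S : FreeGroup Y), wordLength S < wordLength R → NotProperPow S →
      MagnusProperties n S) : MagnusProperties n R := by
  have hlt {t : X} (ht : Essential R t) : letterCount t R < wordLength R :=
    letterCount_lt (by simpa using ht 1)
  obtain ⟨t, ht⟩ : ∃ t, Essential R t := by
    by_contra! hc
    exact hR.ne_one (eq_one_of_omits fun y => by_contra fun hy => hc y (hmin.essential hy))
  by_cases hone : ∀ x ≠ t, ¬ Essential R x
  · exact magnusProperties_of_forall_omits hR fun y hy =>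
      by_contra fun hy' => hone y hy (hmin.essential hy')
  push Not at hone
  obtain ⟨x, hxt, hx⟩ := hone
  have hother (s : X) : ∃ y, y ≠ s ∧ Essential R y := by
    by_cases hs : x = s
    · exact ⟨t, hs ▸ hxt.symm, ht⟩
    · exact ⟨x, hs, hx⟩
  by_cases hzero : ∃ s, Essential R s ∧ expSum s R = 1
  · obtain ⟨s, hs, hexp⟩ := hzero
    have key {y : X} (hys : y ≠ s) (hy : Essential R y) :=
      magnusProperties_of_expSum_eq_one (n := n) hys hR hexp hy fun Y S hS =>
        ih Y S (hS.trans_lt ((wordLength_rewriting_le s R 0).trans_lt (hlt hs)))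
    obtain ⟨y, hys, hy⟩ := hother s
    refine ⟨fun z hz => ?_, (key hys hy).2.1, (key hys hy).2.2.1⟩
    by_cases hzs : z = s
    · subst hzs
      exact (key hys hy).2.2.2 hz
    · exact (key hzs hz).1
  · push Not at hzero
    have key {b s : X} (hbs : b ≠ s) (hb : Essential R b) (hs : Essential R s) :=
      magnusProperties_of_expSum_ne_one (n := n) hbs hR (hzero b hb) fun Y S hS =>
        ih Y S (hS.trans_lt (hlt hs))
    refine ⟨fun z hz => ?_, (key hxt hx ht).2.1, (key hxt hx ht).2.2⟩
    obtain ⟨y, hyz, hy⟩ := hother z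
    exact (key hyz.symm hz hy).1

/-- The theorems of Magnus (Freiheitssatz), Karrass–Magnus–Solitar (torsion) and
Fischer–Karrass–Solitar (the kernel of `⟨X; Rⁿ⟩ → ⟨X; R⟩`). -/
theorem NotProperPow.magnusProperties (n : ℕ) (hR : NotProperPow R) : MagnusProperties n R := by
  induction h : wordLength R using Nat.strong_induction_on generalizing X with
  | _ k ih =>
    obtain ⟨g, hg⟩ := exists_isConjMinimal R
    refine .of_conj g (hg.magnusProperties (hR.conj g) fun Y S hS hS' => ih _ ?_ hS' rfl)
    exact h ▸ hS.trans_le (by simpa [mul_assoc] using hg g⁻¹)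

end Induction

/-! ### Orbit sums and Fox derivatives -/

section OrbitSum

variable {Q M : Type*} [Group Q] [AddCommGroup M]

attribute [local instance] Finsupp.comapDistribMulAction

open Classical in
/-- The sum of the values of a finitely supported function over the orbit `{zᵐ q | m : ℤ}`. -/
noncomputable def orbitSum (z q : Q) : (Q →₀ M) →+ M :=
  Finsupp.liftAddHom fun p => if p ∈ MulAction.orbit (Subgroup.zpowers z) q then .id M else 0

theorem mem_orbit_zpowers {z p q : Q} :
    p ∈ MulAction.orbit (Subgroup.zpowers z) q ↔ ∃ m : ℤ, z ^ m * q = p := by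
  simp [MulAction.mem_orbit_iff, Subgroup.smul_def]

open Classical in
theorem orbitSum_single (z q p : Q) (m : M) :
    orbitSum z q (Finsupp.single p m) = if ∃ k : ℤ, z ^ k * q = p then m else 0 := by
  rw [orbitSum, Finsupp.liftAddHom_apply_single]
  simp only [mem_orbit_zpowers]
  split_ifs <;> rfl

theorem orbitSum_congr {z z' q q' g : Q}
    (h : ∀ p, (∃ k : ℤ, z' ^ k * q' = g * p) ↔ ∃ k : ℤ, z ^ k * q = p) (f : Q →₀ M) :
    orbitSum z' q' (g • f) = orbitSum z q f := by
  suffices (orbitSum z' q').comp (DistribSMul.toAddMonoidHom _ g) = orbitSum (M := M) z q from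
    DFunLike.congr_fun this f
  classical
  ext p m
  simpa [orbitSum_single] using if_congr (h p) rfl rfl

theorem orbitSum_smul_self (z q : Q) (f : Q →₀ M) : orbitSum z q (z • f) = orbitSum z q f := by
  refine orbitSum_congr (fun p => ⟨?_, ?_⟩) f
  · rintro ⟨k, hk⟩
    exact ⟨k - 1, by rw [sub_eq_neg_add, zpow_add, mul_assoc, hk]; simp⟩
  · rintro ⟨k, rfl⟩
    exact ⟨k + 1, by rw [add_comm, zpow_add, zpow_one, mul_assoc]⟩

theorem orbitSum_inv (z q : Q) (f : Q →₀ M) : orbitSum z⁻¹ q f = orbitSum z q f := by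
  conv_lhs => rw [← one_smul Q f]
  refine orbitSum_congr (fun p => ?_) f
  rw [one_mul]
  exact (Equiv.neg ℤ).exists_congr fun k => by simp [inv_zpow']

theorem orbitSum_inv_smul (z q x : Q) (f : Q →₀ M) :
    orbitSum (x⁻¹ * z * x) q (x⁻¹ • f) = orbitSum z (x * q) f := by
  refine orbitSum_congr (fun p => exists_congr fun k => ?_) f
  have := conj_zpow (i := k) (a := x⁻¹) (b := z)
  rw [inv_inv] at this
  rw [this, mul_assoc, mul_assoc, mul_right_inj]

theorem sum_orbitSum_pow {z : Q} (hz : ¬ IsOfFinOrder z) (q : Q) {i : ℕ} (hi : i ≠ 0)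
    (f : Q →₀ M) :
    ∑ k ∈ Finset.range i, orbitSum (z ^ i) q (z ^ k • f) = orbitSum z q f := by
  suffices ∑ k ∈ Finset.range i, (orbitSum (z ^ i) q).comp
      (DistribSMul.toAddMonoidHom _ (z ^ k)) = orbitSum (M := M) z q by
    simpa using DFunLike.congr_fun this f
  have hinj := injective_zpow_iff_not_isOfFinOrder.2 hz
  have hi' : (i : ℤ) ≠ 0 := Nat.cast_ne_zero.2 hi
  ext p m
  simp only [AddMonoidHom.comp_apply, Finsupp.singleAddHom_apply, AddMonoidHom.finsetSum_apply,
    DistribSMul.toAddMonoidHom_apply, Finsupp.comapSMul_single, smul_eq_mul, orbitSum_single]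
  split_ifs with hp
  · obtain ⟨l, rfl⟩ := hp
    have key (k : ℕ) : (∃ a : ℤ, (z ^ i) ^ a * q = z ^ k * (z ^ l * q)) ↔ (i : ℤ) ∣ k + l := by
      refine exists_congr fun a => ?_
      rw [← mul_assoc, mul_left_inj, ← zpow_natCast z i, ← zpow_natCast z k, ← zpow_mul,
        ← zpow_add, hinj.eq_iff, eq_comm]
    have hmod : ((-l % i).toNat : ℤ) = -l % i := Int.toNat_of_nonneg (Int.emod_nonneg _ hi')
    have hlt := Int.emod_lt_of_pos (-l) (show (0 : ℤ) < i by lia)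
    simp only [key]
    rw [Finset.sum_eq_single_of_mem (-l % i).toNat (Finset.mem_range.2 (by lia)), if_pos]
    · rw [hmod]
      exact ⟨-(-l / i), by linarith [Int.emod_add_mul_ediv (-l) i]⟩
    · refine fun k hk hne => if_neg fun hdvd => hne ?_
      have := Int.emod_emod_of_dvd (-l) (dvd_refl (i : ℤ))
      have hkl : (k : ℤ) % i = -l % i :=
        Int.emod_eq_emod_iff_emod_sub_eq_zero.2 (Int.emod_eq_zero_of_dvd (by simpa using hdvd))
      rw [Int.emod_eq_of_lt (by lia) (by simpa using hk)] at hkl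
      lia
  · refine Finset.sum_eq_zero fun k _ => if_neg fun ⟨a, ha⟩ => hp ⟨i * a - k, ?_⟩
    rw [← inv_mul_eq_iff_eq_mul, ← mul_assoc, ← zpow_natCast, ← zpow_natCast, ← zpow_mul,
      ← zpow_neg, ← zpow_add, neg_add_eq_sub] at ha
    exact ha

theorem exists_apply_ne_zero_of_orbitSum_ne_zero {z q : Q} {f : Q →₀ M}
    (h : orbitSum z q f ≠ 0) : ∃ m : ℤ, f (z ^ m * q) ≠ 0 := by
  contrapose! h
  rw [orbitSum, Finsupp.liftAddHom_apply]
  refine Finset.sum_eq_zero fun p hp => ?_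
  suffices p ∉ MulAction.orbit (Subgroup.zpowers z) q by simp [this]
  rintro hpq
  obtain ⟨m, rfl⟩ := mem_orbit_zpowers.1 hpq
  exact Finsupp.mem_support_iff.1 hp (h m)

theorem map_eq_zero_of_orbitSum_eq_zero {A : Type*} [AddCommMonoid A] {z : Q} {f : Q →₀ M}
    (h : ∀ q, orbitSum z q f = 0) (Φ : (Q →₀ M) →+ A) (hΦ : ∀ g, Φ (z • g) = Φ g) : Φ f = 0 := by
  let mk : Q → MulAction.orbitRel.Quotient (Subgroup.zpowers z) Q := Quotient.mk''
  have hmk : Finsupp.mapDomain mk f = 0 := by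
    ext b
    obtain ⟨q, rfl⟩ := Quotient.mk''_surjective b
    refine Eq.trans ?_ (h q)
    suffices (Finsupp.applyAddHom (mk q)).comp (Finsupp.mapDomain.addMonoidHom mk) =
      orbitSum (M := M) z q from DFunLike.congr_fun this f
    classical
    ext p m
    have hpq : mk p = mk q ↔ ∃ k : ℤ, z ^ k * q = p := by
      rw [Quotient.eq'', MulAction.orbitRel_apply, mem_orbit_zpowers]
    simpa [Finsupp.mapDomain.addMonoidHom, Finsupp.single_apply, orbitSum_single]
      using if_congr hpq rfl rfl
  have hpow (k : ℤ) (g : Q →₀ M) : Φ (z ^ k • g) = Φ g := by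
    induction k generalizing g with
    | zero => simp
    | succ k ih => rw [zpow_add_one, mul_smul, ih, hΦ]
    | pred k ih => rw [zpow_sub_one, mul_smul, ih, ← hΦ, smul_inv_smul]
  have hout : Φ = Φ.comp ((Finsupp.mapDomain.addMonoidHom Quotient.out).comp
      (Finsupp.mapDomain.addMonoidHom mk)) := by
    ext q m
    obtain ⟨k, hk⟩ := mem_orbit_zpowers.1 (MulAction.orbitRel_apply.1 (Quotient.mk_out q))
    replace hk : z ^ k * q = (mk q).out := hk
    simp [Finsupp.mapDomain.addMonoidHom, ← hk, ← hpow k (.single q m)]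
  rw [hout]
  simp [Finsupp.mapDomain.addMonoidHom, hmk]

theorem exists_map_mul_eq_add_one {z : Q} (hz : ¬ IsOfFinOrder z) :
    ∃ f : Q → ℤ, ∀ q, f (z * q) = f q + 1 := by
  obtain ⟨T, hT, -⟩ := (Subgroup.zpowers z).exists_isComplement_right 1
  choose log hlog using fun h : Subgroup.zpowers z => h.2
  refine ⟨fun q => log (hT.equiv q).1, fun q => ?_⟩
  apply injective_zpow_iff_not_isOfFinOrder.2 hz
  simp only at hlog ⊢
  rw [hT.equiv_mul_left_of_mem (Subgroup.mem_zpowers z), hlog, add_comm, zpow_one_add, hlog]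
  rfl

end OrbitSum

section PowerCommensurator

variable {G H : Type*} [Group G] [Group H]

theorem conj_zpow_mul {g y : G} {i j : ℤ} (h : g⁻¹ * y ^ i * g = y ^ j) (k : ℤ) :
    g⁻¹ * y ^ (i * k) * g = y ^ (j * k) := by
  have := conj_zpow (i := k) (a := g⁻¹) (b := y ^ i)
  rw [inv_inv, h] at this
  rw [zpow_mul, zpow_mul, this]

/-- The subgroup of those `g` which conjugate some nontrivial power of `y` (in the sense of a
nonzero exponent) to another one. -/
def powerCommensurator (y : G) : Subgroup G where
  carrier := {g | ∃ i j : ℤ, i ≠ 0 ∧ j ≠ 0 ∧ g⁻¹ * y ^ i * g = y ^ j}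
  one_mem' := ⟨1, 1, one_ne_zero, one_ne_zero, by simp⟩
  mul_mem' := by
    rintro a b ⟨i, j, hi, hj, h⟩ ⟨k, l, hk, hl, h'⟩
    refine ⟨i * k, l * j, mul_ne_zero hi hk, mul_ne_zero hl hj, ?_⟩
    rw [← conj_zpow_mul h', mul_comm k, ← conj_zpow_mul h]
    group
  inv_mem' := by
    rintro a ⟨i, j, hi, hj, h⟩
    exact ⟨j, i, hj, hi, by rw [← h]; group⟩

theorem self_mem_powerCommensurator (y : G) : y ∈ powerCommensurator y :=
  ⟨1, 1, one_ne_zero, one_ne_zero, by simp⟩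

theorem map_mem_powerCommensurator (f : G →* H) {y g : G} (hg : g ∈ powerCommensurator y) :
    f g ∈ powerCommensurator (f y) := by
  obtain ⟨i, j, hi, hj, h⟩ := hg
  exact ⟨i, j, hi, hj, by simpa using congrArg f h⟩

end PowerCommensurator

section RestrictedWreathProduct

attribute [local instance] Finsupp.comapDistribMulAction

/-- The restricted wreath product `M ≀ Q` of an additive group `M` by `Q`; its first component
is a finitely supported function `Q →₀ M`. -/
abbrev RestrictedWreathProduct (M Q : Type*) [AddCommGroup M] [Group Q] : Type _ :=
  Multiplicative (Q →₀ M) ⋊[(MulAutMultiplicative (Q →₀ M)).symm.toMonoidHom.comp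
    (DistribMulAction.toAddAut Q (Q →₀ M))] Q

variable {Q M : Type*} [Group Q] [AddCommGroup M]

namespace RestrictedWreathProduct

/-- If an element is thought of as a path in a Cayley graph of `Q`, this is the homology class
of the loop it defines on the quotient by the translation `w.right`. -/
noncomputable def loopSum (w : RestrictedWreathProduct M Q) (q : Q) : M :=
  orbitSum w.right q (toAdd w.left)

theorem toAdd_mul_left (w x : RestrictedWreathProduct M Q) :
    toAdd (w * x).left = toAdd w.left + w.right • toAdd x.left := rfl

theorem toAdd_inv_left (w : RestrictedWreathProduct M Q) :
    toAdd w⁻¹.left = -(w.right⁻¹ • toAdd w.left) := by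
  rw [← smul_neg]
  rfl

theorem toAdd_pow_left (w : RestrictedWreathProduct M Q) (i : ℕ) :
    toAdd (w ^ i).left = ∑ k ∈ Finset.range i, w.right ^ k • toAdd w.left := by
  have hr (k : ℕ) : (w ^ k).right = w.right ^ k := map_pow SemidirectProduct.rightHom w k
  induction i with
  | zero => simp
  | succ i ih => rw [pow_succ, toAdd_mul_left, ih, Finset.sum_range_succ, hr]

theorem loopSum_inv (w : RestrictedWreathProduct M Q) (q : Q) : loopSum w⁻¹ q = -loopSum w q := by
  rw [loopSum, toAdd_inv_left, map_neg, SemidirectProduct.inv_right, orbitSum_smul_self,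
    orbitSum_inv, loopSum]

theorem loopSum_pow {w : RestrictedWreathProduct M Q} (hw : ¬ IsOfFinOrder w.right) (q : Q)
    {i : ℕ} (hi : i ≠ 0) : loopSum (w ^ i) q = loopSum w q := by
  have hr : (w ^ i).right = w.right ^ i := map_pow SemidirectProduct.rightHom w i
  rw [loopSum, toAdd_pow_left, map_sum, hr, sum_orbitSum_pow hw q hi, loopSum]

theorem loopSum_zpow_ne_zero_iff {w : RestrictedWreathProduct M Q} (hw : ¬ IsOfFinOrder w.right)
    (q : Q) {i : ℤ} (hi : i ≠ 0) : loopSum (w ^ i) q ≠ 0 ↔ loopSum w q ≠ 0 := by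
  obtain ⟨k, rfl | rfl⟩ := i.eq_nat_or_neg
  · rw [zpow_natCast, loopSum_pow hw q (by lia)]
  · rw [zpow_neg, zpow_natCast, loopSum_inv, loopSum_pow hw q (by lia), neg_ne_zero]

theorem loopSum_inv_mul_mul (w x : RestrictedWreathProduct M Q) (q : Q) :
    loopSum (x⁻¹ * w * x) q = loopSum w (x.right * q) := by
  have hleft : toAdd (x⁻¹ * w * x).left = x.right⁻¹ • toAdd w.left +
      ((x⁻¹ * w * x).right • x.right⁻¹ • toAdd x.left - x.right⁻¹ • toAdd x.left) := by
    simp only [toAdd_mul_left, toAdd_inv_left, SemidirectProduct.mul_right,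
      SemidirectProduct.inv_right, smul_smul, mul_inv_cancel_right]
    abel
  rw [loopSum, hleft, map_add, map_sub, orbitSum_smul_self, sub_self, add_zero]
  exact orbitSum_inv_smul _ _ _ _

theorem exists_finite_cover_of_le_powerCommensurator {y : RestrictedWreathProduct M Q}
    (hy : ¬ IsOfFinOrder y.right) {q : Q} (hq : loopSum y q ≠ 0) :
    ∃ B : Set Q, B.Finite ∧ ∀ x ∈ powerCommensurator y, ∃ m : ℤ, y.right ^ m * x.right ∈ B := by
  refine ⟨(· * q⁻¹) '' (toAdd y.left).support, (Finset.finite_toSet _).image _, ?_⟩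
  rintro x ⟨i, j, hi, hj, h⟩
  have hx : loopSum y (x.right * q) ≠ 0 := by
    rwa [← loopSum_zpow_ne_zero_iff hy _ hi, ← loopSum_inv_mul_mul, h,
      loopSum_zpow_ne_zero_iff hy _ hj]
  obtain ⟨m, hm⟩ := exists_apply_ne_zero_of_orbitSum_ne_zero hx
  exact ⟨m, _, Finset.mem_coe.2 (Finsupp.mem_support_iff.2 hm), by simp [mul_assoc]⟩

end RestrictedWreathProduct

section FoxCalculus

open RestrictedWreathProduct

variable {X : Type*} {n : ℕ}

/-- The homomorphism collecting the Fox derivatives mod `n` of a word, evaluated in `Q`. -/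
noncomputable def foxHom (n : ℕ) (s : X → Q) :
    FreeGroup X →* RestrictedWreathProduct (X →₀ ZMod n) Q :=
  FreeGroup.lift fun a => ⟨ofAdd (.single 1 (.single a 1)), s a⟩

theorem foxHom_of (n : ℕ) (s : X → Q) (a : X) :
    foxHom n s (of a) = ⟨ofAdd (.single 1 (.single a 1)), s a⟩ := FreeGroup.lift_apply_of

theorem foxHom_right (s : X → Q) (w : FreeGroup X) :
    (foxHom n s w).right = FreeGroup.lift s w := by
  suffices SemidirectProduct.rightHom.comp (foxHom n s) = FreeGroup.lift s from
    DFunLike.congr_fun this w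
  ext a
  rw [MonoidHom.comp_apply, foxHom_of, FreeGroup.lift_apply_of]
  rfl

theorem foxHom_pow_eq_one (n : ℕ) {s : X → Q} {w : FreeGroup X} (hw : FreeGroup.lift s w = 1) :
    foxHom n s (w ^ n) = 1 := by
  have hr : (foxHom n s w).right = 1 := by rw [foxHom_right, hw]
  rw [map_pow]
  refine SemidirectProduct.ext (toAdd.injective ?_) ?_
  · rw [toAdd_pow_left, hr]
    ext
    simp
  · rw [← map_pow, foxHom_right, map_pow, hw, one_pow]
    rfl

/-- The pairing of a chain on the Cayley graph with the coboundary of `f`. -/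
noncomputable def coboundaryPairing (s : X → Q) (f : Q → ZMod n) :
    (Q →₀ X →₀ ZMod n) →+ ZMod n :=
  Finsupp.liftAddHom fun q => Finsupp.liftAddHom fun a => .mulRight (f (q * s a) - f q)

theorem coboundaryPairing_single (s : X → Q) (f : Q → ZMod n) (q : Q) (a : X) (c : ZMod n) :
    coboundaryPairing s f (.single q (.single a c)) = c * (f (q * s a) - f q) := by
  rw [coboundaryPairing, Finsupp.liftAddHom_apply_single, Finsupp.liftAddHom_apply_single]
  rfl

theorem coboundaryPairing_smul (s : X → Q) (f : Q → ZMod n) (g : Q) (u : Q →₀ X →₀ ZMod n) :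
    coboundaryPairing s f (g • u) = coboundaryPairing s (fun q => f (g * q)) u := by
  suffices (coboundaryPairing s f).comp (DistribSMul.toAddMonoidHom _ g) =
      coboundaryPairing s fun q => f (g * q) from DFunLike.congr_fun this u
  ext q a : 4
  simp [coboundaryPairing_single, mul_assoc]

theorem coboundaryPairing_foxHom (s : X → Q) (f : Q → ZMod n) (w : FreeGroup X) :
    coboundaryPairing s f (toAdd (foxHom n s w).left) = f (FreeGroup.lift s w) - f 1 := by
  induction w using FreeGroup.induction_on generalizing f with
  | C1 => simp
  | of a => simp only [foxHom_of, toAdd_ofAdd, coboundaryPairing_single, FreeGroup.lift_apply_of,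
      one_mul]
  | inv_of a h =>
    rw [map_inv, toAdd_inv_left]
    refine (map_neg (coboundaryPairing s f) _).trans ?_
    rw [coboundaryPairing_smul, h, foxHom_right]
    simp
  | mul a b ha hb =>
    rw [map_mul, toAdd_mul_left, map_add, coboundaryPairing_smul, ha, hb, foxHom_right]
    simp

theorem exists_loopSum_foxHom_ne_zero (hn : 1 < n) {s : X → Q} {w : FreeGroup X}
    (hw : ¬ IsOfFinOrder (FreeGroup.lift s w)) : ∃ q, loopSum (foxHom n s w) q ≠ 0 := by
  have : Fact (1 < n) := ⟨hn⟩
  obtain ⟨f, hf⟩ := exists_map_mul_eq_add_one hw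
  by_contra! hc
  simp only [loopSum, foxHom_right] at hc
  have hzero := map_eq_zero_of_orbitSum_eq_zero hc (coboundaryPairing s fun q => (f q : ZMod n))
    fun u => by
      rw [coboundaryPairing_smul]
      congr 1
      ext q a : 4
      simp [coboundaryPairing_single, hf]
  rw [coboundaryPairing_foxHom, ← mul_one (FreeGroup.lift s w), hf] at hzero
  simp at hzero

end FoxCalculus

end RestrictedWreathProduct

section VirtuallyCyclic

variable {A : Type*} [Group A]

theorem finiteIndex_zpowers_of_finite_cover {z : A} {B : Set A} (hB : B.Finite)
    (h : ∀ a, ∃ m : ℤ, z ^ m * a ∈ B) : (Subgroup.zpowers z).FiniteIndex := by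
  have := hB.to_subtype
  have hsurj : Function.Surjective
      fun b : B => (QuotientGroup.mk (b : A)⁻¹ : A ⧸ Subgroup.zpowers z) := by
    intro q
    obtain ⟨a, rfl⟩ := QuotientGroup.mk_surjective q
    obtain ⟨m, hm⟩ := h a⁻¹
    exact ⟨⟨_, hm⟩, QuotientGroup.eq.2 ⟨m, by simp⟩⟩
  have := Finite.of_surjective _ hsurj
  exact Subgroup.finiteIndex_of_finite_quotient

theorem zpow_injective_of_torsionFree (htf : ∀ (a : A) (k : ℕ), k ≠ 0 → a ^ k = 1 → a = 1) {g : A}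
    (hg : g ≠ 1) : Function.Injective fun m : ℤ => g ^ m := by
  rw [injective_zpow_iff_not_isOfFinOrder, isOfFinOrder_iff_pow_eq_one]
  exact fun ⟨k, hk, h⟩ => hg (htf g k hk.ne' h)

theorem conj_eq_or_eq_inv_of_normal_zpowers {g : A} (hg : ¬ IsOfFinOrder g)
    [(Subgroup.zpowers g).Normal] (a : A) : a * g * a⁻¹ = g ∨ a * g * a⁻¹ = g⁻¹ := by
  have hmem (b : A) : ∃ k : ℤ, g ^ k = b * g * b⁻¹ :=
    Subgroup.Normal.conj_mem ‹_› g (Subgroup.mem_zpowers g) b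
  obtain ⟨k, hk⟩ := hmem a
  obtain ⟨l, hl⟩ := hmem a⁻¹
  have hkl : k * l = 1 := injective_zpow_iff_not_isOfFinOrder.2 hg <| by
    simp only
    rw [zpow_mul, hk, conj_zpow, hl]
    group
  rw [← hk]
  obtain ⟨rfl, -⟩ | ⟨rfl, -⟩ := Int.eq_one_or_neg_one_of_mul_eq_one' hkl
  · exact .inl (zpow_one g)
  · exact .inr (zpow_neg_one g)

theorem le_center_of_normal_of_torsionFree
    (htf : ∀ (a : A) (k : ℕ), k ≠ 0 → a ^ k = 1 → a = 1) (N : Subgroup A) [N.Normal]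
    [N.FiniteIndex] [IsCyclic N] : N ≤ Subgroup.center A := by
  obtain ⟨g, rfl⟩ := N.isCyclic_iff_exists_zpowers_eq_top.1 inferInstance
  rw [Subgroup.zpowers_le, Subgroup.mem_center_iff]
  intro a
  by_cases hg : g = 1
  · simp [hg]
  have hinj := zpow_injective_of_torsionFree htf hg
  obtain h | h := conj_eq_or_eq_inv_of_normal_zpowers
    (injective_zpow_iff_not_isOfFinOrder.1 hinj) a
  · exact mul_inv_eq_iff_eq_mul.1 h
  · obtain ⟨s, hs⟩ := Subgroup.mem_zpowers_iff.1 (Subgroup.pow_index_mem (Subgroup.zpowers g) a)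
    have hs0 : -s = s := hinj <| by
      simp only
      rw [zpow_neg, ← inv_zpow, ← h, conj_zpow, hs]
      group
    have ha : a = 1 := htf a _ Subgroup.FiniteIndex.index_ne_zero (by
      rw [← hs, show s = 0 by lia, zpow_zero])
    simp [ha]

theorem isCyclic_of_finiteIndex_zpowers (htf : ∀ (a : A) (k : ℕ), k ≠ 0 → a ^ k = 1 → a = 1)
    (z : A) [(Subgroup.zpowers z).FiniteIndex] : IsCyclic A := by
  set N := (Subgroup.zpowers z).normalCore
  have : IsCyclic N := Subgroup.isCyclic_of_le (Subgroup.normalCore_le (Subgroup.zpowers z))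
  have hN := le_center_of_normal_of_torsionFree htf N
  have : (Subgroup.center A).FiniteIndex := Subgroup.finiteIndex_of_le hN
  have hinj : Function.Injective (MonoidHom.transferCenterPow A) := by
    refine (injective_iff_map_eq_one _).2 fun a ha =>
      htf a _ (Subgroup.FiniteIndex.index_ne_zero (H := Subgroup.center A)) ?_
    rw [← MonoidHom.transferCenterPow_apply, ha, Subgroup.coe_one]
  have hcomm (a b : A) : Commute a b := hinj (by
    rw [map_mul, map_mul]
    exact Subtype.ext (Subgroup.mem_center_iff.1 (MonoidHom.transferCenterPow A b).2 _))
  let f : A →* N := MonoidHom.mk' (fun a => ⟨a ^ N.index, N.pow_index_mem a⟩) fun a b =>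
    Subtype.ext ((hcomm a b).mul_pow _)
  exact isCyclic_of_injective f ((injective_iff_map_eq_one _).2 fun a ha =>
    htf a _ Subgroup.FiniteIndex.index_ne_zero (congrArg Subtype.val ha))

end VirtuallyCyclic

section PowerCommensurator

open RestrictedWreathProduct

theorem isCyclic_map_of_le_powerCommensurator {M Q G : Type*} [AddCommGroup M] [Group Q] [Group G]
    (htf : ∀ (a : Q) (k : ℕ), k ≠ 0 → a ^ k = 1 → a = 1) (D : G →* RestrictedWreathProduct M Q)
    {y : G} {S : Subgroup G} (hyS : y ∈ S) (hS : S ≤ powerCommensurator y)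
    (hy : ¬ IsOfFinOrder (D y).right) {q : Q} (hq : loopSum (D y) q ≠ 0) :
    IsCyclic (S.map (SemidirectProduct.rightHom.comp D)) := by
  obtain ⟨B, hB, hcover⟩ := exists_finite_cover_of_le_powerCommensurator hy hq
  let z : S.map (SemidirectProduct.rightHom.comp D) := ⟨(D y).right, y, hyS, rfl⟩
  have : (Subgroup.zpowers z).FiniteIndex :=
    finiteIndex_zpowers_of_finite_cover (hB.preimage Subtype.val_injective.injOn) <| by
      rintro ⟨_, x, hx, rfl⟩
      exact hcover _ (map_mem_powerCommensurator D (hS hx))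
  exact isCyclic_of_finiteIndex_zpowers (fun a k hk h =>
    Subtype.ext (htf a k hk (congrArg Subtype.val h))) z

theorem isCyclic_of_le_powerCommensurator {Y : Type*} {y : FreeGroup Y} (hy : y ≠ 1)
    {S : Subgroup (FreeGroup Y)} (hyS : y ∈ S) (hS : S ≤ powerCommensurator y) : IsCyclic S := by
  have hlift (w : FreeGroup Y) : FreeGroup.lift of w = w := by rw [FreeGroup.lift_of_eq_id]; rfl
  have hid : SemidirectProduct.rightHom.comp (foxHom 2 (of : Y → FreeGroup Y)) = MonoidHom.id _ :=
    MonoidHom.ext fun w => (foxHom_right _ w).trans (hlift w)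
  have hy' : ¬ IsOfFinOrder (FreeGroup.lift of y) := by
    rw [hlift, isOfFinOrder_iff_pow_eq_one]
    exact fun ⟨k, hk, h⟩ => hy ((pow_eq_one_iff_left hk.ne').1 h)
  obtain ⟨q, hq⟩ := exists_loopSum_foxHom_ne_zero one_lt_two hy'
  have hmap := isCyclic_map_of_le_powerCommensurator
    (fun a k hk h => (pow_eq_one_iff_left hk).1 h) (foxHom 2 of) hyS hS (by rwa [foxHom_right]) hq
  rwa [hid, Subgroup.map_id] at hmap

end PowerCommensurator

/-! ### Power commensurators in free products of cyclic groups -/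

section FreeProduct

variable {ι : Type*} {M : ι → Type*} [∀ i, Group (M i)]

theorem length_toList_inv {i j : ι} (w : CoprodI.NeWord M i j) :
    w.inv.toList.length = w.toList.length := by
  induction w with
  | singleton => rfl
  | append w₁ _ w₂ h₁ h₂ => simp [CoprodI.NeWord.inv, CoprodI.NeWord.toList, h₁, h₂, add_comm]

theorem prod_eq_head_or_exists_tail {i j : ι} (w : CoprodI.NeWord M i j) :
    (i = j ∧ w.prod = CoprodI.of w.head) ∨ ∃ (k : ι) (w' : CoprodI.NeWord M k j), k ≠ i ∧
      w.prod = CoprodI.of w.head * w'.prod ∧ w'.toList.length < w.toList.length := by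
  induction w with
  | singleton x hx => exact .inl ⟨rfl, CoprodI.NeWord.prod_singleton x hx⟩
  | append w₁ hne w₂ h₁ _ =>
    right
    rw [CoprodI.NeWord.append_prod, CoprodI.NeWord.append_head, CoprodI.NeWord.toList,
      List.length_append]
    obtain ⟨rfl, h⟩ | ⟨k, w', hk, h, hlen⟩ := h₁
    · exact ⟨_, w₂, hne.symm, by rw [h],
        lt_add_of_pos_left _ (List.length_pos_iff.2 w₁.toList_ne_nil)⟩
    · exact ⟨k, .append w' hne w₂, hk, by rw [h, CoprodI.NeWord.append_prod, mul_assoc], by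
        rw [CoprodI.NeWord.toList, List.length_append]
        lia⟩

theorem not_isOfFinOrder_prod {i j : ι} (hij : i ≠ j) (w : CoprodI.NeWord M i j) :
    ¬ IsOfFinOrder w.prod := by
  have hpow (k : ℕ) : ∃ w' : CoprodI.NeWord M i j, w'.prod = w.prod ^ (k + 1) := by
    induction k with
    | zero => exact ⟨w, by simp⟩
    | succ k ih =>
      obtain ⟨w', h⟩ := ih
      exact ⟨.append w' hij.symm w, by rw [CoprodI.NeWord.append_prod, h, pow_succ _ (k + 1)]⟩
  rw [isOfFinOrder_iff_pow_eq_one]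
  rintro ⟨k, hk, h⟩
  obtain ⟨w', hw'⟩ := hpow (k - 1)
  exact neWord_prod_ne_one w' (by rw [hw', Nat.sub_add_cancel hk, h])

theorem exists_conj_of_isOfFinOrder {g : CoprodI M} (h1 : g ≠ 1) (hg : IsOfFinOrder g) :
    ∃ (c : CoprodI M) (i : ι) (a : M i), g = c * CoprodI.of a * c⁻¹ := by
  obtain ⟨i, j, w, rfl⟩ := exists_neWord h1
  induction hlen : w.toList.length using Nat.strong_induction_on generalizing i j with
  | h m ih =>
    obtain rfl : i = j := by
      by_contra hij
      exact not_isOfFinOrder_prod hij w hg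
    obtain ⟨-, h⟩ | ⟨k, w', hk, h, hlt⟩ := prod_eq_head_or_exists_tail w
    · exact ⟨1, i, w.head, by simpa using h⟩
    have hconj : (CoprodI.of w.head)⁻¹ * w'.inv.prod =
        MulAut.conj (CoprodI.of w.head)⁻¹ w.prod⁻¹ := by
      rw [h, CoprodI.NeWord.inv_prod, MulAut.conj_apply]
      group
    have hfin : IsOfFinOrder ((CoprodI.of w.head)⁻¹ * w'.inv.prod) :=
      hconj ▸ MonoidHom.isOfFinOrder (MulAut.conj (CoprodI.of w.head)⁻¹).toMonoidHom hg.inv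
    by_cases hcancel : w.head⁻¹ * w'.inv.head = 1
    · obtain ⟨hik, -⟩ | ⟨l, v, -, hv, hlt'⟩ := prod_eq_head_or_exists_tail w'.inv
      · exact absurd hik.symm hk
      rw [hv, ← mul_assoc, ← map_inv, ← map_mul, hcancel, map_one, one_mul] at hfin hconj
      rw [length_toList_inv] at hlt'
      obtain ⟨c, q, a, hc⟩ := ih _ (by lia) _ _ v (neWord_prod_ne_one v) hfin rfl
      refine ⟨CoprodI.of w.head * c, q, a⁻¹, ?_⟩
      rw [hc, MulAut.conj_apply, map_inv, inv_inv] at hconj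
      have hw : w.prod =
          CoprodI.of w.head * (c * CoprodI.of a * c⁻¹)⁻¹ * (CoprodI.of w.head)⁻¹ := by
        rw [hconj]
        group
      rw [hw, map_inv]
      group
    · rw [← map_inv, ← CoprodI.NeWord.mulHead_prod w'.inv _ hcancel] at hfin
      exact absurd hfin (not_isOfFinOrder_prod hk.symm _)

theorem exists_of_mul (l : ι) {i j : ι} (w : CoprodI.NeWord M i j) :
    (∃ c : M l, w.prod = CoprodI.of c) ∨
      ∃ (c : M l) (k : ι) (w' : CoprodI.NeWord M k j), k ≠ l ∧ w.prod = CoprodI.of c * w'.prod := by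
  by_cases hi : i = l
  · subst hi
    obtain ⟨-, h⟩ | ⟨k, w', hk, h, -⟩ := prod_eq_head_or_exists_tail w
    · exact .inl ⟨_, h⟩
    · exact .inr ⟨_, k, w', hk, h⟩
  · exact .inr ⟨1, i, w, hi, by simp⟩

theorem isMalnormal_range_of (l : ι) : (CoprodI.of : M l →* CoprodI M).range.IsMalnormal := by
  rintro g ⟨_, ha, ⟨a, rfl⟩, b, hb⟩
  rw [Ne, map_eq_one_iff _ (CoprodI.of_injective l)] at ha
  by_cases hg : g = 1
  · simp [hg]
  obtain ⟨i, j, w, rfl⟩ := exists_neWord hg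
  obtain ⟨c, hc⟩ | ⟨c, k, w', hk, hc⟩ := exists_of_mul l w
  · exact ⟨c, hc.symm⟩
  obtain ⟨d, hd⟩ | ⟨d, k', v, hk', hd⟩ := exists_of_mul l w'.inv
  · exact ⟨c * d⁻¹, by rw [hc, map_mul, map_inv, ← hd, CoprodI.NeWord.inv_prod, inv_inv]⟩
  exfalso
  rw [CoprodI.NeWord.inv_prod, inv_eq_iff_eq_inv] at hd
  have ha' : d⁻¹ * a * d ≠ 1 := by simpa using (conj_eq_one_iff (a := d⁻¹) (b := a)).not.2 ha
  have hb' : c⁻¹ * b⁻¹ * c ≠ 1 := by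
    have hb1 : b ≠ 1 := by
      rintro rfl
      rw [map_one, eq_comm, conj_eq_one_iff, map_eq_one_iff _ (CoprodI.of_injective l)] at hb
      exact ha hb
    simpa using (conj_eq_one_iff (a := c⁻¹) (b := b⁻¹)).not.2 (inv_ne_one.2 hb1)
  refine neWord_prod_ne_one (.append (.append (.append v.inv hk' (.singleton _ ha')) hk'.symm v)
    hk (.singleton _ hb')) ?_
  simp only [CoprodI.NeWord.append_prod, CoprodI.NeWord.prod_singleton, CoprodI.NeWord.inv_prod,
    map_mul, map_inv, hb, hc, hd]
  group

theorem isMalnormal_map {G H : Type*} [Group G] [Group H] (e : G ≃* H) {K : Subgroup G}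
    (hK : K.IsMalnormal) : (K.map e.toMonoidHom).IsMalnormal := by
  rintro g ⟨_, hx, ⟨x, hxK, rfl⟩, x', hx', h⟩
  refine ⟨e.symm g, hK _ ⟨x, fun h => hx (by simp [h]), hxK, ?_⟩, e.apply_symm_apply g⟩
  have hgx : e.symm g * x * (e.symm g)⁻¹ = x' := e.injective (by simpa using h.symm)
  rwa [hgx]

theorem exists_isMalnormal_range_of_isOfFinOrder {g : CoprodI M} (h1 : g ≠ 1)
    (hg : IsOfFinOrder g) :
    ∃ (l : ι) (f : M l →* CoprodI M), f.range.IsMalnormal ∧ g ∈ f.range := by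
  obtain ⟨c, l, a, rfl⟩ := exists_conj_of_isOfFinOrder h1 hg
  refine ⟨l, (MulAut.conj c).toMonoidHom.comp CoprodI.of, ?_, a, rfl⟩
  rw [MonoidHom.range_comp]
  exact isMalnormal_map _ (isMalnormal_range_of l)

theorem isCyclic_closure_of_isOfFinOrder [∀ l, IsCyclic (M l)] {x y : CoprodI M} {i j : ℤ}
    (hy : IsOfFinOrder y) (h : x⁻¹ * y ^ i * x = y ^ j) (hi : y ^ i ≠ 1) :
    IsCyclic (Subgroup.closure {x, y}) := by
  obtain ⟨l, f, hf, hyf⟩ := exists_isMalnormal_range_of_isOfFinOrder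
    (fun h1 => hi (by rw [h1, one_zpow])) hy
  have hxf : x ∈ f.range := inv_mem_iff.1 <| hf x⁻¹
    ⟨y ^ i, hi, zpow_mem hyf i, by rw [inv_inv, h]; exact zpow_mem hyf j⟩
  have : IsCyclic f.range := isCyclic_of_surjective f.rangeRestrict f.rangeRestrict_surjective
  exact Subgroup.isCyclic_of_le
    ((Subgroup.closure_le _).2 (Set.insert_subset hxf (Set.singleton_subset_iff.2 hyf)))

theorem eq_one_of_commute_of_isOfFinOrder (hM : ∀ l, IsMulTorsion (M l)) {a g : CoprodI M}
    (ha : IsOfFinOrder a) (hg : ¬ IsOfFinOrder g) (h : Commute a g) : a = 1 := by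
  by_contra h1
  obtain ⟨l, f, hf, haf⟩ := exists_isMalnormal_range_of_isOfFinOrder h1 ha
  obtain ⟨b, rfl⟩ := hf g ⟨a, h1, haf, by rwa [h.symm.eq, mul_inv_cancel_right]⟩
  exact hg (f.isOfFinOrder (hM l b))

end FreeProduct

section Dihedral

variable {G : Type*} [Group G]

/-- The homomorphism from the infinite dihedral group given by an involution `s`, the image of
`sr 0`, and an element `v` inverted by `s`, the image of `r 1`. -/
def infiniteDihedralLift (s v : G) (hs : s * s = 1) (hsv : s * v * s⁻¹ = v⁻¹) :
    DihedralGroup 0 →* G :=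
  MonoidHom.mk'
    (fun
      | .r (i : ℤ) => v ^ i
      | .sr (i : ℤ) => s * v ^ i) <| by
    have hvs (i : ℤ) : v ^ i * s = s * v ^ (-i) := by
      rw [zpow_neg, ← inv_zpow, ← hsv, conj_zpow, inv_eq_of_mul_eq_one_left hs, mul_assoc,
        ← mul_assoc s, hs, one_mul]
    rintro ((i : ℤ) | (i : ℤ)) ((j : ℤ) | (j : ℤ))
    · exact zpow_add v i j
    · change s * v ^ (j - i) = v ^ i * (s * v ^ j)
      rw [← mul_assoc, hvs, mul_assoc, ← zpow_add, sub_eq_neg_add]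
    · change s * v ^ (i + j) = s * v ^ i * v ^ j
      rw [mul_assoc, ← zpow_add]
    · change v ^ (j - i) = s * v ^ i * (s * v ^ j)
      rw [mul_assoc, ← mul_assoc _ s, hvs, mul_assoc, ← mul_assoc, hs, one_mul, ← zpow_add,
        sub_eq_neg_add]

theorem nonempty_mulEquiv_dihedralGroup {v s : G} (hv : ¬ IsOfFinOrder v)
    (hs : s ∉ Subgroup.zpowers v) (hsv : s * v * s⁻¹ = v⁻¹) (hss : s * s ∈ Subgroup.zpowers v)
    (hcover : ∀ a, a ∈ Subgroup.zpowers v ∨ s⁻¹ * a ∈ Subgroup.zpowers v) :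
    Nonempty (G ≃* DihedralGroup 0) := by
  have hconj (m : ℤ) : s * v ^ m * s⁻¹ = v ^ (-m) := by rw [← conj_zpow, hsv, inv_zpow']
  have hinj := injective_zpow_iff_not_isOfFinOrder.2 hv
  have hs1 : s * s = 1 := by
    obtain ⟨l, hl⟩ := Subgroup.mem_zpowers_iff.1 hss
    have hl0 : l = -l := hinj <| by
      simp only
      rw [← hconj l, hl]
      group
    rw [← hl, show l = 0 by lia, zpow_zero]
  let f := infiniteDihedralLift s v hs1 hsv
  refine ⟨(MulEquiv.ofBijective f ⟨(injective_iff_map_eq_one f).2 ?_, fun a => ?_⟩).symm⟩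
  · rintro (i | i) hi
    · exact congrArg DihedralGroup.r (hinj (hi.trans (zpow_zero v).symm))
    · exact absurd ⟨-i, (zpow_neg v i).trans (eq_inv_of_mul_eq_one_left hi).symm⟩ hs
  · obtain ⟨i, hi⟩ | ⟨i, hi⟩ := hcover a
    · exact ⟨.r i, hi⟩
    · exact ⟨.sr i, mul_eq_of_eq_inv_mul hi⟩

/-- The infinite dihedral group is the free product of two groups of order two, generated by the
reflections `sr 0` and `sr 1`. -/
noncomputable def dihedralEquivCoprod : DihedralGroup 0 ≃* CyclicCoprod 2 Bool :=
  let a (b : Bool) : CyclicCoprod 2 Bool := CyclicCoprod.of b (ofAdd 1)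
  have ha b : a b * a b = 1 := by
    rw [← map_mul, show (ofAdd 1 * ofAdd 1 : Multiplicative (ZMod 2)) = 1 by decide, map_one]
  let f := infiniteDihedralLift (a false) (a false * a true) (ha false) <| by
    rw [← mul_assoc, ha, one_mul, mul_inv_rev, inv_eq_of_mul_eq_one_left (ha true)]
  let g : CyclicCoprod 2 Bool →* DihedralGroup 0 := Monoid.CoprodI.lift fun b =>
    zmodHom 2 (DihedralGroup.sr (cond b 1 0)) (by rw [sq, DihedralGroup.sr_mul_self])
  have hg b : g (a b) = DihedralGroup.sr (cond b 1 0) :=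
    (Monoid.CoprodI.lift_of _ _).trans (zmodHom_ofAdd_one ..)
  have hr (i : ZMod 0) : g (f (.r i)) = .r i := by
    change g ((a false * a true) ^ (show ℤ from i)) = _
    rw [map_zpow, map_mul, hg, hg, cond_false, cond_true, DihedralGroup.sr_mul_sr, sub_zero,
      DihedralGroup.r_one_zpow]
    rfl
  MonoidHom.toMulEquiv f g
    (MonoidHom.ext <| by
      rintro (i | i)
      · exact hr i
      · change g (a false * f (.r i)) = _
        rw [map_mul, hg, hr, cond_false, DihedralGroup.sr_mul_r, zero_add, MonoidHom.id_apply])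
    (Monoid.CoprodI.ext_hom _ _ fun b => MonoidHom.ext fun c => by
      have hc : c = 1 ∨ c = ofAdd 1 := by revert c; decide
      obtain rfl | rfl := hc
      · simp
      · change f (g (a b)) = a b
        rw [hg]
        cases b
        · exact mul_one (a false)
        · change a false * (a false * a true) ^ (1 : ℤ) = a true
          rw [zpow_one, ← mul_assoc, ha, one_mul])

theorem isFreeProductOfCyclics_of_mulEquiv_dihedralGroup (e : G ≃* DihedralGroup 0) :
    IsFreeProductOfCyclics G :=
  ⟨Bool, fun _ => 2, ⟨e.trans dihedralEquivCoprod⟩⟩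

end Dihedral

section VirtuallyCyclic

variable {A : Type*} [Group A]

theorem exists_normal_zpowers {z : A} (hz : ¬ IsOfFinOrder z) [(Subgroup.zpowers z).FiniteIndex] :
    ∃ g : A, ¬ IsOfFinOrder g ∧ (Subgroup.zpowers g).Normal ∧
      (Subgroup.zpowers g).FiniteIndex := by
  set N := (Subgroup.zpowers z).normalCore
  have : IsCyclic N := Subgroup.isCyclic_of_le (Subgroup.normalCore_le (Subgroup.zpowers z))
  obtain ⟨g, hg⟩ := N.isCyclic_iff_exists_zpowers_eq_top.1 this
  have : N.FiniteIndex := inferInstance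
  refine ⟨g, fun hfin => hz ?_, hg ▸ Subgroup.normalCore_normal _, hg ▸ this⟩
  obtain ⟨k, hk⟩ : ∃ k : ℤ, g ^ k = z ^ N.index :=
    Subgroup.mem_zpowers_iff.1 (hg ▸ N.pow_index_mem z)
  exact (hk ▸ hfin.zpow : IsOfFinOrder (z ^ N.index)).of_pow Subgroup.FiniteIndex.index_ne_zero

theorem isCyclic_centralizer_of_finiteIndex_zpowers
    (hA : ∀ a g : A, IsOfFinOrder a → ¬ IsOfFinOrder g → Commute a g → a = 1) {g : A}
    (hg : ¬ IsOfFinOrder g) [(Subgroup.zpowers g).FiniteIndex] :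
    IsCyclic (Subgroup.centralizer {g}) := by
  let g' : Subgroup.centralizer {g} := ⟨g, Subgroup.mem_centralizer_singleton_iff.2 rfl⟩
  have : (Subgroup.zpowers g').FiniteIndex :=
    Subgroup.finiteIndex_of_le (H := (Subgroup.zpowers g).subgroupOf _) <| by
      rintro a ⟨k, hk⟩
      exact ⟨k, Subtype.ext hk⟩
  exact isCyclic_of_finiteIndex_zpowers (fun a k hk h => Subtype.ext <| hA a g
    (isOfFinOrder_iff_pow_eq_one.2 ⟨k, hk.pos, congrArg Subtype.val h⟩) hg
    (Subgroup.mem_centralizer_singleton_iff.1 a.2)) g'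

theorem isCyclic_or_dihedral_of_normal_zpowers
    (hA : ∀ a g : A, IsOfFinOrder a → ¬ IsOfFinOrder g → Commute a g → a = 1) {g : A}
    (hg : ¬ IsOfFinOrder g) [(Subgroup.zpowers g).Normal] [(Subgroup.zpowers g).FiniteIndex] :
    IsCyclic A ∨ Nonempty (A ≃* DihedralGroup 0) := by
  set C := Subgroup.centralizer {g} with hC
  have hmem (a : A) : a ∈ C ↔ a * g * a⁻¹ = g := by
    rw [hC, Subgroup.mem_centralizer_singleton_iff, mul_inv_eq_iff_eq_mul]
  obtain ⟨v, hv⟩ := C.isCyclic_iff_exists_zpowers_eq_top.1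
    (isCyclic_centralizer_of_finiteIndex_zpowers hA hg)
  obtain ⟨l, hl⟩ : ∃ l : ℤ, v ^ l = g :=
    Subgroup.mem_zpowers_iff.1 (hv ▸ (hmem g).2 (mul_inv_cancel_right g g))
  have hvfin : ¬ IsOfFinOrder v := fun h => hg (hl ▸ h.zpow)
  by_cases htop : C = ⊤
  · exact .inl (isCyclic_iff_exists_zpowers_eq_top.2 ⟨v, hv.trans htop⟩)
  obtain ⟨s, hs⟩ : ∃ s, s ∉ C := by simpa [Subgroup.eq_top_iff'] using htop
  have hinv {a : A} (ha : a ∉ C) : a * g * a⁻¹ = g⁻¹ :=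
    (conj_eq_or_eq_inv_of_normal_zpowers hg a).resolve_left ((hmem a).not.1 ha)
  have hprod {a b : A} (ha : a ∉ C) (hb : b ∉ C) : a * b ∈ C := by
    rw [hmem]
    calc a * b * g * (a * b)⁻¹ = a * (b * g * b⁻¹) * a⁻¹ := by group
      _ = (a * g * a⁻¹)⁻¹ := by rw [hinv hb, conj_inv]
      _ = g := by rw [hinv ha, inv_inv]
  have : (Subgroup.zpowers v).Normal := by
    rw [hv, hC, ← Subgroup.centralizer_closure, ← Subgroup.zpowers_eq_closure]
    infer_instance
  have hsv : s * v * s⁻¹ = v⁻¹ := (conj_eq_or_eq_inv_of_normal_zpowers hvfin s).resolve_left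
    fun h => hs <| (hmem s).2 <| by rw [← hl, ← conj_zpow, h]
  refine .inr (nonempty_mulEquiv_dihedralGroup hvfin (hv ▸ hs) hsv (hv ▸ hprod hs hs) fun a => ?_)
  rw [hv]
  exact or_iff_not_imp_left.2 fun ha => hprod (inv_mem_iff.not.2 hs) ha

theorem isCyclic_or_dihedral_of_finiteIndex_zpowers
    (hA : ∀ a g : A, IsOfFinOrder a → ¬ IsOfFinOrder g → Commute a g → a = 1) {z : A}
    (hz : ¬ IsOfFinOrder z) [(Subgroup.zpowers z).FiniteIndex] :
    IsCyclic A ∨ Nonempty (A ≃* DihedralGroup 0) := by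
  obtain ⟨g, hg, _, _⟩ := exists_normal_zpowers hz
  exact isCyclic_or_dihedral_of_normal_zpowers hA hg

end VirtuallyCyclic

section PowerCommensurator

variable {G H : Type*} [Group G] [Group H]

theorem powerCommensurator_le_pow (y : G) (k : ℕ) :
    powerCommensurator y ≤ powerCommensurator (y ^ k) := by
  rintro g ⟨i, j, hi, hj, h⟩
  refine ⟨i, j, hi, hj, ?_⟩
  rw [← zpow_natCast y k, ← zpow_mul, ← zpow_mul, mul_comm _ i, mul_comm _ j, conj_zpow_mul h]

theorem mem_powerCommensurator_of_map {f : G →* H} (hf : Function.Injective f) {y g : G}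
    (hg : f g ∈ powerCommensurator (f y)) : g ∈ powerCommensurator y := by
  obtain ⟨i, j, hi, hj, h⟩ := hg
  exact ⟨i, j, hi, hj, hf (by simpa using h)⟩

theorem isCyclic_of_powerCommensurator_eq_top {Y : Type*} {f : G →* FreeGroup Y}
    (hf : Function.Injective f) {y : G} (hy : y ≠ 1) (h : powerCommensurator y = ⊤) :
    IsCyclic G := by
  have : IsCyclic f.range := isCyclic_of_le_powerCommensurator
    ((map_ne_one_iff f hf).2 hy) ⟨y, rfl⟩ <| by
      rintro _ ⟨g, rfl⟩
      exact map_mem_powerCommensurator f (h ▸ Subgroup.mem_top g)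
  exact isCyclic_of_injective f.rangeRestrict (f.rangeRestrict_injective_iff.2 hf)

end PowerCommensurator

section CoprodPower

variable {ι A : Type*} [Group A]

/-- The codiagonal homomorphism from a free product of copies of `A` to `A`. -/
def codiagonal : CoprodI (fun _ : ι => A) →* A := CoprodI.lift fun _ => MonoidHom.id A

/-- The left regular representation of `A`, as a homomorphism into a wreath product. -/
def regularRepr (P : Type*) [Group P] : A →* WreathProduct A P where
  toFun a := ⟨MulAction.toPerm a, 1⟩
  map_one' := by ext <;> simp
  map_mul' a b := by ext <;> simp [mul_assoc]

/-- The action of a free product of copies of `A` on the covering graph belonging to the kernel of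
the codiagonal, whose vertices are the elements of `A`: the cocycle records the edges `(l, q)`. -/
def holonomy : CoprodI (fun _ : ι => A) →* WreathProduct A (FreeGroup (ι × A)) :=
  CoprodI.lift fun l =>
    (MulAut.conj (WreathProduct.base fun q => (of (l, q))⁻¹)).toMonoidHom.comp (regularRepr _)

theorem holonomy_of (l : ι) (a : A) : holonomy (CoprodI.of (M := fun _ : ι => A) (i := l) a) =
    ⟨MulAction.toPerm a, fun q => (of (l, a * q))⁻¹ * of (l, q)⟩ := by
  refine (CoprodI.lift_of _ _).trans ?_
  ext <;> simp [regularRepr]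

/-- The homomorphism that recovers an element of a free product from its holonomy. -/
def ofHolonomy : FreeGroup (ι × A) →* CoprodI (fun _ : ι => A) :=
  FreeGroup.lift fun p => CoprodI.of (M := fun _ : ι => A) (i := p.1) p.2⁻¹

theorem holonomy_spec (w : CoprodI (fun _ : ι => A)) (q : A) :
    (holonomy w).perm q = codiagonal w * q ∧ ofHolonomy ((holonomy w).cocycle q) = w := by
  induction w using CoprodI.induction_on generalizing q with
  | one => simp
  | of l a =>
    rw [holonomy_of, codiagonal, CoprodI.lift_of]
    refine ⟨rfl, ?_⟩
    simp only [map_mul, map_inv, ofHolonomy, FreeGroup.lift_apply_of]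
    rw [← map_inv, inv_inv, ← map_mul]
    simp
  | mul a b ha hb =>
    rw [map_mul, map_mul, WreathProduct.mul_perm, WreathProduct.mul_cocycle, Equiv.Perm.mul_apply,
      map_mul, (ha _).1, (ha _).2, (hb q).1, (hb q).2, mul_assoc]
    exact ⟨rfl, rfl⟩

theorem exists_injective_ker_codiagonal :
    ∃ f : (codiagonal : CoprodI (fun _ : ι => A) →* A).ker →* FreeGroup (ι × A),
      Function.Injective f := by
  refine ⟨WreathProduct.stabilizerHom holonomy 1 _ fun k hk => ?_, fun a b h => Subtype.ext ?_⟩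
  · rw [(holonomy_spec k 1).1, hk, mul_one]
  · have := congrArg ofHolonomy h
    exact (holonomy_spec _ 1).2.symm.trans (this.trans (holonomy_spec _ 1).2)

theorem exists_finiteIndex_zpowers [Finite A] {y : CoprodI (fun _ : ι => A)}
    (hy : ¬ IsOfFinOrder y) {S : Subgroup (CoprodI (fun _ : ι => A))} (hyS : y ∈ S)
    (hS : S ≤ powerCommensurator y) :
    ∃ z : S, ¬ IsOfFinOrder z ∧ (Subgroup.zpowers z).FiniteIndex := by
  set N := (codiagonal : CoprodI (fun _ : ι => A) →* A).ker
  obtain ⟨f, hf⟩ := exists_injective_ker_codiagonal (ι := ι) (A := A)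
  have hN : N.index ≠ 0 := Subgroup.FiniteIndex.index_ne_zero
  let yS : S := ⟨y ^ N.index, pow_mem hyS _⟩
  have hyN : yS ∈ N.subgroupOf S := N.pow_index_mem y
  have hyfin : ¬ IsOfFinOrder yS := fun h => hy ((S.subtype.isOfFinOrder h).of_pow hN)
  have hcyc : IsCyclic (N.subgroupOf S) := by
    refine isCyclic_of_powerCommensurator_eq_top (f := f.comp (S.subtype.subgroupComap N))
      (y := ⟨yS, hyN⟩) ?_ ?_ ?_
    · exact hf.comp fun a b h => Subtype.ext (Subtype.ext (congrArg N.subtype h))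
    · exact fun h => hyfin (by rw [show yS = 1 from congrArg Subtype.val h]; exact .one)
    · refine (Subgroup.eq_top_iff' _).2 fun g => mem_powerCommensurator_of_map
        (f := S.subtype.comp (N.subgroupOf S).subtype)
        (S.subtype_injective.comp Subtype.val_injective)
        (powerCommensurator_le_pow y _ (hS g.1.2))
  obtain ⟨z, hz⟩ := (N.subgroupOf S).isCyclic_iff_exists_zpowers_eq_top.1 hcyc
  refine ⟨z, fun hfin => hyfin ?_, hz ▸ inferInstanceAs (N.subgroupOf S).FiniteIndex⟩
  obtain ⟨m, hm⟩ := Subgroup.mem_zpowers_iff.1 (hz ▸ hyN)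
  exact hm ▸ hfin.zpow

theorem isCyclic_or_dihedral_of_le_powerCommensurator [Finite A] {y : CoprodI (fun _ : ι => A)}
    (hy : ¬ IsOfFinOrder y) {S : Subgroup (CoprodI (fun _ : ι => A))} (hyS : y ∈ S)
    (hS : S ≤ powerCommensurator y) : IsCyclic S ∨ Nonempty (S ≃* DihedralGroup 0) := by
  obtain ⟨z, hz, _⟩ := exists_finiteIndex_zpowers hy hyS hS
  refine isCyclic_or_dihedral_of_finiteIndex_zpowers (fun a g ha hg h => Subtype.ext ?_) hz
  exact eq_one_of_commute_of_isOfFinOrder (fun _ => isMulTorsion_of_finite)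
    (S.subtype.isOfFinOrder ha) (S.subtype_injective.isOfFinOrder_iff.not.2 hg)
    (congrArg Subtype.val h.eq)

end CoprodPower

/-! ### The torsion kernel -/

section Conjugation

variable {G H : Type*} [Group G] [Group H] {x y : G} {i j : ℤ}

theorem conj_zpow_pow (h : x⁻¹ * y ^ i * x = y ^ j) (m : ℕ) :
    (x ^ m)⁻¹ * y ^ i ^ m * x ^ m = y ^ j ^ m := by
  induction m with
  | zero => simp
  | succ m ih =>
    calc (x ^ (m + 1))⁻¹ * y ^ i ^ (m + 1) * x ^ (m + 1)
        = x⁻¹ * ((x ^ m)⁻¹ * y ^ (i ^ m * i) * x ^ m) * x := by rw [pow_succ i]; group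
      _ = y ^ j ^ (m + 1) := by
        rw [conj_zpow_mul ih, mul_comm, conj_zpow_mul h, pow_succ']

theorem zpow_ne_one_of_conj (h : x⁻¹ * y ^ i * x = y ^ j) (hi : y ^ i ≠ 1) : y ^ j ≠ 1 := by
  intro hj
  exact hi (by rwa [hj, mul_eq_one_iff_eq_inv, mul_eq_left] at h)

theorem zpow_mem_zpowers_of_conj (hy : IsOfFinOrder y) (h : x⁻¹ * y ^ i * x = y ^ j) :
    y ^ j ∈ Subgroup.zpowers (y ^ i) := by
  obtain ⟨d, hd⟩ := Int.gcd_dvd_right i (orderOf y)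
  have hd0 : d ≠ 0 := by
    rintro rfl
    exact hy.orderOf_pos.ne' (by simpa using hd)
  have hid : y ^ (i * d) = 1 := by
    rw [← orderOf_dvd_iff_zpow_eq_one]
    nth_rw 1 [hd]
    exact mul_dvd_mul_right (Int.gcd_dvd_left _ _) d
  have hjd : y ^ (j * d) = 1 := by
    rw [← conj_zpow_mul h, hid, mul_one, inv_mul_cancel]
  have hdvd : (Int.gcd i (orderOf y) : ℤ) ∣ j := by
    rw [← orderOf_dvd_iff_zpow_eq_one] at hjd
    nth_rw 1 [hd] at hjd
    exact Int.dvd_of_mul_dvd_mul_right hd0 hjd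
  obtain ⟨c, rfl⟩ := hdvd
  exact ⟨i.gcdA (orderOf y) * c, by simp [Int.gcd_eq_gcd_ab, add_mul, zpow_add, zpow_mul]⟩

theorem closure_le_powerCommensurator (h : x⁻¹ * y ^ i * x = y ^ j) (hi : y ^ i ≠ 1) :
    Subgroup.closure {x, y} ≤ powerCommensurator y := by
  have ne_zero {k : ℤ} (hk : y ^ k ≠ 1) : k ≠ 0 := by
    rintro rfl
    exact hk (zpow_zero y)
  rw [Subgroup.closure_le, Set.pair_subset_iff]
  exact ⟨⟨i, j, ne_zero hi, ne_zero (zpow_ne_one_of_conj h hi), h⟩, self_mem_powerCommensurator y⟩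

theorem nonempty_closure_mulEquiv_closure {f : G →* H} (hf : Function.Injective f) (x y : G) :
    Nonempty (Subgroup.closure {x, y} ≃* Subgroup.closure {f x, f y}) := by
  rw [← Set.image_pair, ← MonoidHom.map_closure]
  exact ⟨(Subgroup.closure {x, y}).equivMapOfInjective f hf⟩

/-- The conclusion of the theorem in its sharpest form: `G` is cyclic or infinite dihedral. -/
abbrev IsCyclicOrDihedral (G : Type*) [Group G] : Prop :=
  IsCyclic G ∨ Nonempty (G ≃* DihedralGroup 0)

theorem isCyclicOrDihedral_closure_iff {f : G →* H} (hf : Function.Injective f) (x y : G) :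
    IsCyclicOrDihedral (Subgroup.closure {f x, f y}) ↔
      IsCyclicOrDihedral (Subgroup.closure {x, y}) := by
  obtain ⟨e⟩ := nonempty_closure_mulEquiv_closure hf x y
  exact or_congr e.isCyclic.symm ⟨.map e.trans, .map e.symm.trans⟩

theorem isCyclicOrDihedral_closure_coprod {ι A : Type*} [Group A] [Finite A] [IsCyclic A]
    {x y : CoprodI fun _ : ι => A} (h : x⁻¹ * y ^ i * x = y ^ j) (hi : y ^ i ≠ 1) :
    IsCyclicOrDihedral (Subgroup.closure {x, y}) := by
  by_cases hy : IsOfFinOrder y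
  · exact .inl (isCyclic_closure_of_isOfFinOrder hy h hi)
  · exact isCyclic_or_dihedral_of_le_powerCommensurator hy (Subgroup.subset_closure (by simp))
      (closure_le_powerCommensurator h hi)

end Conjugation

section CoprodRetraction

variable {n : ℕ} {ι : Type*}

open Classical in
/-- The retraction of a free product of copies of `ℤ/n` onto the factors with index in `T`. -/
noncomputable def coprodRetraction (T : Finset ι) : CyclicCoprod n ι →* CyclicCoprod n ι :=
  CoprodI.lift fun l => if l ∈ T then CyclicCoprod.of l else 1

theorem coprodRetraction_of_mem {T : Finset ι} {l : ι} (h : l ∈ T) (a : Multiplicative (ZMod n)) :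
    coprodRetraction T (CyclicCoprod.of l a) = CyclicCoprod.of l a := by
  simp [coprodRetraction, h]

theorem coprodRetraction_of_notMem {T : Finset ι} {l : ι} (h : l ∉ T)
    (a : Multiplicative (ZMod n)) : coprodRetraction T (CyclicCoprod.of l a) = 1 := by
  simp [coprodRetraction, h]

theorem eventually_coprodRetraction_eq (w : CyclicCoprod n ι) :
    ∀ᶠ T : Finset ι in Filter.atTop, coprodRetraction T w = w := by
  induction w using CoprodI.induction_on with
  | one => exact .of_forall fun T => map_one _
  | of l a =>
    filter_upwards [Filter.eventually_ge_atTop {l}] with T hT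
    exact coprodRetraction_of_mem (Finset.singleton_subset_iff.1 hT) a
  | mul v w hv hw =>
    filter_upwards [hv, hw] with T hv hw
    rw [map_mul, hv, hw]

end CoprodRetraction

section Kernel

variable {X : Type u} {n : ℕ} {R : FreeGroup X}

@[elab_as_elim]
theorem nclosure_induction {G : Type*} [Group G] {r : G} {p : nclosure r → Prop}
    (conj : ∀ g, p ⟨g * r * g⁻¹, conj_mem_nclosure (mem_nclosure r) g⟩) (one : p 1)
    (mul : ∀ k l, p k → p l → p (k * l)) (inv : ∀ k, p k → p k⁻¹) (k : nclosure r) : p k := by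
  obtain ⟨k, hk⟩ := k
  refine Subgroup.closure_induction (p := fun k hk => p ⟨k, hk⟩) (fun x hx => ?_) one
    (fun _ _ _ _ => mul _ _) (fun _ _ => inv _) hk
  obtain ⟨_, rfl, hc⟩ := Group.mem_conjugatesOfSet_iff.1 hx
  obtain ⟨g, rfl⟩ := isConj_iff.1 hc
  exact conj g

namespace TorsionSplitting

theorem idx_pow_mul_injective (σ : TorsionSplitting n R) (htf : TorsionFreeQuotient R)
    {z : FreeGroup X} (hz : z ∉ nclosure R) (h : FreeGroup X) :
    Function.Injective fun m : ℕ => σ.idx (z ^ m * h) := by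
  refine Function.Injective.of_lt_imp_ne fun a b hab heq => hz (htf z (b - a) (by lia) ?_)
  have hconj := conj_mem_nclosure (σ.inv_mul_mem _ _ heq) h
  rw [← Nat.add_sub_of_le hab.le, pow_add] at hconj
  simpa [mul_assoc] using hconj

theorem eventually_coprodRetraction_conj_eq_one (σ : TorsionSplitting n R)
    (htf : TorsionFreeQuotient R) {z : FreeGroup X} (hz : z ∉ nclosure R) (T : Finset σ.ι)
    (k : nclosure R) : ∀ᶠ m : ℕ in Filter.cofinite,
      coprodRetraction T (σ.toCoprod (MulAut.conjNormal (z ^ m) k)) = 1 := by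
  induction k using nclosure_induction with
  | conj h =>
    have hfin := T.finite_toSet.preimage (σ.idx_pow_mul_injective htf hz h).injOn
    filter_upwards [hfin.compl_mem_cofinite] with m hm
    obtain ⟨c, a, hca⟩ := σ.exists_conj (z ^ m * h)
    have hmul :
        MulAut.conjNormal (z ^ m) ⟨h * R * h⁻¹, conj_mem_nclosure (mem_nclosure R) h⟩ =
          ⟨(z ^ m * h) * R * (z ^ m * h)⁻¹, conj_mem_nclosure (mem_nclosure R) _⟩ := by
      ext
      simp [-map_pow, mul_assoc]
    rw [hmul, hca, map_mul, map_mul, coprodRetraction_of_notMem hm, mul_one, map_inv,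
      mul_inv_cancel]
  | one => simp
  | mul k l hk hl =>
    filter_upwards [hk, hl] with m hk hl
    rw [map_mul, map_mul, map_mul, hk, hl, mul_one]
  | inv k hk =>
    filter_upwards [hk] with m hk
    rw [map_inv, map_inv, map_inv, hk, inv_one]

theorem toCoprod_eq_iff (σ : TorsionSplitting n R) {k l : nclosure R} :
    σ.toCoprod k = σ.toCoprod l ↔
      PresentedGroup.mk {R ^ n} k.1 = PresentedGroup.mk {R ^ n} l.1 := by
  rw [← inv_mul_eq_one, ← map_inv, ← map_mul, σ.toCoprod_eq_one_iff]
  exact QuotientGroup.eq.symm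

end TorsionSplitting

variable (n R) in
/-- The natural homomorphism from `⟨X; Rⁿ⟩` to `⟨X; R⟩`. -/
def toQuotient : PresentedGroup {R ^ n} →* FreeGroup X ⧸ nclosure R :=
  QuotientGroup.map (nclosure (R ^ n)) (nclosure R) (.id _)
    (nclosure_le (pow_mem (mem_nclosure R) n))

theorem toQuotient_mk_eq_one_iff (w : FreeGroup X) :
    toQuotient n R (PresentedGroup.mk _ w) = 1 ↔ w ∈ nclosure R :=
  QuotientGroup.eq_one_iff w

theorem TorsionSplitting.exists_injective_ker_toQuotient (σ : TorsionSplitting n R) :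
    ∃ f : (toQuotient n R).ker →* CyclicCoprod n σ.ι, Function.Injective f := by
  let π : nclosure R →* (toQuotient n R).ker :=
    ((PresentedGroup.mk {R ^ n}).comp (nclosure R).subtype).codRestrict _ fun k =>
      (toQuotient_mk_eq_one_iff _).2 k.2
  have hπ : Function.Surjective π := by
    rintro ⟨g, hg⟩
    obtain ⟨w, rfl⟩ := PresentedGroup.mk_surjective _ g
    exact ⟨⟨w, (toQuotient_mk_eq_one_iff w).1 hg⟩, rfl⟩
  have hiff (k l : nclosure R) : σ.toCoprod k = σ.toCoprod l ↔ π k = π l :=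
    σ.toCoprod_eq_iff.trans ⟨fun h => Subtype.ext h, fun h => congrArg Subtype.val h⟩
  let f := π.liftOfSurjective hπ ⟨σ.toCoprod, fun k hk => by
    rwa [MonoidHom.mem_ker, ← map_one σ.toCoprod, hiff, map_one]⟩
  have hf (k : nclosure R) : f (π k) = σ.toCoprod k := MonoidHom.liftOfRightInverse_comp_apply ..
  refine ⟨f, fun a b hab => ?_⟩
  obtain ⟨k, rfl⟩ := hπ a
  obtain ⟨l, rfl⟩ := hπ b
  rwa [hf, hf, hiff] at hab

theorem TorsionSplitting.eventually_disjoint_zpowers (σ : TorsionSplitting n R)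
    (htf : TorsionFreeQuotient R) {z u v : PresentedGroup {R ^ n}} (hz : toQuotient n R z ≠ 1)
    (hu : toQuotient n R u = 1) (hv : toQuotient n R v = 1) : ∀ᶠ m : ℕ in Filter.cofinite,
      Disjoint (Subgroup.zpowers (z ^ m * u * (z ^ m)⁻¹)) (Subgroup.zpowers v) := by
  obtain ⟨z, rfl⟩ := PresentedGroup.mk_surjective _ z
  obtain ⟨u, rfl⟩ := PresentedGroup.mk_surjective _ u
  obtain ⟨v, rfl⟩ := PresentedGroup.mk_surjective _ v
  rw [Ne, toQuotient_mk_eq_one_iff] at hz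
  rw [toQuotient_mk_eq_one_iff] at hu hv
  lift u to nclosure R using hu
  lift v to nclosure R using hv
  obtain ⟨T, hT⟩ := (eventually_coprodRetraction_eq (σ.toCoprod v)).exists
  filter_upwards [σ.eventually_coprodRetraction_conj_eq_one htf hz T u] with m hm
  rw [Subgroup.disjoint_def]
  rintro _ ⟨a, rfl⟩ ⟨b, hb⟩
  have hab : σ.toCoprod (v ^ b) = σ.toCoprod (MulAut.conjNormal (z ^ m) u ^ a) :=
    σ.toCoprod_eq_iff.2 <| by
      rw [Subgroup.coe_zpow, Subgroup.coe_zpow, MulAut.conjNormal_apply]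
      simpa only [map_zpow, map_mul, map_inv, map_pow] using hb
  have hb1 : σ.toCoprod (v ^ b) = σ.toCoprod 1 := by
    calc σ.toCoprod (v ^ b) = coprodRetraction T (σ.toCoprod (v ^ b)) := by simp [hT]
      _ = coprodRetraction T (σ.toCoprod (MulAut.conjNormal (z ^ m) u)) ^ a := by
        rw [hab, map_zpow, map_zpow]
      _ = σ.toCoprod 1 := by rw [hm, one_zpow, map_one]
  simpa [hb] using σ.toCoprod_eq_iff.1 hb1

end Kernel

section Torsion

variable {X : Type u} {n : ℕ} {R : FreeGroup X}

theorem TorsionFreeQuotient.eq_one_of_pow_eq_one (htf : TorsionFreeQuotient R)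
    (a : FreeGroup X ⧸ nclosure R) (k : ℕ) (hk : k ≠ 0) (ha : a ^ k = 1) : a = 1 := by
  obtain ⟨w, rfl⟩ := QuotientGroup.mk_surjective a
  exact (QuotientGroup.eq_one_iff w).2 (htf w k hk ((QuotientGroup.eq_one_iff _).1 ha))

section Kernel

variable {x y z : PresentedGroup {R ^ n}} {i j : ℤ}

namespace TorsionSplitting

theorem exists_zpow_pow_eq_one (σ : TorsionSplitting n R) (htf : TorsionFreeQuotient R)
    (hx : toQuotient n R x ≠ 1) (hy : toQuotient n R y = 1) (h : x⁻¹ * y ^ i * x = y ^ j) :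
    ∃ m : ℕ, y ^ i ^ m = 1 := by
  have hx' : toQuotient n R x⁻¹ ≠ 1 := by rwa [map_inv, inv_ne_one]
  obtain ⟨m, hm⟩ := (σ.eventually_disjoint_zpowers htf hx' hy hy).exists
  have hconj : (x⁻¹ ^ m * y * (x⁻¹ ^ m)⁻¹) ^ i ^ m = y ^ j ^ m := by
    rw [conj_zpow, ← conj_zpow_pow h, inv_pow, inv_inv]
  have hj : y ^ j ^ m = 1 :=
    Subgroup.disjoint_def.1 hm ⟨_, hconj⟩ (Subgroup.zpow_mem_zpowers _ _)
  exact ⟨m, by rwa [hj, conj_zpow, mul_inv_eq_one, mul_eq_left] at hconj⟩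

theorem toQuotient_eq_one_of_conj (σ : TorsionSplitting n R) (htf : TorsionFreeQuotient R)
    (h : x⁻¹ * y ^ i * x = y ^ j) (hi : y ^ i ≠ 1) (hy : toQuotient n R y = 1) :
    toQuotient n R x = 1 := by
  by_contra hx
  obtain ⟨m, hm⟩ := σ.exists_zpow_pow_eq_one htf hx hy h
  have hi0 : i ≠ 0 := by
    rintro rfl
    exact hi (zpow_zero y)
  have hfin : IsOfFinOrder y := isOfFinOrder_iff_zpow_eq_one.2 ⟨i ^ m, pow_ne_zero m hi0, hm⟩
  obtain ⟨e, he⟩ := zpow_mem_zpowers_of_conj hfin h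
  have h' : x⁻¹ * (y ^ i) ^ (1 : ℤ) * x = (y ^ i) ^ e := by rw [zpow_one, h, ← he]
  obtain ⟨m, hm⟩ := σ.exists_zpow_pow_eq_one htf hx (by rw [map_zpow, hy, one_zpow]) h'
  exact hi (by simpa using hm)

theorem isCyclicOrDihedral_closure (σ : TorsionSplitting n R) (hn : n ≠ 0)
    (h : x⁻¹ * y ^ i * x = y ^ j) (hi : y ^ i ≠ 1) (hx : toQuotient n R x = 1)
    (hy : toQuotient n R y = 1) : IsCyclicOrDihedral (Subgroup.closure {x, y}) := by
  have : NeZero n := ⟨hn⟩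
  obtain ⟨f, hf⟩ := σ.exists_injective_ker_toQuotient
  lift x to (toQuotient n R).ker using hx
  lift y to (toQuotient n R).ker using hy
  norm_cast at h hi
  have hconj : (f x)⁻¹ * f y ^ i * f x = f y ^ j := by
    rw [← map_zpow, ← map_zpow, ← h, map_mul, map_mul, map_inv]
  have hne : f y ^ i ≠ 1 := by rwa [← map_zpow, Ne, map_eq_one_iff f hf]
  exact (isCyclicOrDihedral_closure_iff (toQuotient n R).ker.subtype_injective x y).2
    ((isCyclicOrDihedral_closure_iff hf x y).1 (isCyclicOrDihedral_closure_coprod hconj hne))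

theorem eq_one_of_commute (σ : TorsionSplitting n R) (htf : TorsionFreeQuotient R)
    (hz : toQuotient n R z ≠ 1) (hx : toQuotient n R x = 1) (hcomm : Commute z x) : x = 1 := by
  obtain ⟨m, hm⟩ := (σ.eventually_disjoint_zpowers htf hz hx hx).exists
  rwa [(hcomm.pow_left m).eq, mul_inv_cancel_right, disjoint_self, Subgroup.zpowers_eq_bot] at hm

end TorsionSplitting

end Kernel

section Fox

theorem lift_mk_of (N : Subgroup (FreeGroup X)) [N.Normal] (w : FreeGroup X) :
    FreeGroup.lift (fun a => (QuotientGroup.mk (of a) : FreeGroup X ⧸ N)) w =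
      QuotientGroup.mk w := by
  suffices FreeGroup.lift _ = QuotientGroup.mk' N from DFunLike.congr_fun this w
  ext a
  simp

variable (n R) in
/-- The Fox derivatives modulo `n` of the elements of `⟨X; Rⁿ⟩`, with coefficients in the group ring
of `⟨X; R⟩`: the derivatives of `Rⁿ` vanish there, being divisible by `n`. -/
noncomputable def foxQuotient :
    PresentedGroup {R ^ n} →* RestrictedWreathProduct (X →₀ ZMod n) (FreeGroup X ⧸ nclosure R) :=
  QuotientGroup.lift (nclosure (R ^ n)) (foxHom n fun a => QuotientGroup.mk (of a)) <|
    nclosure_le <| foxHom_pow_eq_one n <|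
      (lift_mk_of _ R).trans ((QuotientGroup.eq_one_iff R).2 (mem_nclosure R))

theorem rightHom_comp_foxQuotient :
    SemidirectProduct.rightHom.comp (foxQuotient n R) = toQuotient n R := by
  refine MonoidHom.ext fun g => ?_
  obtain ⟨w, rfl⟩ := PresentedGroup.mk_surjective _ g
  exact (foxHom_right _ w).trans (lift_mk_of _ w)

theorem isCyclic_map_toQuotient (hn : 1 < n) (htf : TorsionFreeQuotient R)
    {y : PresentedGroup {R ^ n}} {S : Subgroup (PresentedGroup {R ^ n})} (hyS : y ∈ S)
    (hS : S ≤ powerCommensurator y) (hy : toQuotient n R y ≠ 1) :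
    IsCyclic (S.map (toQuotient n R)) := by
  have hright : (foxQuotient n R y).right = toQuotient n R y :=
    DFunLike.congr_fun rightHom_comp_foxQuotient y
  have hord : ¬ IsOfFinOrder (foxQuotient n R y).right := by
    rw [hright, isOfFinOrder_iff_pow_eq_one]
    exact fun ⟨k, hk, h⟩ => hy (htf.eq_one_of_pow_eq_one _ k hk.ne' h)
  have hq : ∃ q, RestrictedWreathProduct.loopSum (foxQuotient n R y) q ≠ 0 := by
    obtain ⟨w, rfl⟩ := PresentedGroup.mk_surjective _ y
    refine exists_loopSum_foxHom_ne_zero hn ?_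
    rwa [← foxHom_right (n := n)]
  obtain ⟨q, hq⟩ := hq
  rw [← rightHom_comp_foxQuotient]
  exact isCyclic_map_of_le_powerCommensurator htf.eq_one_of_pow_eq_one _ hyS hS hord hq

end Fox

theorem closure_le_centralizer_zpow {G : Type*} [Group G] {x y : G} {i : ℤ}
    (h : x⁻¹ * y ^ i * x = y ^ i) : Subgroup.closure {x, y} ≤ Subgroup.centralizer {y ^ i} := by
  rw [Subgroup.closure_le, Set.pair_subset_iff]
  simp only [SetLike.mem_coe, Subgroup.mem_centralizer_singleton_iff]
  rw [mul_assoc, inv_mul_eq_iff_eq_mul] at h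
  exact ⟨h.symm, (Commute.self_zpow y i).eq⟩

theorem TorsionSplitting.isCyclic_closure_of_toQuotient_ne_one (σ : TorsionSplitting n R)
    (hn : 1 < n) (htf : TorsionFreeQuotient R) {x y : PresentedGroup {R ^ n}} {i j : ℤ}
    (h : x⁻¹ * y ^ i * x = y ^ j) (hi : y ^ i ≠ 1) (hy : toQuotient n R y ≠ 1) :
    IsCyclic (Subgroup.closure {x, y}) := by
  let S := Subgroup.closure {x, y}
  let p := (toQuotient n R).subgroupMap S
  let x' : S := ⟨x, Subgroup.subset_closure (by simp)⟩
  let y' : S := ⟨y, Subgroup.subset_closure (by simp)⟩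
  have hinj := zpow_injective_of_torsionFree htf.eq_one_of_pow_eq_one hy
  have hcyc : IsCyclic (S.map (toQuotient n R)) :=
    isCyclic_map_toQuotient hn htf y'.2 (closure_le_powerCommensurator h hi) hy
  have hcomm : Commute (toQuotient n R x) (toQuotient n R y) :=
    congrArg Subtype.val (mul_comm' (p x') (p y'))
  obtain rfl : i = j := by
    apply hinj
    simpa [mul_assoc, ← (hcomm.zpow_right i).eq] using congrArg (toQuotient n R) h
  have hpi : toQuotient n R (y ^ i) ≠ 1 := by
    rw [map_zpow]
    refine fun h1 => hi ?_
    rw [hinj (h1.trans (zpow_zero _).symm), zpow_zero]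
  refine isCyclic_of_injective p ((injective_iff_map_eq_one p).2 fun g hg => Subtype.ext ?_)
  have hgy := Subgroup.mem_centralizer_singleton_iff.1 (closure_le_centralizer_zpow h g.2)
  exact σ.eq_one_of_commute htf hpi (congrArg Subtype.val hg) hgy.symm

end Torsion

end OneRelator

open OneRelator in
theorem statement_4_general {X : Type*} (R : FreeGroup X) (n : ℕ)
    (hn : 1 < n) (hR : ∀ (S : FreeGroup X) (k : ℕ), 1 ≤ k → R = S ^ k → k = 1)
    (x y : PresentedGroup {R ^ n}) (i j : ℤ)
    (hconj : x⁻¹ * y ^ i * x = y ^ j) (hi : y ^ i ≠ 1) :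
    IsCyclic (Subgroup.closure {x, y}) ∨
      Nonempty (Subgroup.closure {x, y} ≃* DihedralGroup 0) := by
  obtain ⟨-, htf, ⟨σ⟩⟩ := NotProperPow.magnusProperties n hR
  by_cases hy : toQuotient n R y = 1
  · exact σ.isCyclicOrDihedral_closure (by lia) hconj hi
      (σ.toQuotient_eq_one_of_conj htf hconj hi hy) hy
  · exact .inl (σ.isCyclic_closure_of_toQuotient_ne_one hn htf hconj hi hy)

/-- Let `G` be a one-relator group with torsion, `x y ∈ G` and `i j : ℤ`
with `x⁻¹ yⁱ x = yʲ`, `yⁱ ≠ 1` and `yʲ ≠ 1`.  Then `⟨x, y⟩` is cyclic or a free product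
of cyclic groups. -/
theorem statement_4 {X : Type} [Nontrivial X] (R : FreeGroup X) (n : ℕ)
    (hn : 1 < n) (hR : ∀ (S : FreeGroup X) (k : ℕ), 1 ≤ k → R = S ^ k → k = 1)
    (x y : PresentedGroup {R ^ n}) (i j : ℤ)
    (hconj : x⁻¹ * y ^ i * x = y ^ j) (hi : y ^ i ≠ 1) (hj : y ^ j ≠ 1) :
    IsCyclic (Subgroup.closure {x, y} : Subgroup (PresentedGroup {R ^ n})) ∨
      IsFreeProductOfCyclics (Subgroup.closure {x, y} : Subgroup (PresentedGroup {R ^ n})) :=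
  (statement_4_general R n hn hR x y i j hconj hi).imp_right fun ⟨e⟩ =>
    OneRelator.isFreeProductOfCyclics_of_mulEquiv_dihedralGroup e
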